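/- arXiv:2305.02648 — 7 statements merged into one kernel-verified Lean document; each statement's English description precedes it below -/
import Mathlib

section
/- For n ∈ ℕ let T_n denote the number of biembeddability classes of additively indecomposable countable scattered chains of Hausdorff rank at most n (which is finite). Then T_{n+1} ≤ 2·(2^{T_n} − 1). -/
/-!
Fix representatives `D j` of the classes of rank at most `n`. If `c` is a monotone map from a chain
to `ℤ` whose fibers are finite sums of chains biembeddable with some `D j`, let `F` be the set of
those `j` for which `D j` embeds into blocks of the chain arbitrarily far to the right. As there are
finitely many `j`, on some right tail of the chain only pieces of type in `F` occur (`exists_tail`).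
Such a tail is additively indecomposable (`IsTail.addIndec`), and its biembeddability class depends
only on `F` (`IsTail.emb`). Left tails behave in the same way, and what remains between the two
tails is a finite sum of chains `D j` (`decomp`).

By induction on the rank, every countable scattered chain of rank at most `n` is a finite sum of
indecomposable chains of at most the same rank (`finSum_of_inH`). This replaces, for finite ranks,
Laver's decomposition theorem. An indecomposable chain of rank at most `n + 1` with at least two
elements embeds into one of the summands of its decomposition. By induction on the rank it is
therefore biembeddable with a right or a left tail for a nonempty set `F` (`classify`).
The pairs consisting of a nonempty `F` and a direction number `2 * (2 ^ Tn - 1)`. If `D j₀` is the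
empty chain, both pairs with `F = {j₀}` describe the empty chain, so one of them is free to encode
the one-element chain.
-/

universe u v

/-- The chain `A` has big Ramsey degree at most `t` in the chain `C`:
for every finite coloring of the set of order embeddings `A ↪o C` there is an
order embedding `w : C ↪o C` such that the colors of the compositions `w ∘ f`,
`f : A ↪o C`, take at most `t` values. -/
def BigRamseyDegLE (A : Type u) (C : Type v) [LinearOrder A] [LinearOrder C] (t : ℕ) : Prop :=
  ∀ (k : ℕ) (χ : (A ↪o C) → Fin k), ∃ w : C ↪o C,
    (Set.range fun f : A ↪o C => χ (f.trans w)).ncard ≤ t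

/-- A chain is scattered if ℚ does not order-embed into it. -/
def Scattered (C : Type u) [LinearOrder C] : Prop := IsEmpty (ℚ ↪o C)

/-- `InHausdorff n C` says that the chain `C` is order-isomorphic to a member of the level
`H_n` of the Hausdorff hierarchy: `H_0` consists of the empty and the one-element chain,
and `H_{n+1}` consists of the ℤ-indexed lexicographic sums `Σ_{i ∈ ℤ} S_i` with each
`S_i ∈ ⋃_{m ≤ n} H_m`.  This is encoded via a monotone map `c : C → ℤ` whose fibers
(with the induced order) are order-isomorphic to members of lower levels of the hierarchy. -/
def InHausdorff : ℕ → (C : Type u) → [LinearOrder C] → Prop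
  | 0, C, _ => Subsingleton C
  | n+1, C, _ => ∃ c : C → ℤ, Monotone c ∧
      ∀ i : ℤ, ∃ m : ℕ, ∃ _ : m ≤ n, InHausdorff m {x : C // c x = i}
  termination_by n => n
  decreasing_by omega

/-- The chain `C` has finite Hausdorff rank: it is order-isomorphic to a member of `H_n`
for some `n < ω`. -/
def FiniteHausdorffRank (C : Type u) [LinearOrder C] : Prop := ∃ n : ℕ, InHausdorff n C

/-- Two chains are biembeddable if each order-embeds into the other. -/
def Biembeddable (A : Type u) (C : Type v) [LinearOrder A] [LinearOrder C] : Prop :=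
  Nonempty (A ↪o C) ∧ Nonempty (C ↪o A)

/-- A chain `L` is additively indecomposable if whenever `L` is partitioned into an initial
segment `A` and the complementary final segment, `L` order-embeds into `A` or into the
complement of `A`. -/
def AddIndecomposable (L : Type u) [LinearOrder L] : Prop :=
  ∀ A : Set L, (∀ x ∈ A, ∀ y, y ≤ x → y ∈ A) →
    Nonempty (L ↪o A) ∨ Nonempty (L ↪o (Aᶜ : Set L))

/-- The class of additively indecomposable countable scattered chains of Hausdorff rank
at most `n`. -/
def IndecClass (n : ℕ) (C : Type u) [LinearOrder C] : Prop :=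
  Countable C ∧ Scattered C ∧ AddIndecomposable C ∧ ∃ m : ℕ, m ≤ n ∧ InHausdorff m C

namespace IndecCount

/-! ### Embeddings of sums -/

/-- `A` order-embeds into `B`. -/
def Emb (A : Type u) (B : Type v) [LinearOrder A] [LinearOrder B] : Prop := Nonempty (A ↪o B)

section Emb

theorem emb_refl (A : Type u) [LinearOrder A] : Emb A A := ⟨RelEmbedding.refl _⟩

theorem Emb.trans {A B C : Type*} [LinearOrder A] [LinearOrder B] [LinearOrder C]
    (h : Emb A B) (h' : Emb B C) : Emb A C := by
  obtain ⟨f⟩ := h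
  obtain ⟨g⟩ := h'
  exact ⟨f.trans g⟩

theorem emb_of_strictMono {A B : Type*} [LinearOrder A] [LinearOrder B] (f : A → B)
    (hf : StrictMono f) : Emb A B := ⟨OrderEmbedding.ofStrictMono f hf⟩

theorem emb_of_subset {L : Type*} [LinearOrder L] {S T : Set L} (h : S ⊆ T) : Emb S T :=
  emb_of_strictMono (fun x => ⟨x.1, h x.2⟩) (fun _ _ hxy => hxy)

theorem emb_val {L : Type*} [LinearOrder L] (S : Set L) : Emb S L :=
  emb_of_strictMono (fun x => x.1) (fun _ _ hxy => hxy)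

theorem emb_of_isEmpty {A B : Type*} [LinearOrder A] [LinearOrder B] (h : IsEmpty A) : Emb A B :=
  emb_of_strictMono (fun x => (h.false x).elim) (fun x => (h.false x).elim)

theorem emb_of_subsingleton {A B : Type*} [LinearOrder A] [LinearOrder B] (h : Subsingleton A)
    (hB : Nonempty B) : Emb A B := by
  obtain ⟨b⟩ := hB
  exact emb_of_strictMono (fun _ => b) (fun x y hxy => absurd (h.elim x y) hxy.ne)

theorem emb_union {L L' : Type*} [LinearOrder L] [LinearOrder L'] {A₁ A₂ : Set L}
    {B₁ B₂ B : Set L'} (hA : ∀ a ∈ A₁, ∀ b ∈ A₂, a < b) (hB : ∀ a ∈ B₁, ∀ b ∈ B₂, a < b)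
    (h₁ : Emb A₁ B₁) (h₂ : Emb A₂ B₂) (s₁ : B₁ ⊆ B) (s₂ : B₂ ⊆ B) :
    Emb ↥(A₁ ∪ A₂) B := by
  classical
  obtain ⟨e₁⟩ := h₁
  obtain ⟨e₂⟩ := h₂
  refine emb_of_strictMono (fun x => if h : x.1 ∈ A₁ then ⟨(e₁ ⟨x.1, h⟩).1, s₁ (e₁ ⟨x.1, h⟩).2⟩
    else ⟨(e₂ ⟨x.1, x.2.resolve_left h⟩).1, s₂ (e₂ ⟨x.1, x.2.resolve_left h⟩).2⟩) ?_
  intro x y hxy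
  by_cases hx : x.1 ∈ A₁ <;> by_cases hy : y.1 ∈ A₁
  · simp only [hx, hy, dif_pos]
    exact e₁.strictMono (show (⟨x.1, hx⟩ : A₁) < ⟨y.1, hy⟩ from hxy)
  · simp only [hx, hy, dif_pos]
    exact hB _ (e₁ _).2 _ (e₂ _).2
  · exact absurd hxy (not_lt.2 (hA _ hy _ (x.2.resolve_left hx)).le)
  · simp only [hx, hy]
    exact e₂.strictMono (show (⟨x.1, x.2.resolve_left hx⟩ : A₂) < ⟨y.1, y.2.resolve_left hy⟩ from hxy)

/-- If every fiber of `c` embeds into blocks of `B` arbitrarily far out, then `A` embeds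
into every tail of `B`. The sign `ε` says whether `c` and `d` are increasing or decreasing. The blocks `[b k, b (k + 1))` receiving the successive fibers
are chosen recursively. -/
theorem emb_of_blocks {L L' : Type*} [LinearOrder L] [LinearOrder L'] {A : Set L} {B : Set L'}
    {ε : ℤ} (hε : ε = 1 ∨ ε = -1) {c : L → ℤ} {d : L' → ℤ} {N₀ : ℤ}
    (hc : ∀ x ∈ A, ∀ y ∈ A, x < y → ε * c x ≤ ε * c y)
    (hd : ∀ x ∈ B, ∀ y ∈ B, x < y → ε * d x ≤ ε * d y)
    (hN₀ : ∀ x ∈ A, N₀ ≤ c x)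
    (h : ∀ i, N₀ ≤ i → ∀ N, ∃ M, Emb {x | x ∈ A ∧ c x = i} {y | y ∈ B ∧ N ≤ d y ∧ d y < M})
    (N : ℤ) : Emb A {y | y ∈ B ∧ N ≤ d y} := by
  have h' : ∀ (k : ℕ) (N : ℤ), ∃ M, Emb {x | x ∈ A ∧ c x = N₀ + k}
      {y | y ∈ B ∧ N ≤ d y ∧ d y < M} := fun k N => h _ (by omega) N
  choose M e using h'
  let e' := fun k N => Classical.choice (e k N)
  let b : ℕ → ℤ := fun k => Nat.rec N (fun k r => max r (M k r)) k
  have b0 : b 0 = N := rfl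
  have bs : ∀ k, b (k + 1) = max (b k) (M k (b k)) := fun k => rfl
  have bm : Monotone b := monotone_nat_of_le_succ (fun k => by rw [bs]; exact le_max_left _ _)
  let k : L → ℕ := fun x => (c x - N₀).toNat
  have hk : ∀ x ∈ A, c x = N₀ + k x := fun x hx => by
    have := hN₀ x hx
    simp only [k]; omega
  let g : A → L' := fun x => (e' (k x.1) (b (k x.1)) ⟨x.1, x.2, hk x.1 x.2⟩).1
  have gB : ∀ x, g x ∈ B := fun x => (e' (k x.1) (b (k x.1)) ⟨x.1, x.2, hk x.1 x.2⟩).2.1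
  have g1 : ∀ x, b (k x.1) ≤ d (g x) :=
    fun x => (e' (k x.1) (b (k x.1)) ⟨x.1, x.2, hk x.1 x.2⟩).2.2.1
  have g2 : ∀ x, d (g x) < b (k x.1 + 1) := fun x => by
    rw [bs]
    exact lt_of_lt_of_le (e' (k x.1) (b (k x.1)) ⟨x.1, x.2, hk x.1 x.2⟩).2.2.2 (le_max_right _ _)
  have gk : ∀ (x : A) (i : ℕ) (hi : k x.1 = i),
      g x = (e' i (b i) ⟨x.1, x.2, by rw [← hi]; exact hk x.1 x.2⟩).1 := by
    intro x i hi
    subst hi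
    rfl
  have hlt : ∀ x y : A, k x.1 < k y.1 → d (g x) < d (g y) := fun x y hxy =>
    (g2 x).trans_le ((bm (Nat.succ_le_of_lt hxy)).trans (g1 y))
  have hBlt : ∀ x ∈ B, ∀ y ∈ B, ε * d x < ε * d y → x < y := by
    intro x hx y hy hxy
    rcases lt_trichotomy x y with h | h | h
    · exact h
    · rw [h] at hxy
      exact absurd hxy (lt_irrefl _)
    · exact absurd hxy (not_lt.2 (hd y hy x hx h))
  refine emb_of_strictMono (fun x => ⟨g x, gB x, ?_⟩) ?_
  · exact (b0 ▸ bm (Nat.zero_le _)).trans (g1 x)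
  · intro x y hxy
    change g x < g y
    have h1 := hc _ x.2 _ y.2 hxy
    have h2 := hk _ x.2
    have h3 := hk _ y.2
    rcases lt_trichotomy (k x.1) (k y.1) with h | h | h
    · apply hBlt _ (gB x) _ (gB y)
      have := hlt x y h
      rcases hε with rfl | rfl <;> omega
    · rw [gk x _ h, gk y _ rfl]
      exact (e' (k y.1) (b (k y.1))).strictMono hxy
    · apply hBlt _ (gB x) _ (gB y)
      have := hlt y x h
      rcases hε with rfl | rfl <;> omega

end Emb

/-! ### Hereditary properties of the Hausdorff hierarchy -/

theorem inH_succ {n : ℕ} {C : Type u} [LinearOrder C] : InHausdorff (n + 1) C ↔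
    ∃ c : C → ℤ, Monotone c ∧ ∀ i : ℤ, ∃ m : ℕ, ∃ _ : m ≤ n, InHausdorff m {x : C // c x = i} := by
  rw [InHausdorff]

theorem inH_zero {C : Type u} [LinearOrder C] : InHausdorff 0 C ↔ Subsingleton C := by
  rw [InHausdorff]

theorem inH_emb (n : ℕ) : ∀ (A : Type u) (B : Type v) [LinearOrder A] [LinearOrder B],
    Emb A B → InHausdorff n B → InHausdorff n A := by
  induction n using Nat.strong_induction_on with
  | _ n ih =>
    intro A B _ _ h hB
    obtain ⟨f⟩ := h
    cases n with
    | zero =>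
      rw [inH_zero] at hB ⊢
      exact f.injective.subsingleton
    | succ n =>
      rw [inH_succ] at hB ⊢
      obtain ⟨c, hc, hi⟩ := hB
      refine ⟨fun x => c (f x), hc.comp f.monotone, fun i => ?_⟩
      obtain ⟨m, hm, h⟩ := hi i
      refine ⟨m, hm, ih m (by omega) _ _ ?_ h⟩
      exact emb_of_strictMono (fun x => ⟨f x.1, x.2⟩) (fun x y hxy => f.strictMono hxy)

theorem inH_step {n : ℕ} {C : Type u} [LinearOrder C] (h : InHausdorff n C) :
    InHausdorff (n + 1) C := by
  rw [inH_succ]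
  exact ⟨fun _ => 0, monotone_const, fun i => ⟨n, le_rfl, inH_emb n _ _ (emb_val _) h⟩⟩

theorem inH_mono {m n : ℕ} (hmn : m ≤ n) {C : Type u} [LinearOrder C] (h : InHausdorff m C) :
    InHausdorff n C := by
  induction n, hmn using Nat.le_induction with
  | base => exact h
  | succ k _ ih => exact inH_step ih

/-- The defining map of `InHausdorff (n + 1)` for a subset `A` of a chain, extended by the junk
value `0` outside `A`. -/
theorem inH_succ_set {n : ℕ} {L : Type u} [LinearOrder L] {A : Set L}
    (h : InHausdorff (n + 1) A) : ∃ c : L → ℤ, (∀ x ∈ A, ∀ y ∈ A, x < y → c x ≤ c y) ∧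
      ∀ i, InHausdorff n {x | x ∈ A ∧ c x = i} := by
  classical
  obtain ⟨c, hc, hi⟩ := inH_succ.1 h
  refine ⟨fun x => if h : x ∈ A then c ⟨x, h⟩ else 0, ?_, ?_⟩
  · intro x hx y hy hxy
    simp only [hx, hy, dif_pos]
    exact hc (show (⟨x, hx⟩ : A) ≤ ⟨y, hy⟩ from hxy.le)
  · intro i
    obtain ⟨m, hm, h⟩ := hi i
    refine inH_mono hm (inH_emb m _ _ ?_ h)
    have key : ∀ x : L, ∀ hx : x ∈ A, (if h : x ∈ A then c ⟨x, h⟩ else 0) = i → c ⟨x, hx⟩ = i := by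
      intro x hx hx'
      rwa [dif_pos hx] at hx'
    exact emb_of_strictMono (fun x => ⟨⟨x.1, x.2.1⟩, key x.1 x.2.1 x.2.2⟩) (fun _ _ hxy => hxy)

theorem scattered_emb {A B : Type*} [LinearOrder A] [LinearOrder B] (h : Emb A B)
    (hB : Scattered B) : Scattered A := by
  obtain ⟨f⟩ := h
  exact ⟨fun g => hB.false (g.trans f)⟩

theorem countable_emb {A B : Type*} [LinearOrder A] [LinearOrder B] (h : Emb A B)
    (hB : Countable B) : Countable A := by
  obtain ⟨f⟩ := h
  exact f.injective.countable

theorem addIndec_of_subsingleton {A : Type*} [LinearOrder A] (h : Subsingleton A) :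
    AddIndecomposable A := by
  intro I _
  rcases isEmpty_or_nonempty A with hA | ⟨⟨a⟩⟩
  · exact Or.inl (emb_of_isEmpty hA)
  · by_cases ha : a ∈ I
    · exact Or.inl (emb_of_subsingleton h ⟨⟨a, ha⟩⟩)
    · exact Or.inr (emb_of_subsingleton h ⟨⟨a, ha⟩⟩)

/-- An indecomposable chain that embeds into a sum of two chains embeds into a summand. -/
theorem addIndec_split {X L : Type*} [LinearOrder X] [LinearOrder L] (hX : AddIndecomposable X)
    {A B : Set L} (hAB : ∀ a ∈ A, ∀ b ∈ B, a < b) (h : Emb X ↥(A ∪ B)) : Emb X A ∨ Emb X B := by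
  obtain ⟨f⟩ := h
  have hI : ∀ x ∈ {x | (f x).1 ∈ A}, ∀ y, y ≤ x → y ∈ {x | (f x).1 ∈ A} := by
    intro x hx y hyx
    by_contra hy
    exact absurd (f.monotone hyx) (not_le.2 (hAB _ hx _ ((f y).2.resolve_left hy)))
  rcases hX _ hI with h | h
  · exact Or.inl (Emb.trans h (emb_of_strictMono (fun x => ⟨(f x.1).1, x.2⟩)
      (fun x y hxy => f.strictMono hxy)))
  · exact Or.inr (Emb.trans h (emb_of_strictMono
      (fun x => ⟨(f x.1).1, (f x.1).2.resolve_left x.2⟩) (fun x y hxy => f.strictMono hxy)))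

/-! ### Finite sums and tails -/

section Tails

variable {ι : Type} (D : ι → Type u) [∀ j, LinearOrder (D j)]

/-- The subset `S` of a chain is a finite nonempty sum of chains, each biembeddable with some `D j`
with `j ∈ F`. -/
inductive FinSum (F : Set ι) {L : Type u} [LinearOrder L] : Set L → Prop
  | base (S : Set L) (j : ι) (hj : j ∈ F) (h : Emb S (D j)) (h' : Emb (D j) S) : FinSum F S
  | union (A B : Set L) (hA : FinSum F A) (hB : FinSum F B) (h : ∀ a ∈ A, ∀ b ∈ B, a < b) :
      FinSum F (A ∪ B)

/-- The subset `A` of a chain is an `ω`-sum (for `ε = 1`) or an `ω*`-sum (for `ε = -1`) of finite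
sums of chains `D j`, `j ∈ F`, in which every `D j` with `j ∈ F` embeds into bounded blocks
arbitrarily far out. The map `c` gives the index of the summand, counted outwards. -/
def IsTail (ε : ℤ) (F : Set ι) {L : Type u} [LinearOrder L] (A : Set L) : Prop :=
  ∃ (c : L → ℤ) (N₀ : ℤ), (∀ x ∈ A, ∀ y ∈ A, x < y → ε * c x ≤ ε * c y) ∧
    (∀ x ∈ A, N₀ ≤ c x) ∧ (∀ i, N₀ ≤ i → FinSum D F {x | x ∈ A ∧ c x = i}) ∧
    ∀ j ∈ F, ∀ N, ∃ M, Emb (D j) {x | x ∈ A ∧ N ≤ c x ∧ c x < M}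

variable {D} {L L' : Type u} [LinearOrder L] [LinearOrder L'] {F G : Set ι}

theorem FinSum.nonempty {S : Set L} (h : FinSum D F S) : F.Nonempty := by
  induction h with
  | base S j hj _ _ => exact ⟨j, hj⟩
  | union A B _ _ _ ih _ => exact ih

theorem FinSum.restrict {S : Set L} (h : FinSum D F S) (hG : ∀ j ∈ F, Emb (D j) S → j ∈ G) :
    FinSum D G S := by
  induction h with
  | base S j hj h h' => exact .base S j (hG j hj h') h h'
  | union A B _ _ h ihA ihB =>
    exact .union A B (ihA fun j hj hA => hG j hj (hA.trans (emb_of_subset Set.subset_union_left)))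
      (ihB fun j hj hB => hG j hj (hB.trans (emb_of_subset Set.subset_union_right))) h

theorem FinSum.eq_empty {S : Set L} (h : FinSum D F S) (hF : ∀ j ∈ F, IsEmpty (D j)) :
    S = ∅ := by
  induction h with
  | base S j hj h _ =>
    obtain ⟨f⟩ := h
    exact Set.eq_empty_of_forall_notMem fun x hx => (hF j hj).false (f ⟨x, hx⟩)
  | union A B _ _ _ ihA ihB => rw [ihA, ihB, Set.union_empty]

theorem FinSum.addIndec {X : Type*} [LinearOrder X] (hX : AddIndecomposable X) {S : Set L}
    (h : FinSum D F S) (hS : Emb X S) : ∃ j ∈ F, Emb X (D j) := by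
  induction h with
  | base S j hj h _ => exact ⟨j, hj, hS.trans h⟩
  | union A B _ _ h ihA ihB => exact (addIndec_split hX h hS).elim ihA ihB

/-- If every `D j` with `j ∈ F` embeds into blocks arbitrarily far out, so does every finite sum of
such chains: the summands are placed in consecutive blocks. -/
theorem FinSum.emb_block {ε : ℤ} (hε : ε = 1 ∨ ε = -1) {S : Set L} (h : FinSum D F S)
    {B : Set L'} {d : L' → ℤ} (hd : ∀ x ∈ B, ∀ y ∈ B, x < y → ε * d x ≤ ε * d y)
    (hF : ∀ j ∈ F, ∀ N, ∃ M, Emb (D j) {x | x ∈ B ∧ N ≤ d x ∧ d x < M}) (N : ℤ) :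
    ∃ M, Emb S {x | x ∈ B ∧ N ≤ d x ∧ d x < M} := by
  have hBlt : ∀ x ∈ B, ∀ y ∈ B, ε * d x < ε * d y → x < y := by
    intro x hx y hy hxy
    rcases lt_trichotomy x y with h | h | h
    · exact h
    · rw [h] at hxy
      exact absurd hxy (lt_irrefl _)
    · exact absurd hxy (not_lt.2 (hd y hy x hx h))
  induction h generalizing N with
  | base S j hj h _ =>
    obtain ⟨M, hM⟩ := hF j hj N
    exact ⟨M, h.trans hM⟩
  | union A A' _ _ h ihA ihB =>
    rcases hε with rfl | rfl
    · obtain ⟨M, hM⟩ := ihA N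
      obtain ⟨M', hM'⟩ := ihB (max N M)
      refine ⟨max M M', emb_union h ?_ hM hM' ?_ ?_⟩
      · rintro a ⟨ha, ha1, ha2⟩ b ⟨hb, hb1, hb2⟩
        exact hBlt a ha b hb (by omega)
      · rintro a ⟨ha, ha1, ha2⟩
        exact ⟨ha, by omega, by omega⟩
      · rintro a ⟨ha, ha1, ha2⟩
        exact ⟨ha, by omega, by omega⟩
    · obtain ⟨M, hM⟩ := ihB N
      obtain ⟨M', hM'⟩ := ihA (max N M)
      refine ⟨max M M', emb_union h ?_ hM' hM ?_ ?_⟩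
      · rintro a ⟨ha, ha1, ha2⟩ b ⟨hb, hb1, hb2⟩
        exact hBlt a ha b hb (by omega)
      · rintro a ⟨ha, ha1, ha2⟩
        exact ⟨ha, by omega, by omega⟩
      · rintro a ⟨ha, ha1, ha2⟩
        exact ⟨ha, by omega, by omega⟩

theorem IsTail.nonempty {ε : ℤ} {A : Set L} (h : IsTail D ε F A) : F.Nonempty := by
  obtain ⟨c, N₀, _, _, h, _⟩ := h
  exact (h N₀ le_rfl).nonempty

theorem IsTail.eq_empty {ε : ℤ} {A : Set L} (h : IsTail D ε F A) (hF : ∀ j ∈ F, IsEmpty (D j)) :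
    A = ∅ := by
  obtain ⟨c, N₀, _, h0, h, _⟩ := h
  refine Set.eq_empty_of_forall_notMem fun x hx => ?_
  have := (h (c x) (h0 x hx)).eq_empty hF
  exact (Set.eq_empty_iff_forall_notMem.1 this) x ⟨hx, rfl⟩

/-- The biembeddability class of a tail depends only on its direction and on `F`. -/
theorem IsTail.emb {ε : ℤ} (hε : ε = 1 ∨ ε = -1) {A : Set L} {B : Set L'}
    (hA : IsTail D ε F A) (hB : IsTail D ε F B) : Emb A B := by
  obtain ⟨c, N₀, hc, h0, h, _⟩ := hA
  obtain ⟨d, N₁, hd, _, _, hB⟩ := hB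
  exact (emb_of_blocks hε hc hd h0 (fun i hi N => (h i hi).emb_block hε hd hB N) 0).trans
    (emb_of_subset fun x hx => hx.1)

theorem IsTail.addIndec {ε : ℤ} (hε : ε = 1 ∨ ε = -1) {A : Set L} (hA : IsTail D ε F A) :
    AddIndecomposable A := by
  obtain ⟨c, N₀, hc, h0, h, hF⟩ := hA
  have key := fun N => emb_of_blocks hε hc hc h0 (fun i hi N => (h i hi).emb_block hε hc hF N) N
  intro I hI
  -- `A` embeds into its part strictly beyond any given point `y`, and for a suitable `y` that part
  -- lies inside `Iᶜ` (for `ε = 1`) or inside `I` (for `ε = -1`).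
  rcases hε with rfl | rfl
  · by_cases hy : ∃ y, y ∉ I
    · obtain ⟨y, hy⟩ := hy
      refine Or.inr ((key (c y + 1)).trans (emb_of_strictMono
        (fun x => ⟨⟨x.1, x.2.1⟩, fun hx => ?_⟩) (fun _ _ hxy => hxy)))
      have hxy : x.1 < y.1 := not_le.1 fun h => hy (hI _ hx y h)
      have := hc _ x.2.1 _ y.2 hxy
      have := x.2.2
      omega
    · push Not at hy
      exact Or.inl (emb_of_strictMono (fun x => ⟨x, hy x⟩) (fun _ _ hxy => hxy))
  · by_cases hy : ∃ y, y ∈ I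
    · obtain ⟨y, hy⟩ := hy
      refine Or.inl ((key (c y + 1)).trans (emb_of_strictMono
        (fun x => ⟨⟨x.1, x.2.1⟩, ?_⟩) (fun _ _ hxy => hxy)))
      refine hI y hy _ (not_lt.1 fun hxy => ?_)
      have := hc _ y.2 _ x.2.1 hxy
      have := x.2.2
      omega
    · push Not at hy
      exact Or.inr (emb_of_strictMono (fun x => ⟨x, hy x⟩) (fun _ _ hxy => hxy))

/-- Since there are finitely many types, far enough out only those that recur forever occur. -/
theorem exists_tail [Finite ι] {ε : ℤ} {A : Set L} {c : L → ℤ}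
    (hc : ∀ x ∈ A, ∀ y ∈ A, x < y → ε * c x ≤ ε * c y)
    (h : ∀ i, FinSum D G {x | x ∈ A ∧ c x = i}) :
    ∃ (F : Set ι) (N : ℤ), 1 ≤ N ∧ IsTail D ε F {x | x ∈ A ∧ N ≤ c x} := by
  let F : Set ι := {j | ∀ N, ∃ M, Emb (D j) {x | x ∈ A ∧ N ≤ c x ∧ c x < M}}
  have hF : ∀ j, ∃ N, j ∉ F → ∀ M, ¬ Emb (D j) {x | x ∈ A ∧ N ≤ c x ∧ c x < M} := by
    intro j
    by_cases hj : j ∈ F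
    · exact ⟨0, fun h => absurd hj h⟩
    · simp only [F, Set.mem_ofPred_eq] at hj
      push Not at hj
      obtain ⟨N, hN⟩ := hj
      exact ⟨N, fun _ => hN⟩
  choose N hN using hF
  obtain ⟨b, hb⟩ := (Set.finite_range N).bddAbove
  have hb' : ∀ j, N j ≤ b := fun j => hb ⟨j, rfl⟩
  refine ⟨F, max b 1, le_max_right _ _, c, max b 1, ?_, fun x hx => hx.2, ?_, ?_⟩
  · exact fun x hx y hy => hc x hx.1 y hy.1
  · intro i hi
    have hset : {x | x ∈ {x | x ∈ A ∧ max b 1 ≤ c x} ∧ c x = i} = {x | x ∈ A ∧ c x = i} := by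
      ext x
      simp only [Set.mem_ofPred_eq]
      constructor
      · exact fun hx => ⟨hx.1.1, hx.2⟩
      · exact fun hx => ⟨⟨hx.1, by omega⟩, hx.2⟩
    rw [hset]
    refine (h i).restrict fun j _ hj => ?_
    by_contra hjF
    refine hN j hjF (i + 1) (hj.trans (emb_of_subset ?_))
    rintro x ⟨hx, hxi⟩
    have := hb' j
    exact ⟨hx, by omega, by omega⟩
  · intro j hj K
    obtain ⟨M, hM⟩ := hj (max K (max b 1))
    refine ⟨M, hM.trans (emb_of_subset ?_)⟩
    rintro x ⟨hx, h1, h2⟩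
    exact ⟨⟨hx, by omega⟩, by omega, h2⟩

theorem finSum_interval {A : Set L} {c : L → ℤ}
    (hc : ∀ x ∈ A, ∀ y ∈ A, x < y → c x ≤ c y)
    (h : ∀ i, FinSum D G {x | x ∈ A ∧ c x = i}) (a : ℤ) (k : ℕ) :
    FinSum D G {x | x ∈ A ∧ a ≤ c x ∧ c x ≤ a + k} := by
  induction k with
  | zero =>
    convert h a using 1
    ext x
    simp only [Set.mem_ofPred_eq]
    refine and_congr_right fun _ => ?_
    push_cast
    omega
  | succ k ih =>
    have := FinSum.union _ _ ih (h (a + (k + 1 : ℕ))) ?_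
    · convert this using 1
      ext x
      simp only [Set.mem_ofPred_eq, Set.mem_union, ← and_or_left]
      refine and_congr_right fun _ => ?_
      push_cast
      omega
    · rintro x ⟨hx, hx1, hx2⟩ y ⟨hy, hy1⟩
      by_contra hxy
      rcases (not_lt.1 hxy).eq_or_lt with rfl | hlt
      · push_cast at hy1
        omega
      · have := hc y hy x hx hlt
        push_cast at hy1
        omega

/-- A `ℤ`-sum of finite sums is the sum of a left tail `A₁`, a finite sum `A₂` and a right
tail `A₃`. -/
theorem decomp [Finite ι] {A : Set L} {c : L → ℤ}
    (hc : ∀ x ∈ A, ∀ y ∈ A, x < y → c x ≤ c y)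
    (h : ∀ i, FinSum D G {x | x ∈ A ∧ c x = i}) :
    ∃ (A₁ A₂ A₃ : Set L) (F₁ F₃ : Set ι), A = A₁ ∪ (A₂ ∪ A₃) ∧
      (∀ x ∈ A₁, ∀ y ∈ A₂ ∪ A₃, x < y) ∧ (∀ x ∈ A₂, ∀ y ∈ A₃, x < y) ∧
      IsTail D (-1) F₁ A₁ ∧ FinSum D G A₂ ∧ IsTail D 1 F₃ A₃ := by
  obtain ⟨F₃, N, hN, h₃⟩ := exists_tail (ε := 1) (c := c) (A := A) (G := G) (D := D)
    (fun x hx y hy hxy => by have := hc x hx y hy hxy; omega) h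
  obtain ⟨F₁, M, hM, h₁⟩ := exists_tail (ε := -1) (c := fun x => - c x) (A := A) (G := G) (D := D)
    (fun x hx y hy hxy => by have := hc x hx y hy hxy; omega)
    (fun i => by
      convert h (-i) using 1
      ext x
      simp only [Set.mem_ofPred_eq]
      refine and_congr_right fun _ => ?_
      omega)
  have h₂ := finSum_interval hc h (-M + 1) (N + M - 2).toNat
  have hlt : ∀ x ∈ A, ∀ y ∈ A, c x < c y → x < y := by
    intro x hx y hy hxy
    rcases lt_trichotomy x y with h | h | h
    · exact h
    · rw [h] at hxy
      exact absurd hxy (lt_irrefl _)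
    · exact absurd hxy (not_lt.2 (hc y hy x hx h))
  refine ⟨_, _, _, F₁, F₃, ?_, ?_, ?_, h₁, h₂, h₃⟩
  · ext x
    simp only [Set.mem_ofPred_eq, Set.mem_union, ← and_or_left]
    refine (and_iff_left_of_imp fun _ => ?_).symm
    omega
  · rintro x ⟨hx, hx1⟩ y (⟨hy, hy1, hy2⟩ | ⟨hy, hy1⟩)
    · exact hlt x hx y hy (by omega)
    · exact hlt x hx y hy (by omega)
  · rintro x ⟨hx, hx1⟩ y ⟨hy, hy1⟩
    exact hlt x hx y hy (by omega)

/-! ### Decomposition and classification of indecomposable chains -/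

/-- Every countable scattered chain of rank `m ≤ n` is a finite sum of indecomposable chains
of rank at most `m`. -/
theorem finSum_of_inH [Finite ι] {n : ℕ}
    (hD : ∀ (C : Type u) [LinearOrder C], IndecClass n C → ∃ j, Biembeddable C (D j))
    (hL : Countable L) (hL' : Scattered L) (m : ℕ) (hm : m ≤ n) :
    ∀ A : Set L, InHausdorff m A → FinSum D {j | InHausdorff m (D j)} A := by
  have base : ∀ (m : ℕ) (_ : m ≤ n) (A : Set L), InHausdorff m A → AddIndecomposable A →
      FinSum D {j | InHausdorff m (D j)} A := by
    intro m hm A hA hA'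
    obtain ⟨j, h1, h2⟩ := hD A ⟨countable_emb (emb_val A) hL, scattered_emb (emb_val A) hL', hA',
      m, hm, hA⟩
    exact .base A j (inH_emb m _ _ h2 hA) h1 h2
  induction m with
  | zero => exact fun A hA => base 0 hm A hA (addIndec_of_subsingleton (inH_zero.1 hA))
  | succ m ih =>
    intro A hA
    obtain ⟨c, hc, hi⟩ := inH_succ_set hA
    obtain ⟨A₁, A₂, A₃, F₁, F₃, rfl, h1, h2, t1, t2, t3⟩ :=
      decomp hc (fun i => ih (by omega) _ (hi i))
    refine .union _ _ (base _ hm _ ?_ (t1.addIndec (Or.inr rfl))) (.union _ _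
      (t2.restrict fun j hj _ => inH_step hj) (base _ hm _ ?_ (t3.addIndec (Or.inl rfl))) h2) h1
    · exact inH_emb _ _ _ (emb_of_subset Set.subset_union_left) hA
    · exact inH_emb _ _ _ (emb_of_subset
        (Set.subset_union_right.trans Set.subset_union_right)) hA

/-- An indecomposable chain of rank at most `n + 1` with at least two elements is biembeddable
with a tail (a subset of the chain itself). -/
theorem classify [Finite ι] {n : ℕ}
    (hD : ∀ (C : Type u) [LinearOrder C], IndecClass n C → ∃ j, Biembeddable C (D j))
    (hL : Countable L) (hL' : Scattered L) (hI : AddIndecomposable L) (m : ℕ) (hm : m ≤ n + 1)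
    (h : InHausdorff m L) : Subsingleton L ∨
      ∃ (ε : ℤ) (F : Set ι) (A : Set L), (ε = 1 ∨ ε = -1) ∧ IsTail D ε F A ∧ Emb L A := by
  induction m with
  | zero => exact Or.inl (inH_zero.1 h)
  | succ m ih =>
    have hA := inH_emb _ _ _ (emb_val (Set.univ : Set L)) h
    obtain ⟨c, hc, hi⟩ := inH_succ_set hA
    obtain ⟨A₁, A₂, A₃, F₁, F₃, hU, h1, h2, t1, t2, t3⟩ :=
      decomp hc (fun i => finSum_of_inH hD hL hL' m (by omega) _ (hi i))
    have hLU : Emb L (Set.univ : Set L) :=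
      emb_of_strictMono (fun x => ⟨x, trivial⟩) (fun _ _ hxy => hxy)
    rw [hU] at hLU
    rcases addIndec_split hI h1 hLU with e | e
    · exact Or.inr ⟨-1, F₁, A₁, Or.inr rfl, t1, e⟩
    · rcases addIndec_split hI h2 e with e | e
      · -- Here `L` embeds into a chain of rank at most `m`, so its own rank is at most `m`.
        obtain ⟨j, hj, e⟩ := t2.addIndec hI e
        exact ih (by omega) (inH_emb m _ _ e hj)
      · exact Or.inr ⟨1, F₃, A₃, Or.inl rfl, t3, e⟩

/-! ### Counting -/

/-- The pair `(F, b)` encodes the chain `L`. If `j₀` is the index of the empty chain, the pair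
`({j₀}, true)` encodes the empty chain and `({j₀}, false)` the one-element chain. Any other pair
encodes the chains biembeddable with a tail for `F`, to the right if `b` is `true` and to the left
otherwise. -/
def Encodes (D : ι → Type u) [∀ j, LinearOrder (D j)] (j₀ : ι) (p : Set ι × Bool)
    (L : Type u) [LinearOrder L] : Prop :=
  (p.1 = {j₀} ∧ Subsingleton L ∧ (p.2 = true ↔ IsEmpty L)) ∨
    (p.1 ≠ {j₀} ∧ ∃ A : Set L, IsTail D (if p.2 then 1 else -1) p.1 A ∧ Emb L A)

theorem Encodes.emb {j₀ : ι} {p : Set ι × Bool} (h : Encodes D j₀ p L) (h' : Encodes D j₀ p L') :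
    Emb L L' := by
  rcases h with ⟨h1, h2, h3⟩ | ⟨h1, A, h2, h3⟩ <;> rcases h' with ⟨k1, k2, k3⟩ | ⟨k1, B, k2, k3⟩
  · rcases isEmpty_or_nonempty L' with he | he
    · exact emb_of_isEmpty (h3.1 (k3.2 he))
    · exact emb_of_subsingleton h2 he
  · exact absurd h1 k1
  · exact absurd k1 h1
  · refine h3.trans ((IsTail.emb ?_ h2 k2).trans (emb_val B))
    split <;> simp

theorem exists_encodes [Finite ι] {n : ℕ}
    (hD : ∀ (C : Type u) [LinearOrder C], IndecClass n C → ∃ j, Biembeddable C (D j))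
    {j₀ : ι} (hj₀ : IsEmpty (D j₀)) (h : IndecClass (n + 1) L) :
    ∃ p : Set ι × Bool, p.1 ≠ ∅ ∧ Encodes D j₀ p L := by
  classical
  obtain ⟨hL, hL', hI, m, hm, hH⟩ := h
  have sub : Subsingleton L → ∃ p : Set ι × Bool, p.1 ≠ ∅ ∧ Encodes D j₀ p L := fun hs =>
    ⟨({j₀}, decide (IsEmpty L)), Set.singleton_ne_empty _, Or.inl ⟨rfl, hs, by simp⟩⟩
  rcases classify hD hL hL' hI m hm hH with hs | ⟨ε, F, A, hε, hA, e⟩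
  · exact sub hs
  · by_cases hF : F = {j₀}
    · apply sub
      have := hA.eq_empty (fun j hj => by
        rw [hF, Set.mem_singleton_iff] at hj
        exact hj ▸ hj₀)
      subst this
      obtain ⟨f⟩ := e
      exact ⟨fun x => absurd (f x).2 (Set.notMem_empty _)⟩
    · refine ⟨(F, decide (ε = 1)), hA.nonempty.ne_empty, Or.inr ⟨hF, A, ?_, e⟩⟩
      rcases hε with rfl | rfl
      · simpa using hA
      · simpa using hA

end Tails

end IndecCount

open IndecCount in
/-- If `D : Fin Tn → Type u` is a complete irredundant system of representatives for the
biembeddability classes of additively indecomposable countable scattered chains of Hausdorff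
rank at most `n` (so `Tn` is the number of such classes), and `E : Fin Tn1 → Type u` is one for
Hausdorff rank at most `n+1`, then `Tn1 ≤ 2·(2^Tn − 1)`. -/
theorem indecomposable_class_count_bound (n : ℕ) (Tn Tn1 : ℕ)
    (D : Fin Tn → Type u) [∀ j, LinearOrder (D j)]
    (E : Fin Tn1 → Type u) [∀ j, LinearOrder (E j)]
    (hD1 : ∀ j, IndecClass n (D j))
    (hD2 : ∀ j j', Biembeddable (D j) (D j') → j = j')
    (hD3 : ∀ (C : Type u) [LinearOrder C], IndecClass n C → ∃ j, Biembeddable C (D j))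
    (hE1 : ∀ j, IndecClass (n + 1) (E j))
    (hE2 : ∀ j j', Biembeddable (E j) (E j') → j = j')
    (hE3 : ∀ (C : Type u) [LinearOrder C], IndecClass (n + 1) C → ∃ j, Biembeddable C (E j)) :
    Tn1 ≤ 2 * (2 ^ Tn - 1) := by
  classical
  obtain ⟨j₀, hj₀⟩ : ∃ j₀, IsEmpty (D j₀) := by
    have hs : Subsingleton (∅ : Set (ULift.{u} ℕ)) := inferInstance
    obtain ⟨j, _, ⟨f⟩⟩ := hD3 (∅ : Set (ULift.{u} ℕ)) ⟨inferInstance,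
      ⟨fun g => (g 0).2⟩, addIndec_of_subsingleton hs, 0, Nat.zero_le _, inH_zero.2 hs⟩
    exact ⟨j, ⟨fun x => (f x).2⟩⟩
  choose p hp hpE using fun j => exists_encodes hD3 hj₀ (hE1 j)
  let φ : Fin Tn1 → {F : Set (Fin Tn) | F ≠ ∅} × Bool := fun j => (⟨(p j).1, hp j⟩, (p j).2)
  have hφ : Function.Injective φ := by
    intro j j' h
    have h1 : p j = p j' := by
      simp only [φ, Prod.mk.injEq, Subtype.mk.injEq] at h
      exact Prod.ext h.1 h.2
    have h2 := hpE j'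
    rw [← h1] at h2
    exact hE2 j j' ⟨(hpE j).emb h2, h2.emb (hpE j)⟩
  have := Fintype.card_le_of_injective φ hφ
  rw [Fintype.card_fin, Fintype.card_prod, Fintype.card_bool, Set.card_ne_eq, Fintype.card_set,
    Fintype.card_fin] at this
  omega
end

section
/- Every countable scattered chain of finite Hausdorff rank is biembeddable with a finite lexicographic sum of additively indecomposable countable scattered chains of finite Hausdorff rank. -/
/-!
By induction on `n`, finitely many additively indecomposable chains suffice, up to
biembeddability, to build every chain in the level `H_n` of the Hausdorff hierarchy as a finite
sum (`exists_good`). Since the number of types is finite, no well-quasi-order theory is needed.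

Suppose the finite set `𝓕` suffices for `H_n`. A chain in `H_{n+1}` is a sum over `ℤ` of finite sums
of types from `𝓕`, that is, a sum over `ω*` followed by a sum over `ω` of types from `𝓕`. In a sum
over `ω`, all but finitely many summands have a type that recurs infinitely often. If `𝓢` is the
set of the recurring types, the corresponding tail embeds into each of its own tails, hence is
additively indecomposable (`OmegaType.addIndecomposable`), and any two such sums with the same `𝓢`
are biembeddable (`OmegaType.biembeddable`). So it is enough to add to `𝓕` one chain for each
`𝓢 ⊆ 𝓕` (`Good.exists_omega`), and to do the same for the reverse orders (`Good.exists_int`).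

The summands obtained are segments of `C`, so countability, scatteredness and finite Hausdorff
rank are inherited from `C`.
-/

universe u v

/-! ### Embeddings and biembeddability -/

namespace FiniteRankDecomposition

/-- If `A` and `B` both sit inside `C` and the image of `A` is contained in that of `B`, then `A`
embeds into `B`. -/
theorem nonempty_embedding_of_range {A : Type*} {B : Type*} {C : Type*} [LinearOrder A]
    [LinearOrder B] [LinearOrder C] (a : A → C) (b : B → C) (ha : StrictMono a)
    (hb : StrictMono b) (h : ∀ x, ∃ y, b y = a x) : Nonempty (A ↪o B) := by
  choose f hf using h
  refine ⟨OrderEmbedding.ofStrictMono f fun x y hxy => ?_⟩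
  rw [← hb.lt_iff_lt, hf, hf]
  exact ha hxy

theorem biembeddable_of_range {A : Type*} {B : Type*} {C : Type*} [LinearOrder A]
    [LinearOrder B] [LinearOrder C] (a : A → C) (b : B → C) (ha : StrictMono a)
    (hb : StrictMono b) (h : ∀ x, ∃ y, b y = a x) (h' : ∀ y, ∃ x, a x = b y) :
    Biembeddable A B :=
  ⟨nonempty_embedding_of_range a b ha hb h, nonempty_embedding_of_range b a hb ha h'⟩

theorem _root_.Biembeddable.refl (A : Type*) [LinearOrder A] : Biembeddable A A :=
  ⟨⟨RelEmbedding.refl _⟩, ⟨RelEmbedding.refl _⟩⟩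

theorem _root_.Biembeddable.symm {A : Type*} {B : Type*} [LinearOrder A] [LinearOrder B]
    (h : Biembeddable A B) : Biembeddable B A := ⟨h.2, h.1⟩

theorem _root_.Biembeddable.trans {A : Type*} {B : Type*} {C : Type*} [LinearOrder A]
    [LinearOrder B] [LinearOrder C] (h : Biembeddable A B) (h' : Biembeddable B C) : Biembeddable A C := by
  obtain ⟨⟨f⟩, ⟨g⟩⟩ := h
  obtain ⟨⟨f'⟩, ⟨g'⟩⟩ := h'
  exact ⟨⟨f.trans f'⟩, ⟨g'.trans g⟩⟩

theorem _root_.Biembeddable.of_isEmpty (A : Type*) (B : Type*) [LinearOrder A] [LinearOrder B]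
    [IsEmpty A] [IsEmpty B] : Biembeddable A B :=
  ⟨⟨OrderEmbedding.ofIsEmpty⟩, ⟨OrderEmbedding.ofIsEmpty⟩⟩

theorem _root_.Biembeddable.dual {A : Type*} {B : Type*} [LinearOrder A] [LinearOrder B]
    (h : Biembeddable A B) : Biembeddable Aᵒᵈ Bᵒᵈ := by
  obtain ⟨⟨f⟩, ⟨g⟩⟩ := h
  exact ⟨⟨f.dual⟩, ⟨g.dual⟩⟩

theorem _root_.AddIndecomposable.of_biembeddable {A : Type*} {B : Type*} [LinearOrder A]
    [LinearOrder B] (h : Biembeddable A B) (hA : AddIndecomposable A) : AddIndecomposable B := by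
  obtain ⟨⟨f⟩, ⟨g⟩⟩ := h
  intro I hI
  refine (hA (f ⁻¹' I) fun x hx y hy => hI _ hx _ (f.monotone hy)).imp ?_ ?_
  · rintro ⟨e⟩
    exact nonempty_embedding_of_range (fun x => f (e (g x))) (Subtype.val : I → B)
      (fun x y hxy => f.strictMono (e.strictMono (g.strictMono hxy))) (Subtype.strictMono_coe _)
      fun x => ⟨⟨_, (e (g x)).2⟩, rfl⟩
  · rintro ⟨e⟩
    exact nonempty_embedding_of_range (fun x => f (e (g x))) (Subtype.val : (Iᶜ : Set B) → B)
      (fun x y hxy => f.strictMono (e.strictMono (g.strictMono hxy))) (Subtype.strictMono_coe _)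
      fun x => ⟨⟨_, (e (g x)).2⟩, rfl⟩

theorem _root_.AddIndecomposable.dual {A : Type*} [LinearOrder A] (hA : AddIndecomposable A) :
    AddIndecomposable Aᵒᵈ := by
  intro I hI
  rcases hA (OrderDual.toDual ⁻¹' Iᶜ) (fun x hx y hy hy' => hx (hI _ hy' _ hy)) with ⟨⟨e⟩⟩ | ⟨⟨e⟩⟩
  · exact Or.inr (nonempty_embedding_of_range (A := Aᵒᵈ) (C := Aᵒᵈ)
      (fun x => OrderDual.toDual (e (OrderDual.ofDual x)).1)
      (Subtype.val : (Iᶜ : Set Aᵒᵈ) → Aᵒᵈ)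
      (fun x y hxy => e.strictMono (OrderDual.ofDual_lt_ofDual.2 hxy)) (Subtype.strictMono_coe _)
      fun x => ⟨⟨_, (e (OrderDual.ofDual x)).2⟩, rfl⟩)
  · exact Or.inl (nonempty_embedding_of_range (A := Aᵒᵈ) (C := Aᵒᵈ)
      (fun x => OrderDual.toDual (e (OrderDual.ofDual x)).1)
      (Subtype.val : I → Aᵒᵈ)
      (fun x y hxy => e.strictMono (OrderDual.ofDual_lt_ofDual.2 hxy)) (Subtype.strictMono_coe _)
      fun x => ⟨⟨_, not_not.1 (e (OrderDual.ofDual x)).2⟩, rfl⟩)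

theorem _root_.AddIndecomposable.of_subsingleton {A : Type*} [LinearOrder A] [Subsingleton A] :
    AddIndecomposable A := by
  intro I _
  by_cases h : ∀ x, x ∈ I
  · exact Or.inl ⟨OrderEmbedding.ofStrictMono (fun x => ⟨x, h x⟩) fun x y hxy => hxy⟩
  · push Not at h
    obtain ⟨x, hx⟩ := h
    exact Or.inr ⟨OrderEmbedding.ofStrictMono (fun _ => ⟨x, hx⟩)
      fun a b hab => absurd (Subsingleton.elim a b) hab.ne⟩

/-! ### The Hausdorff hierarchy is closed under embeddings and increasing -/

theorem _root_.InHausdorff.of_embedding {n : ℕ} : ∀ {A : Type*} {B : Type*} [LinearOrder A]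
    [LinearOrder B] (_ : A ↪o B), InHausdorff n B → InHausdorff n A := by
  induction n using Nat.strong_induction_on with
  | _ n ih =>
    intro A B _ _ e h
    cases n with
    | zero =>
      rw [InHausdorff] at h ⊢
      exact e.injective.subsingleton
    | succ n =>
      rw [InHausdorff] at h ⊢
      obtain ⟨c, hc, hf⟩ := h
      refine ⟨fun x => c (e x), fun x y hxy => hc (e.monotone hxy), fun i => ?_⟩
      obtain ⟨m, hm, hi⟩ := hf i
      exact ⟨m, hm, ih m (by omega) (OrderEmbedding.ofStrictMono
        (fun x : {x : A // c (e x) = i} => (⟨e x.1, x.2⟩ : {y : B // c y = i}))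
        fun x y hxy => e.strictMono hxy) hi⟩

theorem _root_.InHausdorff.mono {m n : ℕ} (hmn : m ≤ n) {A : Type*} [LinearOrder A]
    (h : InHausdorff m A) : InHausdorff n A := by
  induction n, hmn using Nat.le_induction with
  | base => exact h
  | succ n _ ih =>
    rw [InHausdorff]
    exact ⟨fun _ => 0, monotone_const, fun i =>
      ⟨n, le_rfl, ih.of_embedding (OrderEmbedding.subtype _)⟩⟩

/-! ### Decompositions into types from a set of chains -/

/-- `Dec 𝓕 C`: the chain `C` is a finite sum of chains, each biembeddable with a member of `𝓕`.
The decomposition is recorded by a bounded monotone map to `ℕ`; its fibers are the summands.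
Indices that are not attained give empty summands, so `𝓕` then has to contain an empty chain. -/
def Dec (𝓕 : Set LinOrd.{u}) (C : Type u) [LinearOrder C] : Prop :=
  ∃ (k : ℕ) (c : C → ℕ), Monotone c ∧ (∀ x, c x < k) ∧
    ∀ j, ∃ F ∈ 𝓕, Biembeddable {x // c x = j} F

theorem Dec.mono {𝓕 𝓖 : Set LinOrd.{u}} (h : 𝓕 ⊆ 𝓖) {C : Type u} [LinearOrder C]
    (hC : Dec 𝓕 C) : Dec 𝓖 C := by
  obtain ⟨k, c, hc, hk, hF⟩ := hC
  refine ⟨k, c, hc, hk, fun j => ?_⟩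
  obtain ⟨F, hF, hj⟩ := hF j
  exact ⟨F, h hF, hj⟩

/-- The set of the reverses of the chains in `𝓕`. -/
def dualSet (𝓕 : Set LinOrd.{u}) : Set LinOrd.{u} :=
  (fun F : LinOrd.{u} => LinOrd.of (F : Type u)ᵒᵈ) '' 𝓕

theorem subset_dualSet_dualSet (𝓕 : Set LinOrd.{u}) : 𝓕 ⊆ dualSet (dualSet 𝓕) := by
  intro F hF
  exact ⟨_, ⟨F, hF, rfl⟩, rfl⟩

theorem dualSet_mono {𝓕 𝓖 : Set LinOrd.{u}} (h : 𝓕 ⊆ 𝓖) : dualSet 𝓕 ⊆ dualSet 𝓖 :=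
  Set.image_mono h

theorem Dec.dual {𝓕 : Set LinOrd.{u}} (hE : ∃ E ∈ 𝓕, IsEmpty E) {C : Type u} [LinearOrder C]
    (hC : Dec 𝓕 C) : Dec (dualSet 𝓕) Cᵒᵈ := by
  obtain ⟨k, c, hc, hk, hF⟩ := hC
  obtain ⟨r, hr⟩ : ∃ r : Cᵒᵈ → ℕ, ∀ x, r x = k - c (OrderDual.ofDual x) := ⟨_, fun _ => rfl⟩
  refine ⟨k + 1, r, fun x y hxy => ?_, fun x => ?_, fun j => ?_⟩
  · rw [hr, hr]
    exact Nat.sub_le_sub_left (hc hxy) k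
  · rw [hr]
    omega
  · by_cases hj : j ≤ k
    · obtain ⟨F, hF, h⟩ := hF (k - j)
      refine ⟨_, ⟨F, hF, rfl⟩, Biembeddable.trans ?_ h.dual⟩
      refine biembeddable_of_range (C := Cᵒᵈ) (fun x => x.1)
        (fun x => OrderDual.toDual (OrderDual.ofDual x).1) (fun x y h => h) (fun x y h => h)
        (fun x => ?_) (fun x => ?_)
      · have h1 := x.2
        have h2 := hk (OrderDual.ofDual x.1)
        rw [hr] at h1
        exact ⟨OrderDual.toDual ⟨OrderDual.ofDual x.1, by omega⟩, rfl⟩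
      · have h1 := (OrderDual.ofDual x).2
        have h2 := hk (OrderDual.ofDual x).1
        refine ⟨⟨OrderDual.toDual (OrderDual.ofDual x).1, ?_⟩, rfl⟩
        rw [hr, OrderDual.ofDual_toDual]
        omega
    · obtain ⟨E, hE, hE'⟩ := hE
      refine ⟨_, ⟨E, hE, rfl⟩, ?_⟩
      have : IsEmpty {x : Cᵒᵈ // r x = j} := ⟨fun x => by
        have := x.2
        rw [hr] at this
        omega⟩
      have : IsEmpty (LinOrd.of (E : Type u)ᵒᵈ) := hE'
      exact Biembeddable.of_isEmpty _ _

theorem Dec.of_orderIso {𝓕 : Set LinOrd.{u}} {C D : Type u} [LinearOrder C] [LinearOrder D]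
    (e : C ≃o D) (hC : Dec 𝓕 C) : Dec 𝓕 D := by
  obtain ⟨k, c, hc, hk, hF⟩ := hC
  refine ⟨k, fun x => c (e.symm x), fun x y h => hc (e.symm.monotone h), fun x => hk _,
    fun j => ?_⟩
  obtain ⟨F, hF, h⟩ := hF j
  refine ⟨F, hF, Biembeddable.trans ?_ h⟩
  exact biembeddable_of_range (C := C) (fun x => e.symm x.1) (fun x => x.1)
    (fun x y h => e.symm.strictMono h) (fun x y h => h) (fun x => ⟨⟨_, x.2⟩, rfl⟩)
    (fun x => ⟨⟨e x.1, by simpa using x.2⟩, by simp⟩)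

/-- A chain cut into an initial and a final segment is decomposable if both segments are. -/
theorem Dec.glue {𝓕 : Set LinOrd.{u}} {C : Type u} [LinearOrder C] (p : C → Prop)
    (hp : ∀ x y, x ≤ y → p y → p x) (h₁ : Dec 𝓕 {x // p x}) (h₂ : Dec 𝓕 {x // ¬ p x}) :
    Dec 𝓕 C := by
  classical
  obtain ⟨k₁, c₁, hc₁, hk₁, hF₁⟩ := h₁
  obtain ⟨k₂, c₂, hc₂, hk₂, hF₂⟩ := h₂
  obtain ⟨c, hpos, hneg⟩ : ∃ c : C → ℕ, (∀ x (h : p x), c x = c₁ ⟨x, h⟩) ∧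
      ∀ x (h : ¬ p x), c x = k₁ + c₂ ⟨x, h⟩ :=
    ⟨fun x => if h : p x then c₁ ⟨x, h⟩ else k₁ + c₂ ⟨x, h⟩, fun x h => dif_pos h,
      fun x h => dif_neg h⟩
  refine ⟨k₁ + k₂, c, fun x y hxy => ?_,
    fun x => ?_, fun j => ?_⟩
  · by_cases hy : p y
    · have hx := hp x y hxy hy
      rw [hpos x hx, hpos y hy]
      exact hc₁ hxy
    · by_cases hx : p x
      · rw [hpos x hx, hneg y hy]
        have := hk₁ ⟨x, hx⟩
        omega
      · rw [hneg x hx, hneg y hy]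
        exact Nat.add_le_add_left (hc₂ hxy) _
  · by_cases hx : p x
    · have := hk₁ ⟨x, hx⟩
      rw [hpos x hx]
      omega
    · have := hk₂ ⟨x, hx⟩
      rw [hneg x hx]
      omega
  · by_cases hj : j < k₁
    · obtain ⟨F, hF, h⟩ := hF₁ j
      refine ⟨F, hF, Biembeddable.trans ?_ h⟩
      refine biembeddable_of_range (C := C) (fun x => x.1) (fun x => x.1.1) (fun x y h => h)
        (fun x y h => h) (fun x => ?_) (fun x => ?_)
      · have hx := x.2
        by_cases hpx : p x.1
        · exact ⟨⟨⟨x.1, hpx⟩, by rwa [hpos _ hpx] at hx⟩, rfl⟩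
        · rw [hneg _ hpx] at hx
          omega
      · exact ⟨⟨x.1.1, by rw [hpos _ x.1.2]; exact x.2⟩, rfl⟩
    · obtain ⟨F, hF, h⟩ := hF₂ (j - k₁)
      refine ⟨F, hF, Biembeddable.trans ?_ h⟩
      refine biembeddable_of_range (C := C) (fun x => x.1) (fun x => x.1.1) (fun x y h => h)
        (fun x y h => h) (fun x => ?_) (fun x => ?_)
      · have hx := x.2
        by_cases hpx : p x.1
        · rw [hpos _ hpx] at hx
          have := hk₁ ⟨x.1, hpx⟩
          omega
        · exact ⟨⟨⟨x.1, hpx⟩, by rw [hneg _ hpx] at hx; omega⟩, rfl⟩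
      · exact ⟨⟨x.1.1, by rw [hneg _ x.1.2]; have : c₂ ⟨x.1.1, x.1.2⟩ = j - k₁ := x.2; omega⟩, rfl⟩

/-! ### Sums over `ω` in which every type recurs -/

/-- Embeddings of the summands of `L`, in order, into summands of `M` fit together. -/
theorem nonempty_embedding_of_fibers {L : Type*} {M : Type*} [LinearOrder L] [LinearOrder M]
    {f : L → ℕ} {g : M → ℕ} (hf : Monotone f) (hg : Monotone g) {φ : ℕ → ℕ} (hφ : StrictMono φ)
    (e : ∀ m, {x // f x = m} ↪o {y // g y = φ m}) :
    ∃ E : L ↪o M, ∀ x, g (E x) = φ (f x) := by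
  have key : ∀ m x (h : f x = m), (e (f x) ⟨x, rfl⟩).1 = (e m ⟨x, h⟩).1 := by
    rintro m x rfl
    rfl
  refine ⟨OrderEmbedding.ofStrictMono (fun x => (e (f x) ⟨x, rfl⟩).1) fun x y hxy => ?_,
    fun x => (e (f x) ⟨x, rfl⟩).2⟩
  rcases (hf hxy.le).lt_or_eq with h | h
  · apply hg.reflect_lt
    rw [(e (f x) ⟨x, rfl⟩).2, (e (f y) ⟨y, rfl⟩).2]
    exact hφ h
  · show (e (f x) ⟨x, rfl⟩).1 < (e (f y) ⟨y, rfl⟩).1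
    rw [key _ x h]
    exact (e (f y)).strictMono hxy

/-- `OmegaType 𝓢 L`: the chain `L` is a sum over `ω` of chains biembeddable with members of `𝓢`,
each member of `𝓢` being used infinitely often. -/
def OmegaType (𝓢 : Set LinOrd.{u}) (L : Type u) [LinearOrder L] : Prop :=
  ∃ (d : L → ℕ) (t : ℕ → LinOrd.{u}), Monotone d ∧ (∀ m, Biembeddable {x // d x = m} (t m)) ∧
    (∀ m, t m ∈ 𝓢) ∧ ∀ s ∈ 𝓢, ∀ N, ∃ m > N, t m = s

/-- A chain of type `𝓢` embeds into every tail of every chain of type `𝓢`: the summands of the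
former are matched one after the other with later and later summands of the latter. -/
theorem OmegaType.exists_embedding {𝓢 : Set LinOrd.{u}} {L M : Type u} [LinearOrder L]
    [LinearOrder M] {d : L → ℕ} {t : ℕ → LinOrd.{u}} (hd : Monotone d)
    (hdt : ∀ m, Biembeddable {x // d x = m} (t m)) (ht : ∀ m, t m ∈ 𝓢)
    {d' : M → ℕ} {t' : ℕ → LinOrd.{u}} (hd' : Monotone d')
    (hdt' : ∀ m, Biembeddable {x // d' x = m} (t' m))
    (ht' : ∀ s ∈ 𝓢, ∀ N, ∃ m > N, t' m = s) (N : ℕ) :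
    ∃ E : L ↪o M, ∀ x, N < d' (E x) := by
  choose h hN heq using fun i => ht' (t i) (ht i)
  let φ : ℕ → ℕ := fun n => Nat.rec (h 0 N) (fun n r => h (n + 1) r) n
  have hφ : StrictMono φ := strictMono_nat_of_lt_succ fun n => hN (n + 1) (φ n)
  have hφ0 : N < φ 0 := hN 0 N
  have hφt : ∀ m, t' (φ m) = t m := by
    rintro (_ | m)
    · exact heq 0 N
    · exact heq (m + 1) (φ m)
  have he : ∀ m, Nonempty ({x // d x = m} ↪o {y // d' y = φ m}) := by
    intro m
    have h1 := hdt' (φ m)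
    rw [hφt] at h1
    exact ((hdt m).trans h1.symm).1
  obtain ⟨E, hE⟩ := nonempty_embedding_of_fibers hd hd' hφ fun m => (he m).some
  refine ⟨E, fun x => ?_⟩
  rw [hE]
  exact hφ0.trans_le (hφ.monotone (Nat.zero_le _))

theorem OmegaType.biembeddable {𝓢 : Set LinOrd.{u}} {L M : Type u} [LinearOrder L]
    [LinearOrder M] (hL : OmegaType 𝓢 L) (hM : OmegaType 𝓢 M) : Biembeddable L M := by
  obtain ⟨d, t, hd, hdt, ht, hs⟩ := hL
  obtain ⟨d', t', hd', hdt', ht', hs'⟩ := hM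
  obtain ⟨E, _⟩ := OmegaType.exists_embedding hd hdt ht hd' hdt' hs' 0
  obtain ⟨E', _⟩ := OmegaType.exists_embedding hd' hdt' ht' hd hdt hs 0
  exact ⟨⟨E⟩, ⟨E'⟩⟩

/-- A nonempty final segment contains a tail of the sum, and the whole chain embeds into it. -/
theorem OmegaType.addIndecomposable {𝓢 : Set LinOrd.{u}} {L : Type u} [LinearOrder L]
    (hL : OmegaType 𝓢 L) : AddIndecomposable L := by
  obtain ⟨d, t, hd, hdt, ht, hs⟩ := hL
  intro I hI
  by_cases h : ∀ x, x ∈ I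
  · exact Or.inl ⟨OrderEmbedding.ofStrictMono (fun x => ⟨x, h x⟩) fun x y hxy => hxy⟩
  · push Not at h
    obtain ⟨x, hx⟩ := h
    obtain ⟨E, hE⟩ := OmegaType.exists_embedding hd hdt ht hd hdt hs (d x)
    exact Or.inr ⟨OrderEmbedding.ofStrictMono
      (fun y => ⟨E y, fun hy => hx (hI _ hy _ (hd.reflect_lt (hE y)).le)⟩)
      fun y z hyz => E.strictMono hyz⟩

/-! ### Enlarging the finite set of types -/

/-- A finite set of additively indecomposable chains, including an empty one. -/
structure Good (𝓕 : Set LinOrd.{u}) : Prop where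
  finite : 𝓕.Finite
  indec : ∀ F ∈ 𝓕, AddIndecomposable F
  empty : ∃ E ∈ 𝓕, IsEmpty E

theorem Good.dual {𝓕 : Set LinOrd.{u}} (h : Good 𝓕) : Good (dualSet 𝓕) where
  finite := h.finite.image _
  indec := by
    rintro _ ⟨F, hF, rfl⟩
    exact (h.indec F hF).dual
  empty := by
    obtain ⟨E, hE, hE'⟩ := h.empty
    exact ⟨_, ⟨E, hE, rfl⟩, hE'⟩

theorem Good.union {𝓕 𝓖 : Set LinOrd.{u}} (h : Good 𝓕) (h' : Good 𝓖) : Good (𝓕 ∪ 𝓖) where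
  finite := h.finite.union h'.finite
  indec F hF := hF.elim (h.indec F) (h'.indec F)
  empty := by
    obtain ⟨E, hE, hE'⟩ := h.empty
    exact ⟨E, Or.inl hE, hE'⟩

/-- A sum over `ω` of finite sums is a sum over `ω` of the individual summands. -/
theorem exists_flatten {𝓕 : Set LinOrd.{u}} (hE : ∃ E ∈ 𝓕, IsEmpty E) {L : Type u}
    [LinearOrder L] {d : L → ℕ} (hd : Monotone d) (hD : ∀ i, Dec 𝓕 {x // d x = i}) :
    ∃ c : L → ℕ, Monotone c ∧ ∀ m, ∃ F ∈ 𝓕, Biembeddable {x // c x = m} F := by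
  choose k g hg hk hF using hD
  -- `p i` is the number of summands in front of the `i`-th block.
  let p : ℕ → ℕ := fun i => ∑ j ∈ Finset.range i, k j
  have hps : ∀ i, p (i + 1) = p i + k i := fun i => Finset.sum_range_succ _ _
  have hp : Monotone p := monotone_nat_of_le_succ fun i => by rw [hps]; omega
  obtain ⟨c, hcdef⟩ : ∃ c : L → ℕ, ∀ x, c x = p (d x) + g (d x) ⟨x, rfl⟩ := ⟨_, fun _ => rfl⟩
  have key : ∀ i x (h : d x = i), c x = p i + g i ⟨x, h⟩ := by
    rintro i x rfl
    exact hcdef x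
  have hlt : ∀ x y, d x < d y → c x < c y := by
    intro x y h
    rw [hcdef, hcdef]
    have h1 := hk (d x) ⟨x, rfl⟩
    have h2 := hps (d x)
    have h3 := hp (Nat.succ_le_of_lt h)
    simp only [Nat.succ_eq_add_one] at h3
    omega
  refine ⟨c, fun x y hxy => ?_, fun m => ?_⟩
  · rcases (hd hxy).lt_or_eq with h | h
    · exact (hlt x y h).le
    · rw [key _ x h, key _ y rfl]
      exact Nat.add_le_add_left (hg _ hxy) _
  · rcases isEmpty_or_nonempty {x // c x = m} with hem | ⟨⟨x₀, hx₀⟩⟩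
    · obtain ⟨E, hE, hE'⟩ := hE
      exact ⟨E, hE, Biembeddable.of_isEmpty _ _⟩
    · obtain ⟨F, hF, h⟩ := hF (d x₀) (g (d x₀) ⟨x₀, rfl⟩)
      refine ⟨F, hF, Biembeddable.trans ?_ h⟩
      refine biembeddable_of_range (C := L) (fun x => x.1) (fun x => x.1.1) (fun x y h => h)
        (fun x y h => h) (fun x => ?_) (fun x => ?_)
      · have hx : d x.1 = d x₀ := by
          rcases lt_trichotomy (d x.1) (d x₀) with h | h | h
          · have := hlt _ _ h
            have := x.2
            omega
          · exact h
          · have := hlt _ _ h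
            have := x.2
            omega
        refine ⟨⟨⟨x.1, hx⟩, ?_⟩, rfl⟩
        have h1 := key _ _ hx
        have h3 := hcdef x₀
        have h2 := x.2
        omega
      · refine ⟨⟨x.1.1, ?_⟩, rfl⟩
        rw [key _ _ x.1.2, x.2, ← hcdef, hx₀]

/-- A good set can be enlarged by one representative for each class `OmegaType 𝓢`, `𝓢 ⊆ 𝓕`.
This suffices for all sums over `ω` of decomposable chains: apart from the finitely many summands
whose type occurs only finitely often, such a sum has class `OmegaType 𝓢`, where `𝓢` is the set
of types that recur. -/
theorem Good.exists_omega {𝓕 : Set LinOrd.{u}} (h𝓕 : Good 𝓕) :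
    ∃ 𝓖, 𝓕 ⊆ 𝓖 ∧ Good 𝓖 ∧ ∀ (L : Type u) [LinearOrder L] (d : L → ℕ), Monotone d →
      (∀ i, Dec 𝓕 {x // d x = i}) → Dec 𝓖 L := by
  classical
  have hrep : ∀ 𝓢 : Set LinOrd.{u}, ∃ R : LinOrd.{u}, AddIndecomposable R ∧
      ∀ (L : Type u) [LinearOrder L], OmegaType 𝓢 L → Biembeddable L R := by
    intro 𝓢
    by_cases h : ∃ R : LinOrd.{u}, OmegaType 𝓢 R
    · obtain ⟨R, hR⟩ := h
      exact ⟨R, hR.addIndecomposable, fun L _ hL => hL.biembeddable hR⟩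
    · obtain ⟨E, hE, _⟩ := h𝓕.empty
      exact ⟨E, h𝓕.indec E hE, fun L _ hL => absurd ⟨LinOrd.of L, hL⟩ h⟩
  choose R hRi hR using hrep
  refine ⟨𝓕 ∪ R '' 𝓕.powerset, Set.subset_union_left, ⟨?_, ?_, ?_⟩, ?_⟩
  · exact h𝓕.finite.union (h𝓕.finite.finite_subsets.image _)
  · rintro F (hF | ⟨𝓢, -, rfl⟩)
    · exact h𝓕.indec F hF
    · exact hRi 𝓢
  · obtain ⟨E, hE, hE'⟩ := h𝓕.empty
    exact ⟨E, Or.inl hE, hE'⟩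
  · intro L _ d hd hD
    obtain ⟨c, hc, hF⟩ := exists_flatten h𝓕.empty hd hD
    choose t ht hct using hF
    -- Beyond some `N`, only types that recur occur.
    have hN : ∃ N, ∀ m, N ≤ m → ∀ n, ∃ m' > n, t m' = t m := by
      have hN' : ∀ F : LinOrd.{u}, ∃ N, (∃ m ≥ N, t m = F) → ∀ n, ∃ m' > n, t m' = F := by
        intro F
        by_cases h : ∀ n, ∃ m' > n, t m' = F
        · exact ⟨0, fun _ => h⟩
        · push Not at h
          obtain ⟨n, hn⟩ := h
          exact ⟨n + 1, fun ⟨m, hm, hmF⟩ => absurd hmF (hn m hm)⟩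
      choose N hN using hN'
      refine ⟨h𝓕.finite.toFinset.sup N, fun m hm => hN (t m) ⟨m, ?_, rfl⟩⟩
      exact le_trans (Finset.le_sup (h𝓕.finite.mem_toFinset.2 (ht m))) hm
    obtain ⟨N, hN⟩ := hN
    obtain ⟨E, hE, hE'⟩ := h𝓕.empty
    obtain ⟨r, hr⟩ : ∃ r : L → ℕ, ∀ x, r x = min (c x) N := ⟨_, fun _ => rfl⟩
    refine ⟨N + 1, r, fun x y hxy => ?_, fun x => by rw [hr]; omega, fun j => ?_⟩
    · rw [hr, hr]
      exact min_le_min_right _ (hc hxy)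
    rcases lt_trichotomy j N with hj | rfl | hj
    · refine ⟨t j, Or.inl (ht j), Biembeddable.trans ?_ (hct j)⟩
      refine biembeddable_of_range (C := L) (fun x => x.1) (fun x => x.1) (fun x y h => h)
        (fun x y h => h) (fun x => ⟨⟨x.1, ?_⟩, rfl⟩) (fun x => ⟨⟨x.1, ?_⟩, rfl⟩)
      · have := x.2
        rw [hr] at this
        omega
      · have := x.2
        rw [hr]
        omega
    · refine ⟨R {F | ∃ m ≥ j, t m = F}, Or.inr ⟨_, ?_, rfl⟩, hR _ _ ?_⟩
      · rintro F ⟨m, -, rfl⟩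
        exact ht m
      · refine ⟨fun x => c x.1 - j, fun m => t (m + j),
          fun x y hxy => Nat.sub_le_sub_right (hc hxy) _, fun m => ?_,
          fun m => ⟨m + j, by omega, rfl⟩, ?_⟩
        · refine Biembeddable.trans ?_ (hct (m + j))
          refine biembeddable_of_range (C := L) (fun x => x.1.1) (fun x => x.1) (fun x y h => h)
            (fun x y h => h) (fun x => ⟨⟨x.1.1, ?_⟩, rfl⟩) (fun x => ⟨⟨⟨x.1, ?_⟩, ?_⟩, rfl⟩)
          · have h1 := x.1.2
            have h2 : c x.1.1 - j = m := x.2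
            rw [hr] at h1
            omega
          · have := x.2
            rw [hr]
            omega
          · have := x.2
            show c x.1 - j = m
            omega
        · rintro _ ⟨m, hm, rfl⟩ n
          obtain ⟨m', hm', hm''⟩ := hN m hm (n + j)
          refine ⟨m' - j, by omega, ?_⟩
          show t (m' - j + j) = t m
          rwa [Nat.sub_add_cancel (by omega)]
    · refine ⟨E, Or.inl hE, ?_⟩
      have : IsEmpty {x // r x = j} := ⟨fun x => by
        have := x.2
        rw [hr] at this
        omega⟩
      exact Biembeddable.of_isEmpty _ _

/-- Sums over `ℤ` split into a sum over `ω*` and a sum over `ω`; the former is treated by reversing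
the order. -/
theorem Good.exists_int {𝓕 : Set LinOrd.{u}} (h𝓕 : Good 𝓕) :
    ∃ 𝓖, Good 𝓖 ∧ ∀ (L : Type u) [LinearOrder L] (d : L → ℤ), Monotone d →
      (∀ i, Dec 𝓕 {x // d x = i}) → Dec 𝓖 L := by
  obtain ⟨𝓖₁, -, hg₁, h₁⟩ := h𝓕.exists_omega
  obtain ⟨𝓖₂, -, hg₂, h₂⟩ := h𝓕.dual.exists_omega
  refine ⟨𝓖₁ ∪ dualSet 𝓖₂, hg₁.union hg₂.dual, fun L _ d hd hD => ?_⟩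
  refine Dec.glue (fun x => d x < 0) (fun x y hxy hy => (hd hxy).trans_lt hy) ?_ ?_
  · refine Dec.mono Set.subset_union_right ?_
    have key : Dec 𝓖₂ {x : L // d x < 0}ᵒᵈ := by
      refine h₂ _ (fun x => (-d (OrderDual.ofDual x).1).toNat)
        (fun x y hxy => Int.toNat_le_toNat (neg_le_neg (hd hxy))) fun i => ?_
      -- The blocks with positive index are reversed blocks of `L`; the block of index `0` is empty.
      by_cases hi : i = 0
      · obtain ⟨E, hE, hE'⟩ := h𝓕.dual.empty
        have hem : IsEmpty {x : {x : L // d x < 0}ᵒᵈ //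
            (-d (OrderDual.ofDual x).1).toNat = i} := ⟨fun x => by
          have h1 := x.2
          have h2 := (OrderDual.ofDual x.1).2
          omega⟩
        refine ⟨0, fun _ => 0, monotone_const, fun x => isEmptyElim x, fun j => ⟨E, hE, ?_⟩⟩
        exact Biembeddable.of_isEmpty _ _
      · refine Dec.of_orderIso ?_ ((hD (-i)).dual h𝓕.empty)
        exact
          { toFun := fun x => ⟨OrderDual.toDual ⟨(OrderDual.ofDual x).1, by
                have := (OrderDual.ofDual x).2
                omega⟩, by
                have := (OrderDual.ofDual x).2
                show (-d (OrderDual.ofDual x).1).toNat = i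
                omega⟩
            invFun := fun x => OrderDual.toDual ⟨(OrderDual.ofDual x.1).1, by
                have h1 := x.2
                have h2 := (OrderDual.ofDual x.1).2
                omega⟩
            left_inv := fun x => rfl
            right_inv := fun x => rfl
            map_rel_iff' := Iff.rfl }
    exact Dec.of_orderIso (OrderIso.dualDual _).symm (key.dual hg₂.empty)
  · refine Dec.mono Set.subset_union_left ?_
    refine h₁ _ (fun x => (d x.1).toNat) (fun x y hxy => Int.toNat_le_toNat (hd hxy)) fun i => ?_
    refine Dec.of_orderIso ?_ (hD i)
    exact
      { toFun := fun x => ⟨⟨x.1, by have := x.2; omega⟩, by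
          have := x.2
          show (d x.1).toNat = i
          omega⟩
        invFun := fun x => ⟨x.1.1, by
          have h1 := x.2
          have h2 := x.1.2
          omega⟩
        left_inv := fun x => rfl
        right_inv := fun x => rfl
        map_rel_iff' := Iff.rfl }

/-- At each finite level of the Hausdorff hierarchy, finitely many indecomposable types suffice. -/
theorem exists_good (n : ℕ) :
    ∃ 𝓕 : Set LinOrd.{u}, Good 𝓕 ∧ ∀ (C : Type u) [LinearOrder C], InHausdorff n C → Dec 𝓕 C := by
  induction n with
  | zero =>
    refine ⟨{LinOrd.of PEmpty.{u + 1}, LinOrd.of PUnit.{u + 1}}, ⟨Set.toFinite _, ?_, ?_⟩, ?_⟩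
    · rintro F (rfl | rfl)
      · exact AddIndecomposable.of_subsingleton (A := PEmpty)
      · exact AddIndecomposable.of_subsingleton (A := PUnit)
    · exact ⟨_, Or.inl rfl, inferInstanceAs (IsEmpty PEmpty)⟩
    · intro C _ hC
      rw [InHausdorff] at hC
      refine ⟨1, fun _ => 0, monotone_const, fun _ => one_pos, fun j => ?_⟩
      rcases isEmpty_or_nonempty {x : C // 0 = j} with h | h
      · exact ⟨_, Or.inl rfl, Biembeddable.of_isEmpty _ PEmpty⟩
      · refine ⟨_, Or.inr rfl, biembeddable_of_range (C := PUnit) (B := PUnit) (fun _ => ⟨⟩) id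
          (fun x y h => absurd (Subsingleton.elim x y) h.ne) strictMono_id
          (fun _ => ⟨⟨⟩, rfl⟩) (fun _ => ⟨h.some, rfl⟩)⟩
  | succ n ih =>
    obtain ⟨𝓕, h𝓕, hdec⟩ := ih
    obtain ⟨𝓖, h𝓖, h⟩ := h𝓕.exists_int
    refine ⟨𝓖, h𝓖, fun C _ hC => ?_⟩
    rw [InHausdorff] at hC
    obtain ⟨c, hc, hf⟩ := hC
    refine h C c hc fun i => ?_
    obtain ⟨m, hm, hi⟩ := hf i
    exact hdec _ (hi.mono hm)

/-- The chain `C` is the lexicographic sum of the fibers of a monotone map to `Fin k`. -/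
theorem biembeddable_sigma_fibers {C : Type u} [LinearOrder C] {k : ℕ} {c : C → ℕ}
    (hc : Monotone c) (hk : ∀ x, c x < k) :
    Biembeddable C (Σₗ j : Fin k, {x // c x = j}) := by
  have hs : StrictMono (fun z : (Σₗ j : Fin k, {x // c x = (j : ℕ)}) => (ofLex z).2.1) := by
    rintro ⟨i, x⟩ ⟨j, y⟩ (⟨_, _, hij⟩ | ⟨_, _, hxy⟩)
    · apply hc.reflect_lt
      show c x.1 < c y.1
      rw [x.2, y.2]
      exact hij
    · exact hxy
  exact biembeddable_of_range (C := C) id (fun z => (ofLex z).2.1) strictMono_id hs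
    (fun x => ⟨toLex ⟨⟨c x, hk x⟩, ⟨x, rfl⟩⟩, rfl⟩) (fun z => ⟨_, rfl⟩)

end FiniteRankDecomposition

open FiniteRankDecomposition

/-- Every countable scattered chain of finite Hausdorff rank is biembeddable with a finite
lexicographic sum of additively indecomposable countable scattered chains of finite
Hausdorff rank. -/
theorem biembeddable_finite_sum_of_indecomposables
    (C : Type u) [LinearOrder C] [Countable C]
    (hscat : Scattered C) (hrank : FiniteHausdorffRank C) :
    ∃ (k : ℕ) (D : Fin k → Type u) (instD : ∀ j, LinearOrder (D j)),
      (∀ j, Countable (D j)) ∧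
      (∀ j, @Scattered (D j) (instD j)) ∧
      (∀ j, @AddIndecomposable (D j) (instD j)) ∧
      (∀ j, @FiniteHausdorffRank (D j) (instD j)) ∧
      @Biembeddable C (Σₗ j : Fin k, D j) _ (@Sigma.Lex.linearOrder (Fin k) D _ instD) := by
  obtain ⟨n, hn⟩ := hrank
  obtain ⟨𝓕, h𝓕, h⟩ := exists_good.{u} n
  obtain ⟨k, c, hc, hk, hF⟩ := h C hn
  refine ⟨k, fun j => {x // c x = j}, fun j => inferInstance, fun j => inferInstance,
    fun j => ⟨fun e => hscat.false (e.trans (OrderEmbedding.subtype _))⟩, fun j => ?_,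
    fun j => ⟨n, hn.of_embedding (OrderEmbedding.subtype _)⟩, biembeddable_sigma_fibers hc hk⟩
  obtain ⟨F, hF, hj⟩ := hF j
  exact (h𝓕.indec F hF).of_biembeddable hj.symm
end

section
/- Let A and B be biembeddable countable chains. Then for every finite chain F and every t ∈ ℕ: F has big Ramsey degree at most t in A if and only if F has big Ramsey degree at most t in B; in particular, A has finite big Ramsey spectrum if and only if B has finite big Ramsey spectrum. -/
/-!
Conjugating by embeddings `f : A ↪o B` and `g : B ↪o A` turns a self-embedding `w` of `A` into the
self-embedding `f ∘ w ∘ g` of `B`.  Pulling colorings of copies of a chain back along `f`, this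
transfers bounds on big Ramsey degrees from `A` to `B`, and symmetrically from `B` to `A`; see
`BigRamseyDegLE.of_embeddings`.
-/

universe u v w

/-- Big Ramsey degrees transfer along a pair of embeddings `f : A ↪o B`, `g : B ↪o A`.  A coloring
`χ` of the copies of `F` in `B` is pulled back along `f` to a coloring of the copies in `A`; if
`w : A ↪o A` is good for the latter, then `f ∘ w ∘ g` is good for `χ`, because each copy
`f ∘ w ∘ g ∘ e` gets the color of the copy `w ∘ (g ∘ e)` in `A`. -/
theorem BigRamseyDegLE.of_embeddings {F : Type w} {A : Type u} {B : Type v}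
    [LinearOrder F] [LinearOrder A] [LinearOrder B] {t : ℕ} (f : A ↪o B) (g : B ↪o A)
    (hA : BigRamseyDegLE F A t) : BigRamseyDegLE F B t := by
  intro k χ
  obtain ⟨w, hw⟩ := hA k fun e => χ (e.trans f)
  refine ⟨(g.trans w).trans f, (Set.ncard_le_ncard ?_ (Set.toFinite _)).trans hw⟩
  rintro _ ⟨e, rfl⟩
  exact ⟨e.trans g, rfl⟩

/-- If `A` and `B` are biembeddable countable chains, then every finite chain `F` has big
Ramsey degree at most `t` in `A` iff it has big Ramsey degree at most `t` in `B`; in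
particular, `A` has finite big Ramsey spectrum iff `B` does. -/
theorem biembeddable_same_bigRamsey_degrees
    (A : Type u) (B : Type v) [LinearOrder A] [LinearOrder B]
    [Countable A] [Countable B] (h : Biembeddable A B) :
    (∀ (F : Type w) [LinearOrder F] [Finite F] (t : ℕ),
        BigRamseyDegLE F A t ↔ BigRamseyDegLE F B t) ∧
      ((∀ n : ℕ, 1 ≤ n → ∃ t : ℕ, BigRamseyDegLE (Fin n) A t) ↔
        (∀ n : ℕ, 1 ≤ n → ∃ t : ℕ, BigRamseyDegLE (Fin n) B t)) := by
  obtain ⟨⟨f⟩, ⟨g⟩⟩ := h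
  exact ⟨fun F _ _ t => ⟨.of_embeddings f g, .of_embeddings g f⟩,
    fun H n hn => (H n hn).imp fun _ => .of_embeddings f g,
    fun H n hn => (H n hn).imp fun _ => .of_embeddings g f⟩
end

section
/- Every countable non-scattered chain has finite big Ramsey spectrum; that is, if C is a countable chain into which ℚ order-embeds, then for every n ≥ 1 there exists t ∈ ℕ such that C ⟶ (C)^{n}_{k,t} for every k ∈ ℕ. -/
/-!
The chain `C` is coded by words over `{0, 1, 2}`: fixing an enumeration of `C`, the `j`-th letter of
the code of `c` tells whether `c` lies below or above the `j`-th point, and the first letter `1`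
marks the position of `c` itself. Cutting words before their first `1` and comparing them
lexicographically (`cutSeq`) recovers the order of `C`, and the countable chain of all such
sequences embeds into `ℚ`, hence into `C`.

A map on words given by an infinite parameter word (`IsBlockMap`) inserts, after each letter, a
block of letters that have occurred already. Hence it keeps the first difference of two codes and
the part before the first `1`, and so induces an embedding `w : C ↪o C` (`strictMono_cutSeq_row`).
An embedding `f : Fin n ↪o C` is coded by a word over the alphabet `Fin n → Fin 3`, and the tuple
`w ∘ f` by the image of this word under the block map.

So it suffices to find, for a finite coloring of the words over a finite alphabet, a block map after
which the color of a word depends only on the order in which its letters first occur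
(`exists_canonical`): the number of such orders does not depend on the number of colors. This is a
Ramsey theorem of Carlson–Simpson type. The core is `exists_stable`, which makes the color
insensitive to appending a letter that has already occurred. It comes from ultrafilters `ν j` on words
in the letters `0, …, j` starting with `j`, such that `ν j * ρ (ν (j + 1)) = ν j` for every renaming `ρ`
of `j + 1` to an older letter (`exists_ultrafilters`): each `ν j` is an idempotent in a minimal left
ideal of the semigroup of ultrafilters on such words, inside the left ideal generated by `ν (j - 1)`,
so that `ρ (ν (j + 1))` is an idempotent in the left ideal generated by `ν j`.
-/

universe u v

/-! ### Minimal left ideals and ultrafilters on words -/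

section Ultrafilters

/-- The words over `ℕ`, including the empty word, as a semigroup under concatenation. -/
@[reducible] def wordSemigroup : Semigroup (List ℕ) where
  mul := (· ++ ·)
  mul_assoc := List.append_assoc

attribute [local instance] wordSemigroup Ultrafilter.semigroup

/-- Let `T` be a closed subsemigroup of a compact right topological semigroup. Every closed left
ideal `J` of `T` contains a minimal one, `L`; by minimality `T * q = L` for every `q ∈ L`. -/
theorem exists_minimal_closed_leftIdeal {M : Type*} [Semigroup M] [TopologicalSpace M]
    [CompactSpace M] [T2Space M] (hc : ∀ r : M, Continuous (· * r)) (T J : Set M)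
    (hTc : IsClosed T) (hTn : T.Nonempty) (hTm : ∀ p ∈ T, ∀ q ∈ T, p * q ∈ T)
    (hJc : IsClosed J) (hJn : J.Nonempty) (hJm : ∀ p ∈ T, ∀ q ∈ J, p * q ∈ J) :
    ∃ L ⊆ J, IsClosed L ∧ L.Nonempty ∧ (∀ p ∈ T, ∀ q ∈ L, p * q ∈ L) ∧
      ∀ q ∈ L, ∀ p ∈ L, ∃ r ∈ T, p = r * q := by
  let S : Set (Set M) := {L | IsClosed L ∧ L.Nonempty ∧ ∀ p ∈ T, ∀ q ∈ L, p * q ∈ L}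
  obtain ⟨L, hLJ, hL⟩ := zorn_superset_nonempty S (by
    intro c hcS hch hcn
    have : Nonempty c := hcn.to_subtype
    refine ⟨⋂₀ c, ⟨isClosed_sInter fun t ht => (hcS ht).1, ?_, ?_⟩,
      fun s hs => Set.sInter_subset_of_mem hs⟩
    · refine IsCompact.nonempty_sInter_of_directed_nonempty_isCompact_isClosed ?_
        (fun U hU => (hcS hU).2.1) (fun U hU => (hcS hU).1.isCompact) (fun U hU => (hcS hU).1)
      intro a ha b hb
      rcases hch.total ha hb with h | h
      · exact ⟨a, ha, subset_rfl, h⟩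
      · exact ⟨b, hb, h, subset_rfl⟩
    · intro p hp q hq s hs
      exact (hcS hs).2.2 p hp q (hq s hs)) J ⟨hJc, hJn, hJm⟩
  obtain ⟨hL1, hL2, hL3⟩ := hL.prop
  refine ⟨L, hLJ, hL1, hL2, hL3, fun q hq p hp => ?_⟩
  have hsub : (fun r => r * q) '' T ⊆ L := by
    rintro _ ⟨r, hr, rfl⟩
    exact hL3 r hr q hq
  have hmem : (fun r => r * q) '' T ∈ S := by
    refine ⟨(hTc.isCompact.image (hc q)).isClosed, hTn.image _, ?_⟩
    rintro s hs _ ⟨r, hr, rfl⟩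
    exact ⟨s * r, hTm s hs r hr, mul_assoc s r q⟩
  obtain ⟨r, hr, h⟩ := hL.le_of_le hmem hsub hp
  exact ⟨r, hr, h.symm⟩

/-- The ultrafilters concentrating on words whose letters are all at most `j`. -/
def boundedUF (j : ℕ) : Set (Ultrafilter (List ℕ)) :=
  {p | ∀ᶠ w in (p : Filter (List ℕ)), ∀ l ∈ w, l ≤ j}

theorem isClosed_eventually (P : List ℕ → Prop) :
    IsClosed {p : Ultrafilter (List ℕ) | ∀ᶠ w in (p : Filter (List ℕ)), P w} :=
  ultrafilter_isClosed_basic {w | P w}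

theorem pure_mem_boundedUF {j : ℕ} {w : List ℕ} (h : ∀ l ∈ w, l ≤ j) :
    (pure w : Ultrafilter (List ℕ)) ∈ boundedUF j :=
  Ultrafilter.mem_pure.2 h

theorem boundedUF_mul {j : ℕ} {p q : Ultrafilter (List ℕ)} (hp : p ∈ boundedUF j)
    (hq : q ∈ boundedUF j) : p * q ∈ boundedUF j := by
  refine (Ultrafilter.eventually_mul p q _).2 ?_
  filter_upwards [hp] with u hu
  filter_upwards [hq] with v hv
  intro l hl
  rcases List.mem_append.1 hl with h | h
  · exact hu l h
  · exact hv l h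

theorem boundedUF_mono {i j : ℕ} (h : i ≤ j) : boundedUF i ⊆ boundedUF j := fun p hp => by
  filter_upwards [(show ∀ᶠ w in (p : Filter (List ℕ)), ∀ l ∈ w, l ≤ i from hp)] with u hu l hl
  exact (hu l hl).trans h

/-- The letter substitution replacing `j + 1` by `i`. -/
def ren (j i l : ℕ) : ℕ := if l = j + 1 then i else l

theorem map_mul_map (f : ℕ → ℕ) (p q : Ultrafilter (List ℕ)) :
    (p * q).map (List.map f) = p.map (List.map f) * q.map (List.map f) := by
  refine Ultrafilter.coe_inj.mp (Filter.ext' fun P => ?_)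
  rw [Ultrafilter.eventually_mul]
  simp only [Ultrafilter.coe_map, Filter.eventually_map]
  rw [Ultrafilter.eventually_mul]
  have : ∀ u v : List ℕ, (u * v).map f = u.map f * v.map f := fun u v => List.map_append
  simp only [this]

/-- The step from `p = ν (j - 1)` to `ν = ν j`. Inside the left ideal of the semigroup `boundedUF j`
generated by `p` there is a minimal left ideal, and `ν` is an idempotent in it concentrating on
words which start with `j`. By minimality, every idempotent in
the left ideal generated by `ν` fixes `ν` from the right. -/
theorem exists_next (j : ℕ) (p : Ultrafilter (List ℕ)) (hp : p ∈ boundedUF j) :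
    ∃ ν ∈ boundedUF j, (∃ r ∈ boundedUF j, ν = r * p) ∧
      (∀ᶠ w in (ν : Filter (List ℕ)), ∃ y, w = j :: y ∧ ∀ l ∈ y, l ≤ j) ∧ ν * ν = ν ∧
      ∀ q ∈ boundedUF j, q * q = q → (∃ r ∈ boundedUF j, q = r * ν) → ν * q = ν := by
  have hc := fun r : Ultrafilter (List ℕ) => Ultrafilter.continuous_mul_left r
  have hpure : (pure [j] : Ultrafilter (List ℕ)) ∈ boundedUF j :=
    pure_mem_boundedUF (by simp)
  have hTc : IsClosed (boundedUF j) := isClosed_eventually _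
  obtain ⟨L, hLJ, hLc, ⟨p₀, hp₀⟩, hLm, hmin⟩ := exists_minimal_closed_leftIdeal hc
    (boundedUF j) ((fun r => r * p) '' boundedUF j) hTc ⟨_, hpure⟩
    (fun p hp q hq => boundedUF_mul hp hq) (hTc.isCompact.image (hc p)).isClosed
    ⟨_, _, hpure, rfl⟩
    (by rintro s hs _ ⟨r, hr, rfl⟩; exact ⟨s * r, boundedUF_mul hs hr, mul_assoc s r p⟩)
  have hLT : L ⊆ boundedUF j := fun q hq => by
    obtain ⟨r, hr, rfl⟩ := hLJ hq
    exact boundedUF_mul hr hp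
  obtain ⟨ν, ⟨hνL, hνj⟩, hνi⟩ := exists_idempotent_in_compact_subsemigroup hc
    (L ∩ {q | ∀ᶠ w in (q : Filter (List ℕ)), ∃ y, w = j :: y})
    (by
      refine ⟨pure [j] * p₀, hLm _ hpure _ hp₀, ?_⟩
      refine (Ultrafilter.eventually_mul (pure [j]) p₀ fun w => ∃ y, w = j :: y).2 ?_
      exact Ultrafilter.mem_pure.2 (Filter.Eventually.of_forall fun v => ⟨v, rfl⟩))
    (hLc.inter (isClosed_eventually _)).isCompact
    (by
      rintro q ⟨hq, hqj⟩ s ⟨hs, hsj⟩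
      refine ⟨hLm _ (hLT hq) _ hs, (Ultrafilter.eventually_mul _ _ _).2 ?_⟩
      filter_upwards [hqj] with u hu
      obtain ⟨y, rfl⟩ := hu
      exact Filter.Eventually.of_forall fun v => ⟨y ++ v, rfl⟩)
  refine ⟨ν, hLT hνL, ?_, ?_, hνi, ?_⟩
  · obtain ⟨r, hr, h⟩ := hLJ hνL
    exact ⟨r, hr, h.symm⟩
  · filter_upwards [hνj,
      (show ∀ᶠ w in (ν : Filter (List ℕ)), ∀ l ∈ w, l ≤ j from hLT hνL)] with w hw hl
    obtain ⟨y, rfl⟩ := hw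
    exact ⟨y, rfl, fun l h => hl l (List.mem_cons_of_mem _ h)⟩
  · rintro q - hqi ⟨r, hr, hq⟩
    obtain ⟨s, -, hs⟩ := hmin q (hq ▸ hLm r hr ν hνL) ν hνL
    -- `ν` lies in the left ideal generated by the idempotent `q`, so `q` fixes it on the right.
    rw [hs, mul_assoc, hqi]

/-- There are ultrafilters `ν j` on the words which start with `j` and have all letters at most `j`
such that `ν j * ρ (ν (j + 1)) = ν j` whenever `ρ` renames the letter `j + 1` to some `i ≤ j`. -/
theorem exists_ultrafilters : ∃ ν : ℕ → Ultrafilter (List ℕ),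
    (∀ j, ∀ᶠ w in (ν j : Filter (List ℕ)), ∃ y, w = j :: y ∧ ∀ l ∈ y, l ≤ j) ∧
    ∀ j, ∀ i ≤ j, ∀ P : List ℕ → Prop, (∀ᶠ u in (ν j : Filter (List ℕ)), P u) →
      ∀ᶠ u in (ν j : Filter (List ℕ)), ∀ᶠ v in (ν (j + 1) : Filter (List ℕ)),
        P (u ++ v.map (ren j i)) := by
  choose! N hNb hNr hNj hNi hNm using exists_next
  obtain ⟨ν, h0, hsucc⟩ : ∃ ν : ℕ → Ultrafilter (List ℕ),
      ν 0 = N 0 (pure []) ∧ ∀ j, ν (j + 1) = N (j + 1) (ν j) :=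
    ⟨fun j => Nat.rec (N 0 (pure [])) (fun j p => N (j + 1) p) j, rfl, fun _ => rfl⟩
  have hpure : (pure [] : Ultrafilter (List ℕ)) ∈ boundedUF 0 :=
    pure_mem_boundedUF (by simp)
  have hb : ∀ j, ν j ∈ boundedUF j := by
    intro j
    induction j with
    | zero => exact h0 ▸ hNb 0 _ hpure
    | succ j ih => exact hsucc j ▸ hNb _ _ (boundedUF_mono (Nat.le_succ j) ih)
  have hb' : ∀ j, ν j ∈ boundedUF (j + 1) := fun j => boundedUF_mono (Nat.le_succ j) (hb j)
  refine ⟨ν, fun j => ?_, fun j i hij P hP => ?_⟩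
  · cases j with
    | zero => exact h0 ▸ hNj 0 _ hpure
    | succ j => exact hsucc j ▸ hNj _ _ (hb' j)
  have hren : ∀ r ∈ boundedUF (j + 1), r.map (List.map (ren j i)) ∈ boundedUF j := by
    intro r hr
    change ∀ᶠ w in Filter.map _ _, _
    rw [Filter.eventually_map]
    filter_upwards [
      (show ∀ᶠ w in (r : Filter (List ℕ)), ∀ l ∈ w, l ≤ j + 1 from hr)] with w hw l hl
    obtain ⟨k, hk, rfl⟩ := List.mem_map.1 hl
    have := hw k hk
    unfold ren
    split_ifs <;> omega
  have hfix : (ν j).map (List.map (ren j i)) = ν j := by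
    refine Ultrafilter.coe_inj.mp ?_
    rw [Ultrafilter.coe_map]
    refine (Filter.map_congr ?_).trans Filter.map_id
    have hbj : ∀ᶠ w in (ν j : Filter (List ℕ)), ∀ l ∈ w, l ≤ j := hb j
    filter_upwards [hbj] with w hw
    refine (List.map_congr_left fun l hl => ?_).trans (List.map_id w)
    have := hw l hl
    unfold ren
    rw [if_neg (by omega)]; rfl
  have hidem : ν (j + 1) * ν (j + 1) = ν (j + 1) :=
    hsucc j ▸ hNi _ _ (hb' j)
  have key : ν j * (ν (j + 1)).map (List.map (ren j i)) = ν j := by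
    have h1 : ∀ q ∈ boundedUF j, q * q = q → (∃ r ∈ boundedUF j, q = r * ν j) →
        ν j * q = ν j := by
      cases j with
      | zero => exact h0 ▸ hNm 0 _ hpure
      | succ j => exact hsucc j ▸ hNm _ _ (hb' j)
    refine h1 _ (hren _ (hb _)) ?_ ?_
    · rw [← map_mul_map, hidem]
    · obtain ⟨r, hr, h⟩ := hNr (j + 1) (ν j) (hb' j)
      refine ⟨_, hren r hr, ?_⟩
      rw [hsucc, h, map_mul_map, hfix]
  rw [← key] at hP
  have := (Ultrafilter.eventually_mul _ _ _).1 hP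
  filter_upwards [this] with u hu
  exact Filter.eventually_map.1 hu

end Ultrafilters

/-! ### Block maps and stable colorings -/

/-- The word `x` with each letter `i` replaced by the `i`-th letter of `U`; letters which are not
positions of `U` are deleted. -/
def sub {α : Type} (U : List α) (x : List ℕ) : List α := x.filterMap (U[·]?)

theorem sub_append {α : Type} (U : List α) (x y : List ℕ) :
    sub U (x ++ y) = sub U x ++ sub U y := List.filterMap_append

theorem sub_map {α β : Type} (g : α → β) (U : List α) (x : List ℕ) :
    sub (U.map g) x = (sub U x).map g := by
  simp [sub, List.map_filterMap]

theorem sub_subset {α : Type} (U : List α) (x : List ℕ) : ∀ a ∈ sub U x, a ∈ U := by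
  intro a ha
  obtain ⟨i, -, hi⟩ := List.mem_filterMap.1 ha
  exact List.mem_of_getElem? hi

theorem sub_snoc_of_lt {α : Type} (U : List α) (a : α) (x : List ℕ) (hx : ∀ l ∈ x, l < U.length) :
    sub (U ++ [a]) x = sub U x :=
  List.filterMap_congr fun l hl => List.getElem?_append_left (hx l hl)

/-- Appending to `U` a letter which it already has in position `i` is the same as renaming the
new letter to `i`. -/
theorem sub_snoc_of_getElem? {α : Type} (U : List α) (a : α) (j i : ℕ) (hU : U.length = j + 1)
    (hi : U[i]? = some a) (x : List ℕ) : sub (U ++ [a]) x = sub U (x.map (ren j i)) := by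
  unfold sub
  rw [List.filterMap_map]
  refine List.filterMap_congr fun l _ => ?_
  simp only [Function.comp, ren]
  split_ifs with h
  · rw [hi, h, ← hU]; simp
  · rcases Nat.lt_or_gt_of_ne h with h | h
    · exact List.getElem?_append_left (by omega)
    · rw [List.getElem?_eq_none (by simp; omega), List.getElem?_eq_none (by omega)]

/-- The maps on words (over all alphabets simultaneously) given by an infinite parameter word:
they commute with letter-to-letter maps, preserve prefixes, and appending the letter `a` to the
argument appends to the value a block which starts with `a` and uses no letter that does not
occur in the argument. -/
structure IsBlockMap (φ : ∀ α : Type, List α → List α) : Prop where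
  nil : ∀ α : Type, φ α [] = []
  map : ∀ {α β : Type} (g : α → β) (U : List α), φ β (U.map g) = (φ α U).map g
  snoc : ∀ {α : Type} (U : List α) (a : α), ∃ X, φ α (U ++ [a]) = φ α U ++ a :: X ∧
    ∀ x ∈ X, x ∈ U ++ [a]

theorem exists_eventually_eq {β κ : Type} [Finite κ] (p : Ultrafilter β) (h : β → κ) :
    ∃ c, ∀ᶠ u in (p : Filter β), h u = c := by
  obtain ⟨c, hc⟩ := Ultrafilter.eq_pure_of_finite (p.map h)
  refine ⟨c, ?_⟩
  have : ({c} : Set κ) ∈ p.map h := by rw [hc]; exact Ultrafilter.mem_pure.2 rfl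
  exact this

/-- Some block map makes the color stable under appending a letter which already occurs. The
infinite parameter word is `v 0 ++ v 1 ++ ⋯`, where `v j` is chosen generic for `ν j`: for every
`U` of length `j + 1`, the color of `x j ++ v j`, where `x j = v 0 ++ ⋯ ++ v (j - 1)`, is the color of
`x j ++ u` for `ν j`-almost every `u`, and it is the color of `x j ++ v j ++ z` for almost every `z`
obtained from a `ν (j + 1)`-random word by renaming the letter `j + 1` to an old one. -/
theorem exists_stable {σ κ : Type} [Finite σ] [Finite κ] (χ : List σ → κ) :
    ∃ φ : ∀ α : Type, List α → List α, IsBlockMap φ ∧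
      ∀ (U : List σ) (b : σ), b ∈ U → χ (φ σ (U ++ [b])) = χ (φ σ U) := by
  obtain ⟨ν, hν, hνν⟩ := exists_ultrafilters
  have step : ∀ (j : ℕ) (x : List ℕ), ∃ v : List ℕ, (∃ y, v = j :: y ∧ ∀ l ∈ y, l ≤ j) ∧
      ∀ U ∈ {U : List σ | U.length = j + 1}, ∃ c,
        (∀ᶠ u in (ν j : Filter (List ℕ)), χ (sub U (x ++ u)) = c) ∧ χ (sub U (x ++ v)) = c ∧
        ∀ i ∈ Set.Iic j, ∀ᶠ u in (ν (j + 1) : Filter (List ℕ)),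
          χ (sub U (x ++ (v ++ u.map (ren j i)))) = c := by
    intro j x
    refine Filter.Eventually.exists (f := (ν j : Filter (List ℕ))) ((hν j).and ?_)
    rw [Filter.eventually_all_finite (List.finite_length_eq σ (j + 1))]
    intro U _
    obtain ⟨c, hc⟩ := exists_eventually_eq (ν j) fun u => χ (sub U (x ++ u))
    have h2 : ∀ᶠ v in (ν j : Filter (List ℕ)), ∀ i ∈ Set.Iic j,
        ∀ᶠ u in (ν (j + 1) : Filter (List ℕ)),
          χ (sub U (x ++ (v ++ u.map (ren j i)))) = c := by
      rw [Filter.eventually_all_finite (Set.finite_Iic j)]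
      exact fun i hi => hνν j i hi (fun w => χ (sub U (x ++ w)) = c) hc
    filter_upwards [hc, h2] with v h1 h2
    exact ⟨c, hc, h1, h2⟩
  choose v hv hvc using step
  obtain ⟨x, hx0, hx⟩ : ∃ x : ℕ → List ℕ, x 0 = [] ∧ ∀ j, x (j + 1) = x j ++ v j (x j) :=
    ⟨fun j => Nat.rec [] (fun j y => y ++ v j y) j, rfl, fun _ => rfl⟩
  have hlt : ∀ j, ∀ l ∈ x j, l < j := by
    intro j
    induction j with
    | zero => simp [hx0]
    | succ j ih =>
      intro l hl
      rw [hx] at hl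
      obtain ⟨y, hy, hyl⟩ := hv j (x j)
      rcases List.mem_append.1 hl with h | h
      · exact (ih l h).trans (Nat.lt_succ_self j)
      · rw [hy] at h
        rcases List.mem_cons.1 h with rfl | h
        · exact Nat.lt_succ_self _
        · exact Nat.lt_succ_of_le (hyl l h)
  refine ⟨fun α U => sub U (x U.length), ⟨?_, ?_, ?_⟩, ?_⟩
  · intro α; simp [sub]
  · intro α β g U
    rw [List.length_map, sub_map]
  · intro α U a
    obtain ⟨y, hy, -⟩ := hv U.length (x U.length)
    refine ⟨sub (U ++ [a]) y, ?_, sub_subset _ _⟩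
    rw [List.length_append, List.length_singleton, hx, sub_append, hy,
      sub_snoc_of_lt _ _ _ (hlt _)]
    simp [sub]
  · intro U b hb
    obtain ⟨i, hi⟩ := List.getElem?_of_mem hb
    obtain ⟨j, hj⟩ : ∃ j, U.length = j + 1 :=
      Nat.exists_eq_succ_of_ne_zero (by rintro h; simp [List.length_eq_zero_iff.1 h] at hb)
    have hij : i ≤ j := by
      have := (List.getElem?_eq_some_iff.1 hi).1
      omega
    obtain ⟨c, -, h1, h2⟩ := hvc j (x j) U hj
    obtain ⟨c', h3, h4, -⟩ := hvc (j + 1) (x (j + 1)) (U ++ [b]) (by simp [hj])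
    -- Both ultrafilter limits are taken along `ν (j + 1)` of the same function.
    have hfix : sub (U ++ [b]) (x (j + 1)) = sub U (x (j + 1)) :=
      sub_snoc_of_lt _ _ _ (hj ▸ hlt (j + 1))
    obtain ⟨u, hu, hu'⟩ := ((h2 i hij).and h3).exists
    rw [sub_append, hfix, sub_snoc_of_getElem? U b j i hj hi, ← sub_append, hx,
      List.append_assoc, hu] at hu'
    change χ (sub (U ++ [b]) (x (U ++ [b]).length)) = χ (sub U (x U.length))
    rw [List.length_append, List.length_singleton, hj, hx (j + 1), h4, hx j, h1, hu']

namespace IsBlockMap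

variable {φ ψ : ∀ α : Type, List α → List α}

theorem append (hφ : IsBlockMap φ) {α : Type} (U V : List α) :
    ∃ X, φ α (U ++ V) = φ α U ++ X ∧ ∀ x ∈ X, x ∈ U ++ V := by
  induction V using List.reverseRecOn with
  | nil => exact ⟨[], by simp⟩
  | append_singleton V a ih =>
    obtain ⟨X, hX, hX'⟩ := ih
    obtain ⟨Y, hY, hY'⟩ := hφ.snoc (U ++ V) a
    refine ⟨X ++ a :: Y, by rw [← List.append_assoc, hY, hX, List.append_assoc], ?_⟩
    intro x hx
    rw [← List.append_assoc]
    rcases List.mem_append.1 hx with h | h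
    · exact List.mem_append_left _ (hX' x h)
    · rcases List.mem_cons.1 h with rfl | h
      · simp
      · exact hY' x h

theorem mem_of_mem (hφ : IsBlockMap φ) {α : Type} (U : List α) {a : α} (h : a ∈ φ α U) :
    a ∈ U := by
  obtain ⟨X, hX, hX'⟩ := hφ.append [] U
  rw [List.nil_append, hφ.nil, List.nil_append] at hX
  exact hX' a (hX ▸ h)

theorem append_cons (hφ : IsBlockMap φ) {α : Type} (U V : List α) (a : α) :
    ∃ X, φ α (U ++ a :: V) = φ α U ++ a :: X := by
  obtain ⟨X, hX, -⟩ := hφ.snoc U a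
  obtain ⟨Y, hY, -⟩ := hφ.append (U ++ [a]) V
  exact ⟨X ++ Y, by rw [List.append_cons, hY, hX]; simp⟩

theorem mem (hφ : IsBlockMap φ) {α : Type} {U : List α} {a : α} (h : a ∈ U) : a ∈ φ α U := by
  obtain ⟨V, V', rfl⟩ := List.append_of_mem h
  obtain ⟨X, hX⟩ := hφ.append_cons V V' a
  rw [hX]; simp

theorem comp (hφ : IsBlockMap φ) (hψ : IsBlockMap ψ) :
    IsBlockMap fun α U => φ α (ψ α U) where
  nil α := by rw [hψ.nil, hφ.nil]
  map g U := by rw [hψ.map, hφ.map]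
  snoc U a := by
    obtain ⟨X, hX, hX'⟩ := hψ.snoc U a
    obtain ⟨Y, hY, hY'⟩ := hφ.snoc (ψ _ U) a
    obtain ⟨Z, hZ, hZ'⟩ := hφ.append (ψ _ U ++ [a]) X
    have h1 : ∀ x ∈ ψ _ U ++ [a], x ∈ U ++ [a] := by
      intro x hx
      rcases List.mem_append.1 hx with h | h
      · exact List.mem_append_left _ (hψ.mem_of_mem U h)
      · exact List.mem_append_right _ h
    refine ⟨Y ++ Z, by rw [hX, List.append_cons, hZ, hY]; simp, fun x hx => ?_⟩
    rcases List.mem_append.1 hx with h | h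
    · exact h1 x (hY' x h)
    · rcases List.mem_append.1 (hZ' x h) with h | h
      · exact h1 x h
      · exact hX' x h

end IsBlockMap

theorem isBlockMap_id : IsBlockMap fun _ U => U where
  nil _ := rfl
  map _ _ := rfl
  snoc U a := ⟨[], by simp⟩

/-! ### Order of first occurrence and canonical colorings -/

theorem stable_append {σ κ : Type} {χ : List σ → κ}
    (hχ : ∀ U b, b ∈ U → χ (U ++ [b]) = χ U) (U X : List σ)
    (hX : ∀ x ∈ X, x ∈ U) : χ (U ++ X) = χ U := by
  induction X using List.reverseRecOn with
  | nil => simp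
  | append_singleton X a ih =>
    rw [← List.append_assoc, hχ _ _ (List.mem_append_left _ (hX a (by simp)))]
    exact ih fun x hx => hX x (by simp [hx])

section FirstOcc

variable {σ : Type} [DecidableEq σ]

/-- The letters of a word in the order of their first occurrences. -/
def firstOcc (U : List σ) : List σ := U.reverse.dedup.reverse

theorem firstOcc_snoc (U : List σ) (a : σ) :
    firstOcc (U ++ [a]) = if a ∈ U then firstOcc U else firstOcc U ++ [a] := by
  unfold firstOcc
  rw [List.reverse_append, List.reverse_singleton, List.singleton_append]
  split_ifs with h
  · rw [List.dedup_cons_of_mem (by simpa using h)]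
  · rw [List.dedup_cons_of_notMem (by simpa using h), List.reverse_cons]

theorem nodup_firstOcc (U : List σ) : (firstOcc U).Nodup :=
  List.nodup_reverse.2 (List.nodup_dedup _)

theorem firstOcc_eq_nil {U : List σ} (h : firstOcc U = []) : U = [] := by
  by_contra hU
  obtain ⟨a, ha⟩ := List.exists_mem_of_ne_nil U hU
  have : a ∈ firstOcc U := by simpa [firstOcc] using ha
  simp [h] at this

/-- A coloring which does not change when an old letter is appended only depends on the shortest
prefix containing all letters. -/
theorem exists_core {κ : Type} (χ : List σ → κ) (hχ : ∀ U b, b ∈ U → χ (U ++ [b]) = χ U)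
    (U : List σ) (hU : U ≠ []) :
    ∃ U₀ a, firstOcc U = firstOcc U₀ ++ [a] ∧ χ U = χ (U₀ ++ [a]) := by
  induction U using List.reverseRecOn with
  | nil => exact absurd rfl hU
  | append_singleton U b ih =>
    by_cases hb : b ∈ U
    · obtain ⟨U₀, a, h1, h2⟩ := ih (List.ne_nil_of_mem hb)
      exact ⟨U₀, a, by rw [firstOcc_snoc, if_pos hb, h1], by rw [hχ U b hb, h2]⟩
    · exact ⟨U, b, by rw [firstOcc_snoc, if_neg hb], rfl⟩

/-- The canonical form of a coloring on words with at most `k` different letters. A stable color of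
`U` is determined by the last first occurrence, that is, by a prefix `U₀` with fewer letters and
the new letter `a` following it; the induction hypothesis is applied to the function which sends
`U₀` to the colors for all `a`. -/
theorem exists_canonical_of_length_le [Finite σ] (k : ℕ) :
    ∀ {κ : Type} [Finite κ] (χ : List σ → κ), ∃ φ : ∀ α : Type, List α → List α, IsBlockMap φ ∧
      ∀ U V : List σ, (firstOcc U).length ≤ k → firstOcc U = firstOcc V →
        χ (φ σ U) = χ (φ σ V) := by
  induction k with
  | zero =>
    intro κ _ χ
    refine ⟨_, isBlockMap_id, fun U V hU hUV => ?_⟩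
    have h := List.length_eq_zero_iff.1 (Nat.le_zero.1 hU)
    rw [firstOcc_eq_nil h, firstOcc_eq_nil (hUV.symm.trans h)]
  | succ k ih =>
    intro κ _ χ
    obtain ⟨φ, hφ, hφs⟩ := exists_stable χ
    obtain ⟨ψ, hψ, hψc⟩ := ih fun U a => χ (φ σ (U ++ [a]))
    refine ⟨_, hφ.comp hψ, fun U V hU hUV => ?_⟩
    have hst : ∀ U X : List σ, (∀ x ∈ X, x ∈ U) → χ (φ σ (U ++ X)) = χ (φ σ U) :=
      stable_append (χ := fun U => χ (φ σ U)) hφs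
    have hsnoc : ∀ U a, χ (φ σ (ψ σ (U ++ [a]))) = χ (φ σ (ψ σ U ++ [a])) := by
      intro U a
      obtain ⟨X, hX, hX'⟩ := hψ.snoc U a
      rw [hX, List.append_cons]
      refine hst _ _ fun x hx => ?_
      rcases List.mem_append.1 (hX' x hx) with h | h
      · exact List.mem_append_left _ (hψ.mem h)
      · exact List.mem_append_right _ h
    have hs : ∀ U b, b ∈ U → χ (φ σ (ψ σ (U ++ [b]))) = χ (φ σ (ψ σ U)) := by
      intro U b hb
      rw [hsnoc, hφs _ _ (hψ.mem hb)]
    rcases eq_or_ne U [] with rfl | hU0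
    · rw [firstOcc_eq_nil (hUV.symm.trans rfl : firstOcc V = [])]
    have hV0 : V ≠ [] := by
      rintro rfl
      exact hU0 (firstOcc_eq_nil hUV)
    obtain ⟨U₀, a, hUa, hU'⟩ := exists_core (fun U => χ (φ σ (ψ σ U))) hs U hU0
    obtain ⟨V₀, b, hVb, hV'⟩ := exists_core (fun U => χ (φ σ (ψ σ U))) hs V hV0
    rw [hUa, hVb] at hUV
    obtain ⟨h0, hab⟩ := List.append_inj' hUV rfl
    obtain rfl : a = b := by simpa using hab
    have hlen : (firstOcc U₀).length ≤ k := by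
      rw [hUa] at hU
      simpa using hU
    change χ (φ σ (ψ σ U)) = χ (φ σ (ψ σ V))
    rw [show χ (φ σ (ψ σ U)) = _ from hU', show χ (φ σ (ψ σ V)) = _ from hV', hsnoc, hsnoc]
    exact congrFun (hψc U₀ V₀ hlen h0) a

/-- Every finite coloring of the words over a finite alphabet depends, after restriction to the
image of a block map, only on the order in which the letters first occur. -/
theorem exists_canonical [Finite σ] {κ : Type} [Finite κ] (χ : List σ → κ) :
    ∃ φ : ∀ α : Type, List α → List α, IsBlockMap φ ∧
      ∀ U V : List σ, firstOcc U = firstOcc V → χ (φ σ U) = χ (φ σ V) := by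
  have := Fintype.ofFinite σ
  obtain ⟨φ, hφ, h⟩ := exists_canonical_of_length_le (Fintype.card σ) χ
  exact ⟨φ, hφ, fun U V => h U V (nodup_firstOcc U).length_le_card⟩

end FirstOcc

/-! ### Coding a countable chain by words -/

/-- The word over `Fin 3` is cut before its first letter `1` and then continued by infinitely many
letters `1`; the resulting sequences are ordered lexicographically. -/
def cutSeq (l : List (Fin 3)) : Lex (ℕ → Fin 3) :=
  toLex fun j => (l.takeWhile (· ≠ 1)).getD j 1

theorem takeWhile_append_of_ne {q : List (Fin 3)} (hq : ∀ x ∈ q, x ≠ 1) (s : List (Fin 3)) :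
    (q ++ s).takeWhile (· ≠ 1) = q ++ s.takeWhile (· ≠ 1) :=
  List.takeWhile_append_of_pos fun x hx => by simpa using hq x hx

theorem cutSeq_append_one {q : List (Fin 3)} (hq : ∀ x ∈ q, x ≠ 1) (s : List (Fin 3)) :
    cutSeq (q ++ 1 :: s) = cutSeq q := by
  have h := takeWhile_append_of_ne hq []
  unfold cutSeq
  rw [takeWhile_append_of_ne hq, ← List.append_nil q, takeWhile_append_of_ne hq]
  simp

theorem cutSeq_lt {q : List (Fin 3)} (hq : ∀ x ∈ q, x ≠ 1) {a b : Fin 3} (hab : a < b)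
    (s s' : List (Fin 3)) : cutSeq (q ++ a :: s) < cutSeq (q ++ b :: s') := by
  have key : ∀ (c : Fin 3) (s : List (Fin 3)),
      ((q ++ c :: s).takeWhile (· ≠ 1)).getD q.length 1 = c := by
    intro c s
    rw [takeWhile_append_of_ne hq]
    by_cases hc : c = 1 <;> simp [hc]
  refine ⟨q.length, fun j hj => ?_, ?_⟩
  · change ((q ++ a :: s).takeWhile (· ≠ 1)).getD j 1 = ((q ++ b :: s').takeWhile (· ≠ 1)).getD j 1
    rw [takeWhile_append_of_ne hq, takeWhile_append_of_ne hq,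
      List.getD_append _ _ _ _ hj, List.getD_append _ _ _ _ hj]
  · change ((q ++ a :: s).takeWhile (· ≠ 1)).getD q.length 1
      < ((q ++ b :: s').takeWhile (· ≠ 1)).getD q.length 1
    rwa [key, key]

section Coding

variable {C : Type u} [LinearOrder C] {e : ℕ → C}

open Classical in
/-- The position of `c` in the enumeration `e`. -/
noncomputable def idx (he : Function.Surjective e) (c : C) : ℕ := Nat.find (he c)

theorem idx_spec (he : Function.Surjective e) (c : C) : e (idx he c) = c := by
  classical exact Nat.find_spec (he c)

theorem ne_of_lt_idx (he : Function.Surjective e) {c : C} {j : ℕ} (h : j < idx he c) : e j ≠ c := by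
  classical exact Nat.find_min (he c) h

/-- The code of a point `c`: the letter in position `j` tells whether `c` lies below (`0`) or above
(`2`) the `j`-th point of the enumeration, until this point is `c` itself; from then on all
letters are `1`. -/
noncomputable def code (he : Function.Surjective e) (c : C) (j : ℕ) : Fin 3 :=
  if j < idx he c then (if c < e j then 0 else 2) else 1

theorem code_ne_one (he : Function.Surjective e) {c : C} {j : ℕ} (h : j < idx he c) :
    code he c j ≠ 1 := by
  unfold code
  rw [if_pos h]
  split_ifs <;> decide

theorem code_eq_one (he : Function.Surjective e) {c : C} {j : ℕ} (h : idx he c ≤ j) :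
    code he c j = 1 := if_neg h.not_gt

/-- The initial segment of length `M` of the code of `c`. -/
noncomputable def row (he : Function.Surjective e) (c : C) (M : ℕ) : List (Fin 3) :=
  (List.range M).map (code he c)

theorem row_eq_append (he : Function.Surjective e) (c : C) {m M : ℕ} (h : m < M) :
    ∃ s, row he c M = row he c m ++ code he c m :: s := by
  obtain ⟨d, rfl⟩ := Nat.exists_eq_add_of_lt h
  refine ⟨(List.range d).map fun i => code he c (m + 1 + i), ?_⟩
  rw [show m + d + 1 = m + (1 + d) by omega]
  simp [row, List.range_add, List.range_succ, Function.comp_def, Nat.add_assoc]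

theorem ne_one_of_mem_row (he : Function.Surjective e) {c : C} {m : ℕ} (h : m ≤ idx he c) :
    ∀ x ∈ row he c m, x ≠ 1 := by
  intro x hx
  obtain ⟨j, hj, rfl⟩ := List.mem_map.1 hx
  exact code_ne_one he ((List.mem_range.1 hj).trans_le h)

/-- The codes of two points agree until one of the points is reached or a point between them is
enumerated, and at this position they compare like the points. -/
theorem exists_code_lt (he : Function.Surjective e) {c c' : C} (h : c < c') :
    ∃ m, m ≤ idx he c ∧ m ≤ idx he c' ∧ row he c m = row he c' m ∧
      code he c m < code he c' m := by
  have hone : ∀ {c j}, code he c j = 1 ↔ idx he c ≤ j := fun {c j} =>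
    ⟨fun h1 => le_of_not_gt fun h2 => code_ne_one he h2 h1, code_eq_one he⟩
  have hex : ∃ m, code he c m ≠ code he c' m := by
    by_contra! hall
    have hidx : idx he c = idx he c' :=
      le_antisymm (hone.1 ((hall _).trans (hone.2 le_rfl)))
        (hone.1 ((hall _).symm.trans (hone.2 le_rfl)))
    exact h.ne (by rw [← idx_spec he c, hidx, idx_spec he c'])
  classical
  obtain ⟨m, hm, hmin⟩ : ∃ m, code he c m ≠ code he c' m ∧
      ∀ j < m, code he c j = code he c' j :=
    ⟨_, Nat.find_spec hex, fun j hj => by simpa using Nat.find_min hex hj⟩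
  -- If the first difference came after one of the points, the other would have been reached too.
  have hle : m ≤ idx he c := by
    by_contra! hlt
    have h2 := (hmin _ hlt).symm.trans (hone.2 le_rfl)
    exact hm ((hone.2 hlt.le).trans (hone.2 ((hone.1 h2).trans hlt.le)).symm)
  have hle' : m ≤ idx he c' := by
    by_contra! hlt
    have h2 := (hmin _ hlt).trans (hone.2 le_rfl)
    exact hm ((hone.2 ((hone.1 h2).trans hlt.le)).trans (hone.2 hlt.le).symm)
  refine ⟨m, hle, hle', List.map_congr_left fun j hj => hmin j (List.mem_range.1 hj), ?_⟩
  rcases hle.eq_or_lt with h1 | h1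
  · have hc : e m = c := by rw [h1, idx_spec he]
    have h2 : m < idx he c' := by
      refine hle'.lt_of_ne fun h2 => h.ne ?_
      rw [← hc, h2, idx_spec he]
    rw [hone.2 h1.ge, code, if_pos h2, if_neg (hc ▸ h.not_gt)]
    decide
  · rcases hle'.eq_or_lt with h2 | h2
    · have hc : e m = c' := by rw [h2, idx_spec he]
      rw [hone.2 h2.ge, code, if_pos h1, if_pos (hc ▸ h)]
      decide
    · unfold code at hm ⊢
      rw [if_pos h1, if_pos h2] at hm ⊢
      by_cases h3 : c' < e m
      · exact absurd (by rw [if_pos (h.trans h3), if_pos h3]) hm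
      · by_cases h4 : c < e m
        · rw [if_pos h4, if_neg h3]; decide
        · exact absurd (by rw [if_neg h4, if_neg h3]) hm

variable {φ : ∀ α : Type, List α → List α}

/-- The choice of the length `M` does not matter as long as the word contains the cutting point. -/
theorem cutSeq_row_eq (he : Function.Surjective e) (hφ : IsBlockMap φ) (c : C) {M : ℕ}
    (h : idx he c < M) : cutSeq (φ _ (row he c M)) = cutSeq (φ _ (row he c (idx he c))) := by
  obtain ⟨s, hs⟩ := row_eq_append he c h
  obtain ⟨X, hX⟩ := hφ.append_cons (row he c (idx he c)) s (code he c (idx he c))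
  rw [hs, hX, code_eq_one he le_rfl]
  exact cutSeq_append_one (fun x hx => ne_one_of_mem_row he le_rfl x (hφ.mem_of_mem _ hx)) X

theorem strictMono_cutSeq_row (he : Function.Surjective e) (hφ : IsBlockMap φ) :
    StrictMono fun c => cutSeq (φ _ (row he c (idx he c))) := by
  intro c c' h
  obtain ⟨m, hm, hm', hrow, hlt⟩ := exists_code_lt he h
  obtain ⟨M, hM⟩ : ∃ M, M = max (idx he c) (idx he c') + 1 := ⟨_, rfl⟩
  have h1 : idx he c < M := by omega
  have h2 : idx he c' < M := by omega
  change cutSeq _ < cutSeq _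
  rw [← cutSeq_row_eq he hφ c h1, ← cutSeq_row_eq he hφ c' h2]
  obtain ⟨s, hs⟩ := row_eq_append he c (hm.trans_lt h1)
  obtain ⟨s', hs'⟩ := row_eq_append he c' (hm'.trans_lt h2)
  obtain ⟨X, hX⟩ := hφ.append_cons (row he c m) s (code he c m)
  obtain ⟨X', hX'⟩ := hφ.append_cons (row he c' m) s' (code he c' m)
  rw [hs, hs', hX, hX', ← hrow]
  exact cutSeq_lt (fun x hx => ne_one_of_mem_row he hm x (hφ.mem_of_mem _ hx)) hlt X X'

end Coding

/-! ### Counting the colors of tuples -/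

/-- Every countable non-scattered chain has finite big Ramsey spectrum: if ℚ order-embeds
into a countable chain `C`, then for every `n ≥ 1` there is `t ∈ ℕ` such that
`C ⟶ (C)^n_{k,t}` for every `k ∈ ℕ`. -/
theorem nonscattered_finite_bigRamsey_spectrum
    (C : Type u) [LinearOrder C] [Countable C] (h : Nonempty (ℚ ↪o C)) :
    ∀ n : ℕ, 1 ≤ n → ∃ t : ℕ, ∀ (k : ℕ) (χ : (Fin n ↪o C) → Fin k),
      ∃ w : C ↪o C, (Set.range fun f : Fin n ↪o C => χ (f.trans w)).ncard ≤ t := by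
  classical
  obtain ⟨ι⟩ := h
  have : Nonempty C := ⟨ι 0⟩
  obtain ⟨e, he⟩ := exists_surjective_nat C
  intro n _
  refine ⟨Fintype.card {l : List (Fin n → Fin 3) // l.Nodup}, fun k χ => ?_⟩
  have : Countable (Set.range cutSeq) := Set.countable_range cutSeq
  obtain ⟨g⟩ := Order.embedding_from_countable_to_dense (Set.range cutSeq) ℚ
  let G : List (Fin 3) → C := fun l => ι (g ⟨cutSeq l, l, rfl⟩)
  have hG : ∀ {l l'}, cutSeq l < cutSeq l' → G l < G l' := fun h =>
    ι.strictMono (g.strictMono h)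
  have hG' : ∀ {l l'}, cutSeq l = cutSeq l' → G l = G l' := fun h =>
    congrArg (fun z => ι (g z)) (Subtype.ext h)
  -- A word over `Fin n → Fin 3` is an `n`-tuple of words over `Fin 3`; it is colored by `χ` when
  -- this tuple represents an increasing `n`-tuple of points.
  let χ' : List (Fin n → Fin 3) → Option (Fin k) := fun V =>
    if hV : StrictMono fun t => G (V.map (· t)) then
      some (χ (OrderEmbedding.ofStrictMono _ hV)) else none
  obtain ⟨φ, hφ, hχ⟩ := exists_canonical χ'
  let w : C ↪o C := OrderEmbedding.ofStrictMono (fun c => G (φ _ (row he c (idx he c))))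
    fun c c' h => hG (strictMono_cutSeq_row he hφ h)
  refine ⟨w, ?_⟩
  have key : ∀ f : Fin n ↪o C, ∃ U, χ' (φ _ U) = some (χ (f.trans w)) := by
    intro f
    obtain ⟨M, hM⟩ : ∃ M, ∀ t, idx he (f t) < M := by
      obtain ⟨M, hM⟩ := (Set.finite_range fun t => idx he (f t)).bddAbove
      exact ⟨M + 1, fun t => Nat.lt_succ_of_le (hM ⟨t, rfl⟩)⟩
    let U : List (Fin n → Fin 3) := (List.range M).map fun j t => code he (f t) j
    have hw : (fun t => G ((φ _ U).map (· t))) = fun t => w (f t) := by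
      funext t
      have hU : U.map (· t) = row he (f t) M := by simp [U, row, Function.comp_def]
      rw [← hφ.map, hU]
      exact hG' (cutSeq_row_eq he hφ _ (hM t))
    have hmono : StrictMono fun t => G ((φ _ U).map (· t)) := by
      rw [hw]; exact w.strictMono.comp f.strictMono
    refine ⟨U, (dif_pos hmono).trans (congrArg (fun z => some (χ z)) ?_)⟩
    ext t
    exact congrFun hw t
  choose U hU using key
  -- The color of `w ∘ f` is determined by the order of the first occurrences in `U f`.
  have hdet : ∀ f f', firstOcc (U f) = firstOcc (U f') → χ (f.trans w) = χ (f'.trans w) := by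
    intro f f' h
    have := hχ _ _ h
    rwa [hU, hU, Option.some_inj] at this
  let T : (Fin n ↪o C) → {l : List (Fin n → Fin 3) // l.Nodup} := fun f =>
    ⟨firstOcc (U f), nodup_firstOcc _⟩
  rw [← Nat.card_coe_set_eq, ← Nat.card_eq_fintype_card]
  choose pre hpre using fun c : Set.range fun f : Fin n ↪o C => χ (f.trans w) => c.2
  refine Nat.card_le_card_of_injective (fun c => T (pre c)) fun c c' h => Subtype.ext ?_
  rw [← hpre c, ← hpre c']
  exact hdet _ _ (congrArg Subtype.val h)
end

section
/- No countable scattered chain of infinite Hausdorff rank has finite big Ramsey spectrum; that is, if C is a countable scattered chain that is not order-isomorphic to a member of H_n for any n < ω, then there exists n ≥ 1 such that the n-element chain does not have finite big Ramsey degree in C. -/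
/-!
The pairs already have infinite big Ramsey degree. The colouring attaches to each `x : C` a finite
set `ρ x` of natural numbers and counts how often `ρ x` and `ρ y` alternate.

* `Big m A` says that `A` contains an `m`-fold iterated `ω`- or `ω*`-sum of infinite sets. It is
  partition regular (`Big.partition`) and preserved by embeddings. A countable chain that is not
  `Big m` has finite Hausdorff rank (`exists_inHausdorff`): identify points when the interval
  between them is not `Big m`; a chain that is not `Big (m+1)` has finitely many classes, and each
  class is a `ℤ`-sum of pieces lying in intervals that are not `Big m`. So a chain of infinite rank
  is `Big m` for all `m`, and so is each of its copies.

* By Hausdorff's theorem a countable scattered chain is described by a well-founded tree of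
  `ℤ`-indexed sums, so that a point is a finite sequence of integers; `ρ x` is the set of record
  values of that sequence, coded in `ℕ`. If `A` is `Big m`, then `{ρ x | x ∈ A}` contains an
  `m`-level tree of successive end-extensions in which the new elements can at each node be chosen
  beyond any bound (`Branching`). Both facts are obtained together: the sets on which such a
  `ρ` exists (`Good`) form an ideal closed under `ℤ`-sums, and if `C` were not in it, representatives
  of the classes of the relation "`[x, y]` is good" would form a dense suborder
  (`good_univ_of_scattered`).

* In such a tree of height `p`, growing two branches alternately, each time beyond everything
  chosen so far, produces `x, y ∈ A` for which `ρ x \ ρ y` and `ρ y \ ρ x` consist of exactly `p`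
  alternating blocks each (`exists_osc_eq`). Hence the number of blocks, truncated at `t + 1`, takes
  more than `t` values on every copy of `C`.
-/

universe u v

section

variable {D : Type*} [LinearOrder D]

/-! ### Iterated sums -/

/-- `Big m A`: the set `A` contains an iterated sum of depth `m`, each level of which is indexed by
`ω` or by `ω*`, with infinite sets at the bottom. The direction may vary from node to node. -/
def Big : ℕ → Set D → Prop
  | 0, A => A.Infinite
  | m + 1, A => ∃ B : ℕ → Set D, (∀ j, B j ⊆ A ∧ Big m (B j)) ∧
      ((∀ i j, i < j → ∀ x ∈ B i, ∀ y ∈ B j, x < y) ∨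
       (∀ i j, i < j → ∀ x ∈ B i, ∀ y ∈ B j, y < x))

lemma Big.mono {m : ℕ} {A A' : Set D} (h : Big m A) (hA : A ⊆ A') : Big m A' := by
  cases m with
  | zero => exact Set.Infinite.mono hA h
  | succ m =>
    obtain ⟨B, hB, ho⟩ := h
    exact ⟨B, fun j => ⟨(hB j).1.trans hA, (hB j).2⟩, ho⟩

lemma Big.infinite {m : ℕ} {A : Set D} (h : Big m A) : A.Infinite := by
  induction m generalizing A with
  | zero => exact h
  | succ m ih =>
    obtain ⟨B, hB, -⟩ := h
    exact (ih (hB 0).2).mono (hB 0).1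

lemma Big.image {E : Type*} [LinearOrder E] {m : ℕ} {A : Set D} (h : Big m A) (w : D ↪o E) :
    Big m (w '' A) := by
  induction m generalizing A with
  | zero => exact Set.Infinite.image w.injective.injOn h
  | succ m ih =>
    obtain ⟨B, hB, ho⟩ := h
    refine ⟨fun j => w '' B j, fun j => ⟨Set.image_mono (hB j).1, ih (hB j).2⟩, ?_⟩
    refine ho.imp ?_ ?_ <;>
    · rintro ho i j hij _ ⟨x, hx, rfl⟩ _ ⟨y, hy, rfl⟩
      exact w.lt_iff_lt.2 (ho i j hij x hx y hy)

/-- Infinitely many terms of a monotone sequence of sets suffice for an iterated sum. -/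
lemma big_succ_of_infinite {m : ℕ} {A : Set D} (B : ℕ → Set D)
    (ho : (∀ i j, i < j → ∀ x ∈ B i, ∀ y ∈ B j, x < y) ∨
       (∀ i j, i < j → ∀ x ∈ B i, ∀ y ∈ B j, y < x))
    (J : Set ℕ) (hJ : J.Infinite) (hB : ∀ j ∈ J, Big m (B j ∩ A)) : Big (m + 1) A := by
  have hm : StrictMono (Nat.nth (· ∈ J)) := Nat.nth_strictMono hJ
  have hmem : ∀ k, Nat.nth (· ∈ J) k ∈ J := fun k => Nat.nth_mem_of_infinite hJ k
  refine ⟨fun k => B (Nat.nth (· ∈ J) k) ∩ A, fun k => ⟨Set.inter_subset_right, hB _ (hmem k)⟩, ?_⟩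
  exact ho.imp (fun ho i j hij x hx y hy => ho _ _ (hm hij) x hx.1 y hy.1)
    (fun ho i j hij x hx y hy => ho _ _ (hm hij) x hx.1 y hy.1)

lemma exists_infinite_fiber {α ι : Type*} {J : Set α} (hJ : J.Infinite) (f : α → ι)
    (hf : (f '' J).Finite) : ∃ i, (J ∩ f ⁻¹' {i}).Infinite := by
  by_contra! h
  refine hJ ((hf.biUnion fun i _ => h i).subset fun x hx => ?_)
  simp only [Set.mem_iUnion]
  exact ⟨f x, ⟨x, hx, rfl⟩, hx, rfl⟩

lemma Big.partition {ι : Type*} {m : ℕ} {A : Set D} (h : Big m A) (f : D → ι)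
    (hf : (f '' A).Finite) : ∃ i, Big m (A ∩ f ⁻¹' {i}) := by
  induction m generalizing A with
  | zero => exact exists_infinite_fiber h f hf
  | succ m ih =>
    obtain ⟨B, hB, ho⟩ := h
    choose i hi using fun j => ih (hB j).2 (hf.subset (Set.image_mono (hB j).1))
    obtain ⟨k, hk⟩ := exists_infinite_fiber Set.infinite_univ i
      (hf.subset (by
        rintro _ ⟨j, -, rfl⟩
        obtain ⟨x, hx⟩ := (hi j).infinite.nonempty
        exact ⟨x, (hB j).1 hx.1, hx.2⟩))
    refine ⟨k, big_succ_of_infinite B ho _ hk ?_⟩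
    rintro j ⟨-, rfl⟩
    exact (hi j).mono fun x hx => ⟨hx.1, (hB j).1 hx.1, hx.2⟩

lemma Big.union {m : ℕ} {A B : Set D} (h : Big m (A ∪ B)) : Big m A ∨ Big m B := by
  obtain ⟨p, hp⟩ := h.partition (· ∈ A) (Set.toFinite _)
  by_cases h : p
  · exact Or.inl (hp.mono fun x hx => by simpa [h] using hx.2)
  · refine Or.inr (hp.mono fun x hx => ?_)
    have : x ∉ A := by simpa [h] using hx.2
    exact hx.1.resolve_left this

/-- For a monotone map to `ℤ`, an iterated sum either survives inside one fibre, or iterated sums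
of one depth less survive in infinitely many fibres. -/
lemma Big.int_dichotomy {m : ℕ} {A : Set D} (h : Big (m + 1) A) (c : D → ℤ)
    (hc : MonotoneOn c A) :
    (∃ i, Big (m + 1) (A ∩ c ⁻¹' {i})) ∨ {i | Big m (A ∩ c ⁻¹' {i})}.Infinite := by
  obtain ⟨B, hB, ho⟩ := h
  -- The neighbouring terms bound `c` on `B (j + 1)`.
  have key : ∀ j, ∃ i, Big m (B (j + 1) ∩ c ⁻¹' {i}) := by
    intro j
    obtain ⟨a, ha⟩ := (hB 0).2.infinite.nonempty
    obtain ⟨b, hb⟩ := (hB (j + 2)).2.infinite.nonempty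
    refine (hB (j + 1)).2.partition c ((Set.finite_Icc (min (c a) (c b)) (max (c a) (c b))).subset ?_)
    rintro _ ⟨x, hx, rfl⟩
    have hxA := (hB _).1 hx
    have haA := (hB _).1 ha
    have hbA := (hB _).1 hb
    rcases ho with ho | ho
    · have h1 := hc haA hxA (ho 0 (j + 1) (by omega) a ha x hx).le
      have h2 := hc hxA hbA (ho (j + 1) (j + 2) (by omega) x hx b hb).le
      exact ⟨(min_le_left _ _).trans h1, h2.trans (le_max_right _ _)⟩
    · have h1 := hc hxA haA (ho 0 (j + 1) (by omega) a ha x hx).le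
      have h2 := hc hbA hxA (ho (j + 1) (j + 2) (by omega) x hx b hb).le
      exact ⟨(min_le_right _ _).trans h2, h1.trans (le_max_left _ _)⟩
  choose i hi using key
  by_cases hfin : (Set.range i).Finite
  · left
    obtain ⟨k, hk⟩ := exists_infinite_fiber Set.infinite_univ i (by simpa using hfin)
    refine ⟨k, big_succ_of_infinite (fun j => B (j + 1)) ?_ _ hk ?_⟩
    · exact ho.imp (fun ho i j hij => ho _ _ (by omega)) (fun ho i j hij => ho _ _ (by omega))
    · rintro j ⟨-, rfl⟩
      exact (hi j).mono fun x hx => ⟨hx.1, (hB _).1 hx.1, hx.2⟩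
  · right
    refine Set.Infinite.mono ?_ hfin
    rintro _ ⟨j, rfl⟩
    exact (hi j).mono fun x hx => ⟨(hB _).1 hx.1, hx.2⟩

/-! ### Ideals of sets and the induced condensations -/

/-- A family of subsets of `D` that contains the singletons and is closed under subsets and finite
unions. It induces the condensation identifying `x` and `y` when `P (Set.uIcc x y)`. -/
structure SetIdeal (P : Set D → Prop) : Prop where
  mono : ∀ {A B : Set D}, P B → A ⊆ B → P A
  union : ∀ {A B : Set D}, P A → P B → P (A ∪ B)
  singleton : ∀ x : D, P {x}

lemma SetIdeal.trans {P : Set D → Prop} (hP : SetIdeal P) {x y z : D}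
    (h1 : P (Set.uIcc x y)) (h2 : P (Set.uIcc y z)) : P (Set.uIcc x z) :=
  hP.mono (hP.union h1 h2) Set.uIcc_subset_uIcc_union_uIcc

lemma SetIdeal.symm {P : Set D → Prop} (_ : SetIdeal P) {x y : D}
    (h1 : P (Set.uIcc x y)) : P (Set.uIcc y x) := by rwa [Set.uIcc_comm]

lemma SetIdeal.left {P : Set D → Prop} (hP : SetIdeal P) {x y z : D} (hxy : x ≤ y) (hyz : y ≤ z)
    (h : P (Set.uIcc x z)) : P (Set.uIcc x y) := by
  refine hP.mono h ?_
  rw [Set.uIcc_of_le hxy, Set.uIcc_of_le (hxy.trans hyz)]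
  exact Set.Icc_subset_Icc_right hyz

lemma SetIdeal.right {P : Set D → Prop} (hP : SetIdeal P) {x y z : D} (hxy : x ≤ y) (hyz : y ≤ z)
    (h : P (Set.uIcc x z)) : P (Set.uIcc y z) := by
  refine hP.mono h ?_
  rw [Set.uIcc_of_le hyz, Set.uIcc_of_le (hxy.trans hyz)]
  exact Set.Icc_subset_Icc_left hxy

lemma SetIdeal.exists_rep {P : Set D → Prop} (hP : SetIdeal P) :
    ∃ rep : D → D, (∀ x, P (Set.uIcc (rep x) x)) ∧
      ∀ x y, P (Set.uIcc x y) → rep x = rep y := by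
  let s : Setoid D :=
    { r := fun x y => P (Set.uIcc x y)
      iseqv := ⟨fun x => by simpa using hP.singleton x, hP.symm, hP.trans⟩ }
  refine ⟨fun x => (Quotient.mk s x).out, fun x => Quotient.mk_out (s := s) x, fun x y h => ?_⟩
  have : Quotient.mk s x = Quotient.mk s y := Quotient.sound h
  simp only [this]

/-- A countable set is a `ℤ`-sum of pieces that are bounded within the set. -/
lemma exists_int_map (S : Set D) (hS : S.Countable) (hne : S.Nonempty) :
    ∃ c : D → ℤ, MonotoneOn c S ∧ ∀ k, ∃ x ∈ S, ∃ y ∈ S, S ∩ c ⁻¹' {k} ⊆ Set.Icc x y := by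
  obtain ⟨e, rfl⟩ := hS.exists_eq_range hne
  -- `hi n` and `lo n` are the largest and the smallest of `e 0, …, e n`.
  let hi : ℕ → D := partialSups e
  let lo : ℕ → D := fun n => OrderDual.ofDual (partialSups (fun i => OrderDual.toDual (e i)) n)
  have hi_mono : Monotone hi := (partialSups e).monotone
  have lo_anti : Antitone lo := fun i j h => (partialSups fun i => OrderDual.toDual (e i)).monotone h
  have le_hi : ∀ n, e n ≤ hi n := fun n => le_partialSups e n
  have lo_le : ∀ n, lo n ≤ e n := fun n => le_partialSups (fun i => OrderDual.toDual (e i)) n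
  have hi_mem : ∀ n, hi n ∈ Set.range e := by
    intro n
    induction n with
    | zero => exact ⟨0, by simp [hi]⟩
    | succ n ih =>
      have : hi (n + 1) = hi n ⊔ e (n + 1) := partialSups_add_one e n
      rcases le_total (hi n) (e (n + 1)) with h | h
      · rw [this, sup_eq_right.2 h]; exact ⟨_, rfl⟩
      · rw [this, sup_eq_left.2 h]; exact ih
  have lo_mem : ∀ n, lo n ∈ Set.range e := by
    intro n
    induction n with
    | zero => exact ⟨0, by simp [lo]⟩
    | succ n ih =>
      have : lo (n + 1) = lo n ⊓ e (n + 1) :=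
        partialSups_add_one (fun i => OrderDual.toDual (e i)) n
      rcases le_total (lo n) (e (n + 1)) with h | h
      · rw [this, inf_eq_left.2 h]; exact ih
      · rw [this, inf_eq_right.2 h]; exact ⟨_, rfl⟩
  let a : D → ℕ := fun y => sInf {n | y ≤ hi n}
  let b : D → ℕ := fun y => sInf {n | lo n ≤ y}
  have ha : ∀ y ∈ Set.range e, y ≤ hi (a y) := by
    rintro _ ⟨n, rfl⟩
    exact Nat.sInf_mem (s := {k | e n ≤ hi k}) ⟨n, le_hi n⟩
  have hb : ∀ y ∈ Set.range e, lo (b y) ≤ y := by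
    rintro _ ⟨n, rfl⟩
    exact Nat.sInf_mem (s := {k | lo k ≤ e n}) ⟨n, lo_le n⟩
  have a_mono : ∀ y ∈ Set.range e, ∀ z ∈ Set.range e, y ≤ z → a y ≤ a z :=
    fun y _ z hz h => Nat.sInf_le (h.trans (ha z hz))
  have b_anti : ∀ y ∈ Set.range e, ∀ z ∈ Set.range e, y ≤ z → b z ≤ b y :=
    fun y hy z _ h => Nat.sInf_le ((hb y hy).trans h)
  -- Above `e 0` only `a` varies, below `e 0` only `b` does.
  have hab : ∀ y, a y = 0 ∨ b y = 0 := by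
    intro y
    rcases le_total y (e 0) with h | h
    · exact Or.inl (Nat.le_zero.1 (Nat.sInf_le (h.trans (le_hi 0))))
    · exact Or.inr (Nat.le_zero.1 (Nat.sInf_le ((lo_le 0).trans h)))
  refine ⟨fun y => (a y : ℤ) - b y, fun y hy z hz h => ?_, fun k => ?_⟩
  · have := a_mono y hy z hz h
    have := b_anti y hy z hz h
    simp only
    omega
  · refine ⟨lo k.natAbs, lo_mem _, hi k.natAbs, hi_mem _, ?_⟩
    rintro y ⟨hy, hk⟩
    simp only [Set.mem_preimage, Set.mem_singleton_iff] at hk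
    have := hab y
    exact ⟨(lo_anti (by omega)).trans (hb y hy), (ha y hy).trans (hi_mono (by omega))⟩

end

/-! ### Chains of infinite rank contain iterated sums of every depth -/

lemma inHausdorff_one_of_finite (D : Type u) [LinearOrder D] [Finite D] : InHausdorff 1 D := by
  unfold InHausdorff
  refine ⟨fun x => (Set.Iio x).ncard, fun x y h => ?_, fun i => ⟨0, le_rfl, ?_⟩⟩
  · exact Int.ofNat_le.2 <| Set.ncard_le_ncard (Set.Iio_subset_Iio h)
  · unfold InHausdorff
    refine ⟨fun x y => ?_⟩
    have hxy : (Set.Iio x.1).ncard = (Set.Iio y.1).ncard :=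
       Int.ofNat_inj.1 (x.2.trans y.2.symm)
    have key : ∀ x y : D, (Set.Iio x).ncard = (Set.Iio y).ncard → ¬ x < y := fun x y h hlt =>
      h.not_lt (Set.ncard_lt_ncard ⟨Set.Iio_subset_Iio hlt.le, fun h => (h hlt).false⟩)
    exact Subtype.ext (le_antisymm (not_lt.1 (key _ _ hxy.symm)) (not_lt.1 (key _ _ hxy)))

lemma setIdeal_not_big {D : Type*} [LinearOrder D] (m : ℕ) :
    SetIdeal fun A : Set D => ¬ Big m A where
  mono h hAB hA := h (hA.mono hAB)
  union hA hB h := h.union.elim hA hB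
  singleton x h := h.infinite (Set.finite_singleton x)

/-- If the condensation by non-`Big m` intervals has infinitely many classes, then intervals
between successive representatives form an iterated sum of depth `m + 1`. -/
lemma big_succ_of_infinite_classes {D : Type*} [LinearOrder D] {m : ℕ} {R : Set D}
    (hR : R.Infinite) (h : ∀ x ∈ R, ∀ y ∈ R, x ≠ y → Big m (Set.uIcc x y)) :
    Big (m + 1) (Set.univ : Set D) := by
  obtain ⟨g, hg⟩ := exists_increasing_or_nonincreasing_subseq ((· < ·) : D → D → Prop)
    (fun n => (Set.Infinite.natEmbedding R hR n : D))
  have hinj : Function.Injective fun n => (Set.Infinite.natEmbedding R hR (g n) : D) :=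
    Subtype.val_injective.comp ((Set.Infinite.natEmbedding R hR).injective.comp g.injective)
  set x : ℕ → D := fun n => (Set.Infinite.natEmbedding R hR (g n) : D)
  have hxR : ∀ n, x n ∈ R := fun n => (Set.Infinite.natEmbedding R hR (g n)).2
  refine ⟨fun j => Set.uIcc (x (2 * j)) (x (2 * j + 1)), fun j => ⟨Set.subset_univ _,
    h _ (hxR _) _ (hxR _) (hinj.ne (by omega))⟩, ?_⟩
  refine hg.imp (fun hg => ?_) (fun hg => ?_)
  · have hx : StrictMono x := fun a b hab => hg a b hab
    intro i j hij a ha b hb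
    simp only [Set.uIcc_of_le (hx.monotone (Nat.le_succ (2 * _)))] at ha hb
    exact ha.2.trans_lt ((hx (by omega)).trans_le hb.1)
  · have hx : StrictAnti x := fun a b hab =>
      lt_of_le_of_ne (not_lt.1 (hg a b hab)) (hinj.ne hab.ne')
    intro i j hij a ha b hb
    simp only [Set.uIcc_of_ge (hx.antitone (Nat.le_succ (2 * _)))] at ha hb
    exact hb.2.trans_lt ((hx (by omega)).trans_le ha.1)

lemma exists_inHausdorff (m : ℕ) : ∀ (D : Type u) [LinearOrder D] [Countable D],
    ¬ Big m (Set.univ : Set D) → InHausdorff (2 * m + 1) D := by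
  induction m with
  | zero =>
    intro D _ _ h
    have : Finite D := Set.finite_univ_iff.1 (Set.not_infinite.1 h)
    exact inHausdorff_one_of_finite D
  | succ m ih =>
    intro D _ _ h
    have hP := setIdeal_not_big (D := D) m
    obtain ⟨rep, hrep, hrep'⟩ := hP.exists_rep
    have hfin : (Set.range rep).Finite := by
      by_contra hinf
      refine h (big_succ_of_infinite_classes hinf ?_)
      rintro _ ⟨x, rfl⟩ _ ⟨y, rfl⟩ hne
      by_contra hxy
      exact hne (hrep' x y (hP.trans (hP.symm (hrep x)) (hP.trans hxy (hrep y))))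
    -- `N x` is the set of representatives of the classes below the class of `x`.
    let N : D → Set D := fun x => {r ∈ Set.range rep | r < x ∧ Big m (Set.uIcc r x)}
    have hN : ∀ x, (N x).Finite := fun x => hfin.subset fun r hr => hr.1
    have hNmono : ∀ x y, x ≤ y → N x ⊆ N y := by
      rintro x y hxy r ⟨hr, hrx, hB⟩
      refine ⟨hr, hrx.trans_le hxy, ?_⟩
      by_contra hc
      exact hP.left hrx.le hxy hc hB
    have hNeq : ∀ x y, x ≤ y → (N x).ncard = (N y).ncard → ¬ Big m (Set.uIcc x y) := by
      intro x y hxy hcard hB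
      refine hcard.not_lt (Set.ncard_lt_ncard ⟨hNmono x y hxy, fun hsub => ?_⟩ (hN y))
      refine hrep x (hsub (a := rep x) ⟨⟨x, rfl⟩, ?_, ?_⟩).2.2
      · by_contra hle
        exact hP.left hxy (not_lt.1 hle) (hP.symm (hrep x)) hB
      · by_contra hc
        exact hP.trans (hP.symm (hrep x)) hc hB
    have hNeq' : ∀ x y, (N x).ncard = (N y).ncard → ¬ Big m (Set.uIcc x y) := by
      intro x y hcard
      rcases le_total x y with hxy | hxy
      · exact hNeq x y hxy hcard
      · exact hP.symm (hNeq y x hxy hcard.symm)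
    rw [show 2 * (m + 1) + 1 = (2 * m + 1 + 1) + 1 by ring]
    unfold InHausdorff
    refine ⟨fun x => (N x).ncard, fun x y hxy => ?_, fun i => ⟨2 * m + 1 + 1, le_rfl, ?_⟩⟩
    · exact Int.ofNat_le.2 <| Set.ncard_le_ncard (hNmono x y hxy) (hN y)
    -- Inside a class the pieces lie in intervals that are not `Big m`.
    unfold InHausdorff
    rcases isEmpty_or_nonempty {x : D // ((N x).ncard : ℤ) = i} with hE | hE
    · refine ⟨fun _ => 0, fun _ _ _ => le_rfl, fun k => ⟨0, Nat.zero_le _, ?_⟩⟩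
      unfold InHausdorff
      infer_instance
    obtain ⟨c, hc, hck⟩ := exists_int_map (Set.univ : Set {x : D // ((N x).ncard : ℤ) = i})
      (Set.to_countable _) Set.univ_nonempty
    refine ⟨c, monotoneOn_univ.1 hc, fun k => ⟨2 * m + 1, le_rfl, ih _ fun hB => ?_⟩⟩
    obtain ⟨x, -, y, -, hxy⟩ := hck k
    have hB1 := (hB.image (OrderEmbedding.subtype _)).image (OrderEmbedding.subtype _)
    refine hNeq' x.1 y.1 (by exact_mod_cast x.2.trans y.2.symm) (hB1.mono ?_)
    rintro _ ⟨_, ⟨z, -, rfl⟩, rfl⟩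
    have := hxy ⟨Set.mem_univ z.1, z.2⟩
    exact Set.Icc_subset_uIcc ⟨this.1, this.2⟩

/-! ### Record sets -/

section

variable {D : Type*}

/-- `Branching ρ m F A`: starting from the finite set `F`, there is a tree of height `m` of
successive proper end-extensions, in which at each node the new elements can be chosen beyond any
bound, and whose leaves are of the form `ρ x` with `x ∈ A`. -/
def Branching (ρ : D → Finset ℕ) : ℕ → Finset ℕ → Set D → Prop
  | 0, F, A => ∃ x ∈ A, ρ x = F
  | m + 1, F, A => ∀ N : ℕ, ∃ M, N < M ∧ ∃ F' : Finset ℕ,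
      F'.filter (· < M) = F ∧ M ∈ F' ∧ Branching ρ m F' A

/-- The records of a sequence obtained by prepending `n` to a sequence with set of records `F`. -/
def prepend (n : ℕ) (F : Finset ℕ) : Finset ℕ := insert n (F.filter (n < ·))

lemma Branching.mono {ρ : D → Finset ℕ} {m : ℕ} {F : Finset ℕ} {A A' : Set D}
    (h : Branching ρ m F A) (hA : A ⊆ A') : Branching ρ m F A' := by
  induction m generalizing F with
  | zero => obtain ⟨x, hx, h⟩ := h; exact ⟨x, hA hx, h⟩
  | succ m ih =>
    intro N
    obtain ⟨M, hM, F', h1, h2, h3⟩ := h N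
    exact ⟨M, hM, F', h1, h2, ih h3⟩

lemma Branching.congr {ρ ρ' : D → Finset ℕ} {m : ℕ} {F : Finset ℕ} {A : Set D}
    (h : Branching ρ m F A) (hA : ∀ x ∈ A, ρ x = ρ' x) : Branching ρ' m F A := by
  induction m generalizing F with
  | zero => obtain ⟨x, hx, h⟩ := h; exact ⟨x, hx, (hA x hx).symm.trans h⟩
  | succ m ih =>
    intro N
    obtain ⟨M, hM, F', h1, h2, h3⟩ := h N
    exact ⟨M, hM, F', h1, h2, ih h3⟩

lemma Branching.prepend {ρ : D → Finset ℕ} {m : ℕ} {F : Finset ℕ} {A : Set D}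
    (h : Branching ρ m F A) (n : ℕ) :
    Branching (fun x => prepend n (ρ x)) m (prepend n F) A := by
  induction m generalizing F with
  | zero => obtain ⟨x, hx, rfl⟩ := h; exact ⟨x, hx, rfl⟩
  | succ m ih =>
    intro N
    obtain ⟨M, hM, F', rfl, h2, h3⟩ := h (max N n)
    refine ⟨M, (le_max_left _ _).trans_lt hM, _root_.prepend n F', ?_, ?_, ih h3⟩
    · have : n < M := (le_max_right _ _).trans_lt hM
      ext k
      simp only [_root_.prepend, Finset.mem_filter, Finset.mem_insert]
      grind
    · simp only [_root_.prepend, Finset.mem_filter, Finset.mem_insert]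
      exact Or.inr ⟨h2, (le_max_right _ _).trans_lt hM⟩

variable [LinearOrder D]

/-- `ρ` turns iterated sums inside `S` into branching trees of finite sets of the same depth. -/
def Good (S : Set D) : Prop := ∃ ρ : D → Finset ℕ, ∀ m, ∀ A ⊆ S, Big m A → ∃ F, Branching ρ m F A

lemma setIdeal_good : SetIdeal (Good : Set D → Prop) where
  mono := by
    rintro A B ⟨ρ, h⟩ hAB
    exact ⟨ρ, fun m A' hA' => h m A' (hA'.trans hAB)⟩
  union := by
    classical
    rintro A B ⟨ρ, hρ⟩ ⟨σ, hσ⟩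
    refine ⟨fun x => if x ∈ A then ρ x else σ x, fun m E hE hB => ?_⟩
    have hB' : Big m ((E ∩ A) ∪ (E \ A)) := by rwa [Set.inter_union_sdiff]
    rcases hB'.union with h | h
    · obtain ⟨F, hF⟩ := hρ m _ Set.inter_subset_right h
      exact ⟨F, (hF.congr fun x hx => by simp [hx.2]).mono Set.inter_subset_left⟩
    · obtain ⟨F, hF⟩ := hσ m (E \ A) (fun x hx => (hE hx.1).resolve_left hx.2) h
      exact ⟨F, (hF.congr fun x hx => by simp [hx.2]).mono Set.sdiff_subset⟩
  singleton x :=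
    ⟨fun _ => ∅, fun _ _ hA hB => absurd ((Set.finite_singleton x).subset hA) hB.infinite⟩

lemma good_int_sum {S : Set D} (c : D → ℤ) (hc : MonotoneOn c S)
    (h : ∀ k, Good (S ∩ c ⁻¹' {k})) : Good S := by
  choose ρ hρ using h
  let code : ℤ → ℕ := Equiv.intEquivNat
  have hcode : Function.Injective code := Equiv.intEquivNat.injective
  refine ⟨fun x => prepend (code (c x)) (ρ (c x) x), fun m A hA hB => ?_⟩
  have fiber : ∀ m k, Big m (A ∩ c ⁻¹' {k}) → ∃ F,
      Branching (fun x => prepend (code (c x)) (ρ (c x) x)) m (prepend (code k) F) A := by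
    intro m k hB
    obtain ⟨F, hF⟩ := hρ k m _ (Set.inter_subset_inter_left _ hA) hB
    refine ⟨F, ((hF.prepend (code k)).congr fun x hx => ?_).mono Set.inter_subset_left⟩
    have hx : c x = k := hx.2
    simp only [hx]
  cases m with
  | zero =>
    obtain ⟨x, hx⟩ := hB.infinite.nonempty
    exact ⟨_, x, hx, rfl⟩
  | succ m =>
    rcases hB.int_dichotomy c (hc.mono hA) with ⟨k, hk⟩ | hinf
    · obtain ⟨F, hF⟩ := fiber _ k hk
      exact ⟨_, hF⟩
    · refine ⟨∅, fun N => ?_⟩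
      obtain ⟨_, ⟨k, hk, rfl⟩, hN⟩ := (hinf.image hcode.injOn).exists_gt N
      obtain ⟨F, hF⟩ := fiber _ k hk
      refine ⟨code k, hN, _, ?_, by simp [prepend], hF⟩
      ext j
      simp only [prepend, Finset.mem_filter, Finset.mem_insert, Finset.notMem_empty, iff_false]
      omega

lemma good_class [Countable D] (x : D) : Good {y | Good (Set.uIcc x y)} := by
  have hx : Good (Set.uIcc x x) := by simpa using setIdeal_good.singleton x
  obtain ⟨c, hc, hk⟩ := exists_int_map {y | Good (Set.uIcc x y)} (Set.to_countable _) ⟨x, hx⟩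
  refine good_int_sum c hc fun k => ?_
  obtain ⟨a, ha, b, hb, hab⟩ := hk k
  exact setIdeal_good.mono (setIdeal_good.trans (setIdeal_good.symm ha) hb)
    (hab.trans Set.Icc_subset_uIcc)

/-- The form of Hausdorff's theorem that is needed: if a countable chain is not good, then distinct
classes of the condensation by good intervals always have a further class between them, so the
representatives form a dense chain. -/
lemma good_univ_of_scattered [Countable D] (hs : IsEmpty (ℚ ↪o D)) : Good (Set.univ : Set D) := by
  have hP := setIdeal_good (D := D)
  rcases isEmpty_or_nonempty D with hE | ⟨⟨x₀⟩⟩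
  · exact ⟨fun _ => ∅, fun m A _ hB => isEmptyElim hB.infinite.nonempty.some⟩
  by_cases hall : ∀ y, Good (Set.uIcc x₀ y)
  · exact hP.mono (good_class x₀) fun y _ => hall y
  exfalso
  push Not at hall
  obtain ⟨y₀, hy₀⟩ := hall
  obtain ⟨rep, hrep, hrep'⟩ := hP.exists_rep
  have between : ∀ x y : D, x < y → ¬ Good (Set.uIcc x y) →
      ∃ z, x < z ∧ z < y ∧ ¬ Good (Set.uIcc x z) ∧ ¬ Good (Set.uIcc y z) := by
    intro x y hxy hn
    by_contra! hz
    refine hn (hP.mono (hP.union (good_class x) (good_class y)) fun z hz' => ?_)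
    rw [Set.uIcc_of_le hxy.le] at hz'
    rcases hz'.1.eq_or_lt with rfl | h1
    · exact Or.inl (by simpa using hP.singleton x)
    rcases hz'.2.eq_or_lt with rfl | h2
    · exact Or.inr (by simpa using hP.singleton z)
    by_cases h3 : Good (Set.uIcc x z)
    · exact Or.inl h3
    · exact Or.inr (hz z h1 h2 h3)
  have rep_ne : ∀ x y, rep x ≠ rep y → ¬ Good (Set.uIcc (rep x) (rep y)) := fun x y hne hg =>
    hne (hrep' x y (hP.trans (hP.symm (hrep x)) (hP.trans hg (hrep y))))
  have : DenselyOrdered (Set.range rep) := by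
    refine ⟨?_⟩
    rintro ⟨_, x, rfl⟩ ⟨_, y, rfl⟩ hxy
    have hxy : rep x < rep y := hxy
    obtain ⟨z, h1, h2, h3, h4⟩ := between _ _ hxy (rep_ne x y hxy.ne)
    refine ⟨⟨rep z, z, rfl⟩, ?_, ?_⟩
    · by_contra hle
      have hle : rep z ≤ rep x := not_lt.1 hle
      exact h3 (hP.right hle h1.le (hrep z))
    · by_contra hle
      have hle : rep y ≤ rep z := not_lt.1 hle
      exact h4 (hP.symm (hP.left h2.le hle (hP.symm (hrep z))))
  have : Nontrivial (Set.range rep) := by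
    refine ⟨⟨rep x₀, x₀, rfl⟩, ⟨rep y₀, y₀, rfl⟩, fun h => hy₀ ?_⟩
    have h : rep x₀ = rep y₀ := congrArg Subtype.val h
    exact hP.trans (hP.symm (hrep x₀)) (h ▸ hrep y₀)
  obtain ⟨f⟩ := Order.embedding_from_countable_to_dense ℚ (Set.range rep)
  exact hs.false (f.trans (OrderEmbedding.subtype _))

end

/-! ### Counting alternations -/

/-- The number of blocks of `R` cut out by `S`: elements of `R` lie in the same block when the same
number of elements of `S` is below them. -/
def blk (R S : Finset ℕ) : ℕ := (R.image fun n => (S.filter (· < n)).card).card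

/-- The oscillation of two finite sets: the number of blocks of `R \ S` cut out by `S \ R`. -/
def osc (R S : Finset ℕ) : ℕ := blk (R \ S) (S \ R)

/-- Adding a block `X` to `R` and then a block `Y` to `S`, both below everything else, increases
the number of blocks of `R` by one. -/
lemma blk_union {X Y R S : Finset ℕ} (hX : X.Nonempty) (hY : Y.Nonempty)
    (hXY : ∀ a ∈ X, ∀ b ∈ Y, a < b) (hYR : ∀ a ∈ Y, ∀ b ∈ R, a < b)
    (hXS : ∀ a ∈ X, ∀ b ∈ S, a < b) (hYS : ∀ a ∈ Y, ∀ b ∈ S, a < b) :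
    blk (X ∪ R) (Y ∪ S) = blk R S + 1 := by
  have h1 : ∀ n ∈ X, ((Y ∪ S).filter (· < n)).card = 0 := by
    intro n hn
    rw [Finset.card_eq_zero, Finset.filter_eq_empty_iff]
    intro k hk
    rcases Finset.mem_union.1 hk with hk | hk
    · exact (hXY n hn k hk).not_gt
    · exact (hXS n hn k hk).not_gt
  have hdisj : Disjoint Y S := Finset.disjoint_left.2 fun a ha hb => (hYS a ha a hb).false
  have h2 : ∀ n ∈ R, ((Y ∪ S).filter (· < n)).card = Y.card + (S.filter (· < n)).card := by
    intro n hn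
    rw [Finset.filter_union, Finset.card_union_of_disjoint (hdisj.mono (Finset.filter_subset _ _)
      (Finset.filter_subset _ _)), Finset.filter_true_of_mem fun a ha => hYR a ha n hn]
  have h3 : (X ∪ R).image (fun n => ((Y ∪ S).filter (· < n)).card) =
      insert 0 ((R.image fun n => (S.filter (· < n)).card).image (Y.card + ·)) := by
    rw [Finset.image_union, Finset.image_congr (g := fun _ => 0) h1, Finset.image_const hX,
      Finset.image_image, Finset.image_congr (g := fun n => Y.card + (S.filter (· < n)).card) h2]
    rfl
  have hYpos := hY.card_pos
  unfold blk
  rw [h3, Finset.card_insert_of_notMem, Finset.card_image_of_injective _ (add_right_injective _)]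
  intro hmem
  obtain ⟨k, -, hk⟩ := Finset.mem_image.1 hmem
  omega

/-- Companion of `blk_union` for the set whose blocks come second. -/
lemma blk_union' {X Y R S : Finset ℕ} (hY : Y.Nonempty)
    (hXY : ∀ a ∈ X, ∀ b ∈ Y, a < b) (hYR : ∀ a ∈ Y, ∀ b ∈ R, a < b)
    (hXR : ∀ a ∈ X, ∀ b ∈ R, a < b) (hXS : ∀ a ∈ X, ∀ b ∈ S, a < b)
    (hRS : ∀ b ∈ S, ∃ a ∈ R, a < b) :
    blk (Y ∪ S) (X ∪ R) = blk S R + 1 := by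
  have hdisj : Disjoint X R := Finset.disjoint_left.2 fun a ha hb => (hXR a ha a hb).false
  have h1 : ∀ n ∈ Y, ((X ∪ R).filter (· < n)).card = X.card := by
    intro n hn
    rw [Finset.filter_union, Finset.filter_true_of_mem fun a ha => hXY a ha n hn,
      Finset.filter_false_of_mem fun a ha => (hYR n hn a ha).not_gt, Finset.union_empty]
  have h2 : ∀ n ∈ S, ((X ∪ R).filter (· < n)).card = X.card + (R.filter (· < n)).card := by
    intro n hn
    rw [Finset.filter_union, Finset.card_union_of_disjoint (hdisj.mono (Finset.filter_subset _ _)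
      (Finset.filter_subset _ _)), Finset.filter_true_of_mem fun a ha => hXS a ha n hn]
  have h3 : (Y ∪ S).image (fun n => ((X ∪ R).filter (· < n)).card) =
      insert X.card ((S.image fun n => (R.filter (· < n)).card).image (X.card + ·)) := by
    rw [Finset.image_union, Finset.image_congr (g := fun _ => X.card) h1, Finset.image_const hY,
      Finset.image_image, Finset.image_congr (g := fun n => X.card + (R.filter (· < n)).card) h2]
    rfl
  unfold blk
  rw [h3, Finset.card_insert_of_notMem, Finset.card_image_of_injective _ (add_right_injective _)]
  intro hmem
  obtain ⟨k, hk, hk'⟩ := Finset.mem_image.1 hmem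
  obtain ⟨n, hn, rfl⟩ := Finset.mem_image.1 hk
  obtain ⟨a, ha, han⟩ := hRS n hn
  have : 0 < (R.filter (· < n)).card := Finset.card_pos.2 ⟨a, by simp [ha, han]⟩
  omega

/-- One step along a branching tree: `F` is extended by a nonempty set `X` beyond `N`. -/
lemma Branching.step {D : Type*} {ρ : D → Finset ℕ} {m : ℕ} {F : Finset ℕ} {A : Set D}
    (h : Branching ρ (m + 1) F A) (N : ℕ) :
    ∃ X : Finset ℕ, X.Nonempty ∧ (∀ n ∈ X, N < n) ∧ Branching ρ m (F ∪ X) A := by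
  obtain ⟨M, hM, F', rfl, h2, h3⟩ := h N
  refine ⟨F'.filter (¬ · < M), ⟨M, by simp [h2]⟩, fun n hn => ?_, ?_⟩
  · have := (Finset.mem_filter.1 hn).2
    omega
  · rwa [Finset.filter_union_filter_not_eq]

/-- Two branches grown alternately, each time beyond everything chosen so far, end with exactly one
block each per level. -/
lemma Branching.exists_pair {D : Type*} {ρ : D → Finset ℕ} {A : Set D} (p : ℕ) :
    ∀ (F G : Finset ℕ) (N : ℕ), Branching ρ p F A → Branching ρ p G A →
      ∃ x ∈ A, ∃ y ∈ A, ∃ R S : Finset ℕ, ρ x = F ∪ R ∧ ρ y = G ∪ S ∧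
        (∀ n ∈ R, N < n) ∧ (∀ n ∈ S, N < n) ∧ Disjoint R S ∧ (∀ b ∈ S, ∃ a ∈ R, a < b) ∧
        blk R S = p ∧ blk S R = p := by
  induction p with
  | zero =>
    rintro F G N ⟨x, hx, rfl⟩ ⟨y, hy, rfl⟩
    exact ⟨x, hx, y, hy, ∅, ∅, by simp [blk]⟩
  | succ p ih =>
    intro F G N hF hG
    obtain ⟨X, hX, hXN, hF'⟩ := hF.step N
    obtain ⟨Y, hY, hYN, hG'⟩ := hG.step (max N (X.sup id))
    obtain ⟨x, hx, y, hy, R, S, hρx, hρy, hR, hS, hdisj, hRS, h1, h2⟩ :=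
      ih _ _ (max (max N (X.sup id)) (Y.sup id)) hF' hG'
    have leX : ∀ a ∈ X, a ≤ X.sup id := fun a ha => Finset.le_sup (f := id) ha
    have leY : ∀ a ∈ Y, a ≤ Y.sup id := fun a ha => Finset.le_sup (f := id) ha
    have hXY : ∀ a ∈ X, ∀ b ∈ Y, a < b := fun a ha b hb => by
      have := leX a ha; have := hYN b hb; omega
    have hXR : ∀ a ∈ X, ∀ b ∈ R, a < b := fun a ha b hb => by
      have := leX a ha; have := hR b hb; omega
    have hXS : ∀ a ∈ X, ∀ b ∈ S, a < b := fun a ha b hb => by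
      have := leX a ha; have := hS b hb; omega
    have hYR : ∀ a ∈ Y, ∀ b ∈ R, a < b := fun a ha b hb => by
      have := leY a ha; have := hR b hb; omega
    have hYS : ∀ a ∈ Y, ∀ b ∈ S, a < b := fun a ha b hb => by
      have := leY a ha; have := hS b hb; omega
    refine ⟨x, hx, y, hy, X ∪ R, Y ∪ S, by rw [hρx, Finset.union_assoc],
      by rw [hρy, Finset.union_assoc], fun n hn => ?_, fun n hn => ?_, ?_, fun b hb => ?_, ?_, ?_⟩
    · rcases Finset.mem_union.1 hn with hn | hn
      · exact hXN n hn
      · have := hR n hn; omega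
    · rcases Finset.mem_union.1 hn with hn | hn
      · have := hYN n hn; omega
      · have := hS n hn; omega
    · rw [Finset.disjoint_left]
      intro a ha hb
      rcases Finset.mem_union.1 ha with ha | ha <;> rcases Finset.mem_union.1 hb with hb | hb
      · exact (hXY a ha a hb).false
      · exact (hXS a ha a hb).false
      · exact (hYR a hb a ha).false
      · exact Finset.disjoint_left.1 hdisj ha hb
    · obtain ⟨a, ha⟩ := hX
      refine ⟨a, Finset.mem_union_left _ ha, ?_⟩
      rcases Finset.mem_union.1 hb with hb | hb
      · exact hXY a ha b hb
      · exact hXS a ha b hb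
    · rw [blk_union hX hY hXY hYR hXS hYS, h1]
    · rw [blk_union' hY hXY hYR hXR hXS hRS, h2]

lemma exists_osc_eq {D : Type*} {ρ : D → Finset ℕ} {A : Set D} {p : ℕ} {F : Finset ℕ}
    (h : Branching ρ p F A) :
    ∃ x ∈ A, ∃ y ∈ A, osc (ρ x) (ρ y) = p ∧ osc (ρ y) (ρ x) = p := by
  obtain ⟨x, hx, y, hy, R, S, hρx, hρy, hR, hS, hdisj, -, h1, h2⟩ :=
    Branching.exists_pair p F F (F.sup id) h h
  have leF : ∀ a ∈ F, a ≤ F.sup id := fun a ha => Finset.le_sup (f := id) ha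
  have key : ∀ R S : Finset ℕ, (∀ n ∈ R, F.sup id < n) → Disjoint R S →
      (F ∪ R) \ (F ∪ S) = R := by
    intro R S hR hd
    ext a
    have h1 := leF a
    have h2 := hR a
    have h3 := fun h : a ∈ R => Finset.disjoint_left.1 hd h
    simp only [Finset.mem_sdiff, Finset.mem_union]
    constructor
    · tauto
    · intro ha
      refine ⟨Or.inr ha, ?_⟩
      rintro (hb | hb)
      · exact absurd (h2 ha) (not_lt.2 (h1 hb))
      · exact h3 ha hb
  refine ⟨x, hx, y, hy, ?_, ?_⟩
  · rw [osc, hρx, hρy, key R S hR hdisj, key S R hS hdisj.symm, h1]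
  · rw [osc, hρx, hρy, key R S hR hdisj, key S R hS hdisj.symm, h2]

/-- No countable scattered chain of infinite Hausdorff rank has finite big Ramsey spectrum:
if a countable scattered chain `C` is not order-isomorphic to a member of `H_n` for any
`n < ω`, then there is `n ≥ 1` such that the `n`-element chain does not have finite big
Ramsey degree in `C`. -/
theorem infinite_rank_not_finite_bigRamsey_spectrum
    (C : Type u) [LinearOrder C] [Countable C]
    (hscat : Scattered C) (hrank : ∀ n : ℕ, ¬ InHausdorff n C) :
    ∃ n : ℕ, 1 ≤ n ∧ ¬ ∃ t : ℕ, BigRamseyDegLE (Fin n) C t := by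
  refine ⟨2, by norm_num, ?_⟩
  rintro ⟨t, ht⟩
  have hbig : ∀ m, Big m (Set.univ : Set C) := fun m => by
    by_contra h
    exact hrank _ (exists_inHausdorff m C h)
  obtain ⟨ρ, hρ⟩ := good_univ_of_scattered hscat
  let χ : (Fin 2 ↪o C) → Fin (t + 2) := fun f =>
    ⟨min (osc (ρ (f 0)) (ρ (f 1))) (t + 1), by omega⟩
  obtain ⟨w, hw⟩ := ht (t + 2) χ
  have attained : ∀ p : Fin (t + 1), p.succ ∈ Set.range fun f : Fin 2 ↪o C => χ (f.trans w) := by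
    intro p
    obtain ⟨F, hF⟩ := hρ (p + 1) _ (Set.subset_univ _) ((hbig (p + 1)).image w)
    obtain ⟨_, ⟨x, -, rfl⟩, _, ⟨y, -, rfl⟩, h1, h2⟩ := exists_osc_eq hF
    have ordered : ∀ x y : C, x < y → osc (ρ (w x)) (ρ (w y)) = p + 1 →
        p.succ ∈ Set.range fun f : Fin 2 ↪o C => χ (f.trans w) := by
      intro x y hxy h
      refine ⟨OrderEmbedding.ofStrictMono ![x, y] ?_, ?_⟩
      · intro i j hij
        fin_cases i <;> fin_cases j <;> simp_all
      · apply Fin.ext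
        have := p.2
        change min (osc (ρ (w x)) (ρ (w y))) (t + 1) = p + 1
        omega
    rcases lt_trichotomy x y with h | rfl | h
    · exact ordered x y h h1
    · simp [osc, blk] at h1
    · exact ordered y x h h2
  have hsub : Set.range (Fin.succ : Fin (t + 1) → Fin (t + 2)) ⊆
      Set.range fun f : Fin 2 ↪o C => χ (f.trans w) := by
    rintro _ ⟨p, rfl⟩
    exact attained p
  have hcard := Set.ncard_le_ncard hsub (Set.toFinite _)
  rw [← Set.image_univ, Set.ncard_image_of_injective _ (Fin.succ_injective _), Set.ncard_univ,
    Nat.card_eq_fintype_card, Fintype.card_fin] at hcard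
  omega
end

section
/- An infinite relational structure is monomorphic if and only if it is chainable; that is, for an infinite structure S over a relational language L: all n-element substructures of S are isomorphic for every n ∈ ℕ if and only if there exists a linear order < on the carrier A of S such that every relation of S is definable in (A,<) by a quantifier-free formula. -/
/-! Fraïssé's theorem on monomorphic structures.

If `S` is chained by a linear order, then the order isomorphism between two finite substructures of
the same size preserves quantifier-free formulas of the order, hence all relations.

Conversely, let `U` be a nonprincipal ultrafilter on `S`. Iterating the quantifier
"for `U`-almost all" assigns to every relation symbol `R` and every pattern of its arguments an
"average" truth value (`IterEventually`). The ultrafilter proof of Ramsey's theorem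
(`exists_list_of_iterEventually`) gives, for finitely many symbols and patterns, arbitrarily long
sequences in `S` all of whose subsequences realise exactly these average truth values. By
monomorphy, every finite subset `F` of `S` is isomorphic to the range of such a sequence and so
inherits an order with the same property (`exists_rank`). A limit of these orders along
an ultrafilter on the pairs (finite set `F`, finite set of patterns) is a linear order on `S` for
which the truth of `R` on a tuple depends only on the order type of the tuple
(`exists_linearOrder_invariant`). There are finitely many order types of tuples of a given length,
so `R` is defined by a finite disjunction of them (`exists_isQF_of_invariant`). -/

universe u v w x y

open FirstOrder

/-- The finite `L`-structure `A` has big Ramsey degree at most `t` in the `L`-structure `C`: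
for every finite coloring of the set `Emb(A,C)` of `L`-embeddings of `A` into `C` there is an
`L`-embedding `w : C ↪[L] C` such that the colors of the compositions `w ∘ f`,
`f ∈ Emb(A,C)`, take at most `t` values. -/
def StructBigRamseyDegLE (L : FirstOrder.Language.{u, v}) (A : Type w) (C : Type x)
    [L.Structure A] [L.Structure C] (t : ℕ) : Prop :=
  ∀ (k : ℕ) (χ : (A ↪[L] C) → Fin k), ∃ w : C ↪[L] C,
    (Set.range fun f : A ↪[L] C => χ (w.comp f)).ncard ≤ t

/-- A type with a (strict) order is a structure in the language of one binary relation symbol,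
interpreting the symbol as `<`. -/
instance ltStructure (A : Type w) [LT A] : Language.order.Structure A where
  RelMap | .le => fun x => x 0 < x 1

/-- The `L`-structure `A` is chained by the linear order `<` on `A`: every relation of `A`
is definable in `(A, <)` by a quantifier-free formula in the language of one binary
relation symbol. -/
def ChainedBy (L : FirstOrder.Language.{u, v}) (A : Type w) [L.Structure A] [LinearOrder A] : Prop :=
  ∀ (m : ℕ) (R : L.Relations m),
    ∃ φ : Language.order.Formula (Fin m),
      Language.BoundedFormula.IsQF φ ∧
      ∀ v : Fin m → A, Language.Structure.RelMap R v ↔ φ.Realize v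

namespace Monomorphic

open FirstOrder Filter

/-! ### Iterated ultrafilter quantifiers and Ramsey's theorem -/

/-- `IterEventually U k P` means: for `U`-almost all `a₁`, for `U`-almost all `a₂`, …, for
`U`-almost all `aₖ`, the list `[a₁, …, aₖ]` satisfies `P`. -/
def IterEventually {S : Type w} (U : Ultrafilter S) : ℕ → (List S → Prop) → Prop
  | 0, P => P []
  | k + 1, P => ∀ᶠ a in (U : Filter S), IterEventually U k fun l => P (a :: l)

lemma iterEventually_not {S : Type w} (U : Ultrafilter S) (k : ℕ) (P : List S → Prop) :
    IterEventually U k (fun l => ¬ P l) ↔ ¬ IterEventually U k P := by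
  induction k generalizing P with
  | zero => rfl
  | succ k ih => simp only [IterEventually, ih, Ultrafilter.eventually_not]

/-- The ultrafilter form of the finite Ramsey theorem: finitely many properties which hold
`U`-almost surely, in the iterated sense, hold simultaneously on all sublists of some list of any
prescribed length. -/
lemma exists_list_of_iterEventually {S : Type w} (U : Ultrafilter S) (n : ℕ)
    (A : Set (ℕ × (List S → Prop))) (hA : A.Finite) (h : ∀ q ∈ A, IterEventually U q.1 q.2) :
    ∃ X : List S, X.length = n ∧ ∀ q ∈ A, ∀ l, l.Sublist X → l.length = q.1 → q.2 l := by
  induction n generalizing A with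
  | zero =>
    refine ⟨[], rfl, fun q hq l hl hlen => ?_⟩
    obtain rfl := List.sublist_nil.1 hl
    have := h q hq
    rw [← hlen] at this
    exact this
  | succ n ih =>
    have hev : ∀ᶠ a in (U : Filter S), ∀ q ∈ A, ∀ k, q.1 = k + 1 →
        IterEventually U k fun l => q.2 (a :: l) := by
      rw [eventually_all_finite hA]
      rintro ⟨k, P⟩ hq
      cases k with
      | zero => simp
      | succ k =>
        have := h _ hq
        simp only [IterEventually] at this
        filter_upwards [this] with a ha k' hk'
        obtain rfl : k = k' := by simpa using hk'
        exact ha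
    obtain ⟨a, ha⟩ := hev.exists
    -- The properties of the tail: those of `A`, and those of `A` with first entry fixed to be `a`.
    obtain ⟨X, hX, hXA⟩ := ih
      (A ∪ (fun q : ℕ × (List S → Prop) => (q.1 - 1, fun l => q.2 (a :: l))) '' {q ∈ A | q.1 ≠ 0})
      (hA.union ((hA.subset (Set.sep_subset _ _)).image _)) (by
        rintro q (hq | ⟨q, ⟨hq, hq0⟩, rfl⟩)
        · exact h q hq
        · exact ha q hq _ (Nat.succ_pred_eq_of_ne_zero hq0).symm)
    refine ⟨a :: X, by simp [hX], fun q hq l hl hlen => ?_⟩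
    rcases List.sublist_cons_iff.1 hl with hl | ⟨l', rfl, hl'⟩
    · exact hXA q (Or.inl hq) l hl hlen
    · have hlen' : l'.length + 1 = q.1 := by simpa using hlen
      exact hXA _ (Or.inr ⟨q, ⟨hq, by omega⟩, rfl⟩) l' hl' (by simp; omega)

/-! ### Homogeneous finite sequences and ranks on finite subsets -/

variable {L : FirstOrder.Language.{u, v}} {S : Type w} [L.Structure S]

/-- A pattern `(R, e, k)` is a relation symbol together with a way of filling its arguments from a
list of length `k`: the `i`-th argument is the entry of index `e i`. -/
abbrev Pattern (L : FirstOrder.Language.{u, v}) : Type v :=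
  Σ m : ℕ, L.Relations m × (Fin m → ℕ) × ℕ

/-- The relation of the pattern `q` holds when its arguments are filled from the list `l`. The
value `d` serves only for indices beyond the length of `l`. -/
def Pattern.Holds (q : Pattern L) (d : S) (l : List S) : Prop :=
  FirstOrder.Language.Structure.RelMap q.2.1 fun i => l.getD (q.2.2.1 i) d

lemma exists_homogeneous_list [Infinite S] (d : S) (n : ℕ) (D : Finset (Pattern L)) :
    ∃ X : List S, X.length = n ∧ X.Nodup ∧ ∀ q ∈ D, ∀ l, l.Sublist X → l.length = q.2.2.2 →
      (q.Holds d l ↔ IterEventually (hyperfilter S) q.2.2.2 (q.Holds d)) := by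
  classical
  obtain ⟨X, hX, hXA⟩ := exists_list_of_iterEventually (hyperfilter S) n
    (insert (2, List.Nodup) ((fun q : Pattern L =>
      (q.2.2.2, fun l : List S =>
        (q.Holds d l ↔ IterEventually (hyperfilter S) q.2.2.2 (q.Holds d)))) '' (D : Set (Pattern L))))
    ((D.finite_toSet.image _).insert _) (by
      rintro q (rfl | ⟨q, hq, rfl⟩)
      · simp only [IterEventually]
        refine Eventually.of_forall fun a => ?_
        have : ∀ᶠ b in (hyperfilter S : Filter S), b ≠ a :=
          hyperfilter_le_cofinite (Set.finite_singleton a).compl_mem_cofinite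
        filter_upwards [this] with b hb
        simp [hb.symm]
      · by_cases h : IterEventually (hyperfilter S) q.2.2.2 (q.Holds d)
        · simpa [h] using h
        · simpa [h] using (iterEventually_not _ _ _).2 h)
  refine ⟨X, hX, ?_, fun q hq l hl hlen => hXA _ (Or.inr ⟨q, hq, rfl⟩) l hl hlen⟩
  rw [List.nodup_iff_sublist]
  intro a ha
  simpa using hXA _ (Or.inl rfl) _ ha rfl

/-- A finite subset of a structure over a relational language, as a substructure. -/
def finsetSubstructure [L.IsRelational] (F : Finset S) : L.Substructure S where
  carrier := F
  fun_mem f := isEmptyElim f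

lemma sublist_of_pairwise_idxOf [DecidableEq S] {X l : List S} (hl : ∀ a ∈ l, a ∈ X)
    (h : l.Pairwise fun a b => X.idxOf a < X.idxOf b) : l.Sublist X := by
  rw [List.sublist_iff_exists_fin_orderEmbedding_get_eq]
  refine ⟨OrderEmbedding.ofStrictMono
    (fun i => ⟨X.idxOf (l.get i), List.idxOf_lt_length_iff.2 (hl _ (List.get_mem _ _))⟩) ?_, ?_⟩
  · intro i j hij
    exact List.pairwise_iff_get.1 h i j hij
  · intro i
    simp

/-- Every finite subset `F` of a monomorphic structure has an order, given by a rank function,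
whose increasing lists realise the average truth values of finitely many patterns. -/
lemma exists_rank [L.IsRelational] [Infinite S] (d : S)
    (hS : ∀ (n : ℕ) (F G : L.Substructure S),
        (F : Set S).Finite → (G : Set S).Finite →
        Nat.card F = n → Nat.card G = n → Nonempty (F ≃[L] G))
    (F : Finset S) (D : Finset (Pattern L)) :
    ∃ r : S → ℕ, Set.InjOn r F ∧ ∀ q ∈ D, (∀ i, q.2.2.1 i < q.2.2.2) →
      ∀ l : List S, (∀ a ∈ l, a ∈ F) → l.Pairwise (fun a b => r a < r b) →
      l.length = q.2.2.2 →
      (q.Holds d l ↔ IterEventually (hyperfilter S) q.2.2.2 (q.Holds d)) := by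
  classical
  obtain ⟨X, hX, hnd, hXD⟩ := exists_homogeneous_list d F.card D
  obtain ⟨g⟩ := hS F.card (finsetSubstructure F) (finsetSubstructure X.toFinset)
    F.finite_toSet X.toFinset.finite_toSet (Nat.card_eq_finsetCard F)
    ((Nat.card_eq_finsetCard X.toFinset).trans ((List.toFinset_card_of_nodup hnd).trans hX))
  let g' : S → S := fun s => if h : s ∈ F then (g ⟨s, h⟩ : S) else s
  have hg' : ∀ (s : S) (h : s ∈ F), g' s = g ⟨s, h⟩ := fun s h => dif_pos h
  have hmem : ∀ s ∈ F, g' s ∈ X := fun s h => by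
    rw [hg' s h]
    exact List.mem_toFinset.1 (g ⟨s, h⟩).2
  refine ⟨fun s => X.idxOf (g' s), ?_, fun q hq he l hl hlt hlen => ?_⟩
  · intro a ha b hb hab
    have h1 : g' a = g' b := (List.idxOf_inj (hmem a ha)).1 hab
    rw [hg' a ha, hg' b hb] at h1
    exact congrArg Subtype.val (g.injective (Subtype.ext h1))
  · rw [← hXD q hq (l.map g') (sublist_of_pairwise_idxOf (by simpa using fun a ha => hmem a (hl a ha))
      (List.pairwise_map.2 hlt)) (by simpa using hlen)]
    have hlt : ∀ i, q.2.2.1 i < l.length := fun i => hlen ▸ he i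
    have := g.map_rel q.2.1 fun i => ⟨l[q.2.2.1 i]'(hlt i), hl _ (List.getElem_mem _)⟩
    refine Iff.trans ?_ (this.symm.trans ?_)
    · refine iff_of_eq (congrArg (FirstOrder.Language.Structure.RelMap q.2.1) ?_)
      funext i
      simp [hlt i]
    · change FirstOrder.Language.Structure.RelMap q.2.1
          (fun i => (g ⟨l[q.2.2.1 i]'(hlt i), hl _ (List.getElem_mem _)⟩ : S)) ↔
        FirstOrder.Language.Structure.RelMap q.2.1 fun i => (l.map g').getD (q.2.2.1 i) d
      refine iff_of_eq (congrArg (FirstOrder.Language.Structure.RelMap q.2.1) ?_)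
      funext i
      simp [hlt i, hg' _ (hl _ (List.getElem_mem (hlt i)))]

/-! ### The limit order -/

/-- The limit of the linear orders given by rank functions `r i`, along an ultrafilter for which
`r i` is eventually injective on every pair of points. -/
noncomputable abbrev limitOrder {ι : Type x} (V : Ultrafilter ι) (r : ι → S → ℕ)
    (hr : ∀ a b : S, ∀ᶠ i in (V : Filter ι), r i a = r i b → a = b) : LinearOrder S where
  le a b := ∀ᶠ i in (V : Filter ι), r i a ≤ r i b
  le_refl a := Eventually.of_forall fun i => le_rfl
  le_trans a b c hab hbc := by
    filter_upwards [hab, hbc] with i h1 h2 using h1.trans h2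
  le_antisymm a b hab hba := by
    obtain ⟨i, h1, h2, h3⟩ := (hab.and (hba.and (hr a b))).exists
    exact h3 (le_antisymm h1 h2)
  le_total a b := by
    rw [← Ultrafilter.eventually_or]
    exact Eventually.of_forall fun i => le_total _ _
  toDecidableLE := Classical.decRel _

/-- A linear order on `S` for which the truth of every relation depends only on the order type
of its argument tuple. -/
lemma exists_linearOrder_invariant [L.IsRelational] [Infinite S]
    (hS : ∀ (n : ℕ) (F G : L.Substructure S),
        (F : Set S).Finite → (G : Set S).Finite →
        Nat.card F = n → Nat.card G = n → Nonempty (F ≃[L] G)) :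
    ∃ _ : LinearOrder S, ∀ (m : ℕ) (R : L.Relations m) (a b : Fin m → S),
      (∀ i j, a i < a j ↔ b i < b j) →
      (FirstOrder.Language.Structure.RelMap R a ↔ FirstOrder.Language.Structure.RelMap R b) := by
  classical
  obtain ⟨d⟩ : Nonempty S := inferInstance
  choose r hinj hr using fun i : Finset S × Finset (Pattern L) => exists_rank d hS i.1 i.2
  let V : Ultrafilter (Finset S × Finset (Pattern L)) := Ultrafilter.of atTop
  have hV : ∀ i₀, ∀ᶠ i in (V : Filter (Finset S × Finset (Pattern L))), i₀ ≤ i := fun i₀ =>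
    Ultrafilter.of_le atTop (eventually_ge_atTop i₀)
  have hr' : ∀ a b : S, ∀ᶠ i in (V : Filter (Finset S × Finset (Pattern L))),
      r i a = r i b → a = b := fun a b => by
    filter_upwards [hV ({a, b}, ∅)] with i hi
    exact fun h => hinj i (hi.1 (by simp)) (hi.1 (by simp)) h
  let O : LinearOrder S := limitOrder V r hr'
  have lt_iff : ∀ a b : S, a < b ↔
      ∀ᶠ i in (V : Filter (Finset S × Finset (Pattern L))), r i a < r i b := fun a b => by
    rw [← not_le]
    change (¬ ∀ᶠ i in (V : Filter (Finset S × Finset (Pattern L))), r i b ≤ r i a) ↔ _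
    rw [← Ultrafilter.eventually_not]
    simp only [not_le]
  have hlim : ∀ q : Pattern L, (∀ i, q.2.2.1 i < q.2.2.2) → ∀ l : List S,
      l.Pairwise (· < ·) → l.length = q.2.2.2 →
      (q.Holds d l ↔ IterEventually (hyperfilter S) q.2.2.2 (q.Holds d)) := by
    intro q he l hl hlen
    have hpw : ∀ᶠ i in (V : Filter (Finset S × Finset (Pattern L))),
        l.Pairwise fun a b => r i a < r i b := by
      simp only [List.pairwise_iff_get, eventually_all] at hl ⊢
      exact fun i j hij => (lt_iff _ _).1 (hl i j hij)
    obtain ⟨i, h1, h2⟩ := (hpw.and (hV (l.toFinset, {q}))).exists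
    exact hr i q (h2.2 (by simp)) he l (fun a ha => h2.1 (by simpa using ha)) h1 hlen
  refine ⟨O, fun m R a b hab => ?_⟩
  have hinj' : ∀ i j, a i = a j → b i = b j := fun i j h => by
    refine le_antisymm (not_lt.1 fun hlt => ?_) (not_lt.1 fun hlt => ?_)
    · exact ((hab j i).2 hlt).ne h.symm
    · exact ((hab i j).2 hlt).ne h
  -- The increasing list of the entries of `a`, and its image under the order isomorphism `a i ↦ b i`.
  let y : List S := (Finset.univ.image a).sort (· ≤ ·)
  have hy : y.Pairwise (· < ·) := Finset.sortedLT_sort _ |>.pairwise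
  have hmem : ∀ s, s ∈ y ↔ ∃ i, a i = s := fun s => by simp [y]
  let f : S → S := fun s => if h : ∃ i, a i = s then b h.choose else d
  have hf : ∀ i, f (a i) = b i := fun i => by
    have h : ∃ j, a j = a i := ⟨i, rfl⟩
    simp only [f, dif_pos h]
    exact hinj' _ _ h.choose_spec
  have hfy : (y.map f).Pairwise (· < ·) := by
    rw [List.pairwise_map]
    refine hy.imp_of_mem fun {s t} hs ht hst => ?_
    obtain ⟨i, rfl⟩ := (hmem s).1 hs
    obtain ⟨j, rfl⟩ := (hmem t).1 ht
    rw [hf, hf]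
    exact (hab i j).1 hst
  have hidx : ∀ i, y.idxOf (a i) < y.length := fun i =>
    List.idxOf_lt_length_iff.2 ((hmem _).2 ⟨i, rfl⟩)
  let q : Pattern L := ⟨m, R, fun i => y.idxOf (a i), y.length⟩
  have key := (hlim q hidx y hy rfl).trans (hlim q hidx (y.map f) hfy (by simp [q])).symm
  have ha : (fun i => y.getD (y.idxOf (a i)) d) = a := by
    funext i
    simp [hidx i]
  have hb : (fun i => (y.map f).getD (y.idxOf (a i)) d) = b := by
    funext i
    simp [hidx i, hf]
  simpa only [Pattern.Holds, q, ha, hb] using key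

/-! ### Quantifier-free definability over a linear order -/

lemma isQF_iSup {K : FirstOrder.Language.{u, v}} {α : Type w} {β : Type x} [Finite β]
    (f : β → K.Formula α) (hf : ∀ b, Language.BoundedFormula.IsQF (f b)) :
    Language.BoundedFormula.IsQF (Language.Formula.iSup f) := by
  unfold Language.Formula.iSup Language.BoundedFormula.iSup
  extract_lets _
  generalize Finset.toList _ = l
  induction l with
  | nil => exact Language.BoundedFormula.isQF_bot
  | cons b l ih => exact (hf b).sup ih

lemma isQF_iInf {K : FirstOrder.Language.{u, v}} {α : Type w} {β : Type x} [Finite β]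
    (f : β → K.Formula α) (hf : ∀ b, Language.BoundedFormula.IsQF (f b)) :
    Language.BoundedFormula.IsQF (Language.Formula.iInf f) := by
  unfold Language.Formula.iInf Language.BoundedFormula.iInf
  extract_lets _
  generalize Finset.toList _ = l
  induction l with
  | nil => exact Language.BoundedFormula.IsQF.top
  | cons b l ih => exact (hf b).inf ih

/-- A predicate on `m`-tuples depending only on their order type is defined by the disjunction
of the complete descriptions of the order types on which it holds. -/
lemma exists_isQF_of_invariant {S : Type w} [LinearOrder S] {m : ℕ} (P : (Fin m → S) → Prop)
    (hP : ∀ a b : Fin m → S, (∀ i j, a i < a j ↔ b i < b j) → (P a ↔ P b)) :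
    ∃ φ : Language.order.Formula (Fin m), Language.BoundedFormula.IsQF φ ∧
      ∀ a : Fin m → S, P a ↔ φ.Realize a := by
  classical
  let T := {p : Fin m × Fin m → Prop // ∃ a : Fin m → S, P a ∧ ∀ ij, p ij ↔ a ij.1 < a ij.2}
  let lit : Fin m × Fin m → Language.order.Formula (Fin m) := fun ij =>
    Language.Relations.formula₂ (Language.leSymb : Language.order.Relations 2)
      (Language.Term.var ij.1) (Language.Term.var ij.2)
  have hlit : ∀ ij, Language.BoundedFormula.IsQF (lit ij) := fun ij =>
    (Language.BoundedFormula.IsAtomic.rel _ _).isQF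
  have hreal : ∀ ij (a : Fin m → S), (lit ij).Realize a ↔ a ij.1 < a ij.2 := fun ij a => by
    simp only [lit, Language.Formula.realize_rel₂, Language.Term.realize_var]
    exact Iff.rfl
  refine ⟨Language.Formula.iSup fun p : T => Language.Formula.iInf fun ij : Fin m × Fin m =>
    if p.1 ij then lit ij else (lit ij).not, ?_, fun a => ?_⟩
  · refine isQF_iSup _ fun p => isQF_iInf _ fun ij => ?_
    split_ifs
    · exact hlit ij
    · exact (hlit ij).not
  · have h : ∀ (p : T) ij, (if p.1 ij then lit ij else (lit ij).not).Realize a ↔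
        (p.1 ij ↔ a ij.1 < a ij.2) := fun p ij => by
      split_ifs with hp
      · simp [hp, hreal]
      · simp [hp, hreal, Language.Formula.realize_not]
    simp only [Language.Formula.realize_iSup, Language.Formula.realize_iInf, h]
    constructor
    · exact fun ha => ⟨⟨fun ij => a ij.1 < a ij.2, a, ha, fun _ => Iff.rfl⟩, fun _ => Iff.rfl⟩
    · rintro ⟨⟨p, b, hb, hpb⟩, hpa⟩
      exact (hP b a fun i j => (hpb (i, j)).symm.trans (hpa (i, j))).1 hb

/-! ### Chainable structures are monomorphic -/

/-- A strictly monotone map is an embedding for the language of one binary relation symbol. -/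
def ltEmbedding {A : Type w} {B : Type x} [LinearOrder A] [LinearOrder B] (f : A ↪o B) :
    A ↪[Language.order] B where
  toFun := f
  inj' := f.injective
  map_fun' g := isEmptyElim g
  map_rel' := by
    rintro n ⟨⟩ x
    exact f.lt_iff_lt

lemma monomorphic_of_chainedBy [LinearOrder S] [L.IsRelational] (h : ChainedBy L S)
    (n : ℕ) (F G : L.Substructure S) (hF : (F : Set S).Finite) (hG : (G : Set S).Finite)
    (hFn : Nat.card F = n) (hGn : Nat.card G = n) : Nonempty (F ≃[L] G) := by
  have : Fintype F := hF.fintype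
  have : Fintype G := hG.fintype
  rw [Nat.card_eq_fintype_card] at hFn hGn
  let g : F ≃o G := (Fintype.orderIsoFinOfCardEq F hFn).symm.trans
    (Fintype.orderIsoFinOfCardEq G hGn)
  refine ⟨⟨g.toEquiv, fun f => isEmptyElim f, fun {m} R x => ?_⟩⟩
  obtain ⟨φ, hφ, hR⟩ := h m R
  -- Both tuples in `S` are images of the tuple `x` in `F` under order embeddings.
  have h1 := hφ.realize_embedding (ltEmbedding (OrderEmbedding.subtype (· ∈ F))) (v := x)
    (xs := default)
  have h2 := hφ.realize_embedding
    (ltEmbedding (g.toOrderEmbedding.trans (OrderEmbedding.subtype (· ∈ G)))) (v := x)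
    (xs := default)
  have h3 := (hR fun i => (x i : S))
  have h4 := (hR fun i => (g (x i) : S))
  refine h4.trans (Iff.trans ?_ h3.symm)
  unfold Language.Formula.Realize
  convert h2.trans h1.symm using 2 <;> rfl

end Monomorphic

/-- An infinite structure over a relational language is monomorphic (for each `n`, any two
`n`-element substructures are isomorphic) if and only if it is chainable (there is a linear
order `<` on its carrier such that every relation is definable in `(A, <)` by a
quantifier-free formula). -/
theorem monomorphic_iff_chainable
    (L : FirstOrder.Language.{u, v}) [L.IsRelational]
    (S : Type w) [L.Structure S] [Infinite S] :
    (∀ (n : ℕ) (F G : L.Substructure S),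
        (F : Set S).Finite → (G : Set S).Finite →
        Nat.card F = n → Nat.card G = n → Nonempty (F ≃[L] G)) ↔
      ∃ instO : LinearOrder S, @ChainedBy L S _ instO := by
  constructor
  · intro hS
    obtain ⟨O, hO⟩ := Monomorphic.exists_linearOrder_invariant hS
    exact ⟨O, fun m R => Monomorphic.exists_isQF_of_invariant _ (hO m R)⟩
  · rintro ⟨O, hO⟩
    exact Monomorphic.monomorphic_of_chainedBy hO
end

section
/- Let L be a finite relational language, M a relational language, and Φ = {φ_j : j ∈ J} a set of quantifier-free L-formulas (one for each relation symbol of M, of matching arity). Let K* be a hereditary class of at most countably infinite L-structures and let K be the class of all M-structures defined by Φ in members of K* (i.e., structures with the same carrier, whose relations are the sets defined by the formulas φ_j). Let S* ∈ K* be universal for K* and let S be the M-structure defined in S* by Φ. Then: (i) S is universal for K; and (ii) if every finite substructure of S* has finite big Ramsey degree in S*, then every finite substructure of S has finite big Ramsey degree in S. -/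
/-!
Quantifier-free formulas are preserved and reflected by embeddings, so an `L`-embedding is also
an embedding of the `M`-structures defined by `Φ` (`definedEmbedding`); this gives universality.

For big Ramsey degrees, let `A` be a finite substructure of `S`.  Every `M`-embedding `A → S` pulls
back an `L`-structure on `A` from `S*`, and since `L` and `A` are finite, only finitely many
`L`-structures arise.  This splits `Emb(A, S)` into finitely many classes, each of which is a copy
of `Emb(A*, S*)` for a finite substructure `A*` of `S*` (`exists_bound_of_pullback`).  The classes
are preserved by composition with `L`-embeddings `S* → S*`, so the colors can be reduced on one
class after the other, and the sum of the big Ramsey degrees of the structures `A*` bounds the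
big Ramsey degree of `A` (`exists_bound_of_classes`).
-/

universe u v w x y

open FirstOrder

/-- The `M`-structure defined in an `L`-structure `A` by a family `Φ` of quantifier-free
`L`-formulas indexed by the relation symbols of the relational language `M`: it has the same
carrier `A`, and its relations are the sets defined in `A` by the formulas of `Φ`. -/
def definedStructure (L : FirstOrder.Language.{u, v}) (M : FirstOrder.Language.{x, y})
    [M.IsRelational] (Φ : ∀ {m : ℕ}, M.Relations m → L.Formula (Fin m))
    (A : Type w) [L.Structure A] : M.Structure A where
  funMap := fun f => isEmptyElim f
  RelMap := fun {m} R v => (Φ R).Realize v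

/-- The induced structure on a subset of the carrier of a structure over a relational
language.  For relational languages, the (finite) substructures are exactly the (finite)
subsets of the carrier with the induced structure. -/
def setStructure (L : FirstOrder.Language.{u, v}) [L.IsRelational] {A : Type w}
    [L.Structure A] (s : Set A) : L.Structure s where
  funMap := fun f => isEmptyElim f
  RelMap := fun {m} R v => Language.Structure.RelMap R fun i => (v i : A)

/-- Amalgamation of bounds over finitely many classes.  Maps `w : W`, closed under composition,
act on `E` and preserve the class `τ e` of every `e : E`.  If for each class separately every
finite coloring can be reduced to boundedly many colors by some `w`, then the same holds for
all of `E`: treat the classes one after the other, composing the maps. -/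
lemma exists_bound_of_classes {E W T : Type*} [Finite T] (τ : E → T) (act : W → E → E)
    (hone : ∃ w, ∀ e, act w e = e)
    (hmul : ∀ w w', ∃ w'', ∀ e, act w'' e = act w (act w' e))
    (hτ : ∀ w e, τ (act w e) = τ e)
    (h : ∀ σ : T, ∃ t : ℕ, ∀ (k : ℕ) (χ : E → Fin k), ∃ w,
      ((fun e => χ (act w e)) '' {e | τ e = σ}).ncard ≤ t) :
    ∃ t : ℕ, ∀ (k : ℕ) (χ : E → Fin k), ∃ w, (Set.range fun e => χ (act w e)).ncard ≤ t := by
  suffices H : ∀ F : Set T, F.Finite → ∃ t : ℕ, ∀ (k : ℕ) (χ : E → Fin k), ∃ w,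
      ((fun e => χ (act w e)) '' {e | τ e ∈ F}).ncard ≤ t by
    obtain ⟨t, ht⟩ := H Set.univ Set.finite_univ
    exact ⟨t, by simpa using ht⟩
  intro F hF
  induction F, hF using Set.Finite.induction_on with
  | empty =>
    obtain ⟨w, -⟩ := hone
    exact ⟨0, fun k χ => ⟨w, by simp⟩⟩
  | @insert σ F _ _ ih =>
    obtain ⟨t₁, h₁⟩ := ih
    obtain ⟨t₂, h₂⟩ := h σ
    refine ⟨t₂ + t₁, fun k χ => ?_⟩
    obtain ⟨w₁, hw₁⟩ := h₁ k χ
    obtain ⟨w₂, hw₂⟩ := h₂ k (fun e => χ (act w₁ e))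
    obtain ⟨w, hw⟩ := hmul w₁ w₂
    refine ⟨w, ?_⟩
    have hsub : (fun e => χ (act w e)) '' {e | τ e ∈ insert σ F} ⊆
        ((fun e => χ (act w₁ (act w₂ e))) '' {e | τ e = σ}) ∪
          ((fun e => χ (act w₁ e)) '' {e | τ e ∈ F}) := by
      rintro _ ⟨e, he | he, rfl⟩
      · exact Or.inl ⟨e, he, by simp only [hw]⟩
      · -- `act w₂` stays inside the classes of `F`, so it adds no color to those left by `w₁`
        exact Or.inr ⟨act w₂ e, by simpa only [Set.mem_setOf_eq, hτ] using he, by simp only [hw]⟩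
    calc _ ≤ _ := Set.ncard_le_ncard hsub (Set.toFinite _)
      _ ≤ _ := Set.ncard_union_le _ _
      _ ≤ _ := Nat.add_le_add hw₂ hw₁

section Defined

variable {L : FirstOrder.Language.{u, v}} {M : FirstOrder.Language.{x, y}} [M.IsRelational]
  {Φ : ∀ {m : ℕ}, M.Relations m → L.Formula (Fin m)}

lemma realize_comp_embedding
    (hΦ : ∀ (m : ℕ) (R : M.Relations m), Language.BoundedFormula.IsQF (Φ R))
    {A C : Type*} [L.Structure A] [L.Structure C] (w : A ↪[L] C) {m : ℕ} (R : M.Relations m)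
    (a : Fin m → A) : (Φ R).Realize (w ∘ a) ↔ (Φ R).Realize a := by
  have := (hΦ m R).realize_embedding w (v := a) (xs := default)
  rwa [Subsingleton.elim (w ∘ (default : Fin 0 → A)) default] at this

/-- The `M`-embeddings of `A` into the `M`-structure defined by `Φ` in the `L`-structure `C`. -/
abbrev DefEmb (Φ : ∀ {m : ℕ}, M.Relations m → L.Formula (Fin m))
    (A C : Type*) [iA : M.Structure A] [L.Structure C] :=
  @FirstOrder.Language.Embedding M A C iA (definedStructure L M Φ C)

/-- An `L`-embedding, viewed as an embedding of the `M`-structures defined by the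
quantifier-free formulas `Φ`. -/
def definedEmbedding (hΦ : ∀ (m : ℕ) (R : M.Relations m), Language.BoundedFormula.IsQF (Φ R))
    {A C : Type*} [L.Structure A] [L.Structure C] (w : A ↪[L] C) :
    @FirstOrder.Language.Embedding M A C (definedStructure L M Φ A) (definedStructure L M Φ C) :=
  letI := definedStructure L M Φ A
  letI := definedStructure L M Φ C
  { toEmbedding := w.toEmbedding
    map_fun' := fun f => isEmptyElim f
    map_rel' := fun R a => realize_comp_embedding hΦ w R a }

/-- Composition of an `M`-embedding into the defined structure with an `L`-embedding. -/
def actEmb (hΦ : ∀ (m : ℕ) (R : M.Relations m), Language.BoundedFormula.IsQF (Φ R))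
    {A C D : Type*} [iA : M.Structure A] [L.Structure C] [L.Structure D] (w : C ↪[L] D)
    (e : DefEmb Φ A C) : DefEmb Φ A D :=
  letI := definedStructure L M Φ C
  letI := definedStructure L M Φ D
  (definedEmbedding hΦ w).comp e

/-- The underlying function of an `M`-embedding into a defined structure. -/
def DefEmb.fn {A C : Type*} [iA : M.Structure A] [L.Structure C] (e : DefEmb Φ A C) : A → C :=
  e.toFun

lemma DefEmb.fn_ext {A C : Type*} [iA : M.Structure A] [L.Structure C] {e e' : DefEmb Φ A C}
    (h : ∀ a, e.fn a = e'.fn a) : e = e' := by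
  letI := definedStructure L M Φ C
  exact Language.Embedding.ext h

lemma fn_actEmb (hΦ : ∀ (m : ℕ) (R : M.Relations m), Language.BoundedFormula.IsQF (Φ R))
    {A C D : Type*} [iA : M.Structure A] [L.Structure C] [L.Structure D] (w : C ↪[L] D)
    (e : DefEmb Φ A C) (a : A) : (actEmb hΦ w e).fn a = w (e.fn a) := rfl

/-- The relational `L`-structure on `A` pulled back along `e`, as the family of its relations.
For finite `L` and `A` there are only finitely many such families. -/
def pullback {A C : Type*} [iA : M.Structure A] [L.Structure C] (e : DefEmb Φ A C) :
    (p : Σ m : ℕ, L.Relations m) → (Fin p.1 → A) → Prop :=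
  fun p a => Language.Structure.RelMap p.2 (e.fn ∘ a)

lemma pullback_actEmb
    (hΦ : ∀ (m : ℕ) (R : M.Relations m), Language.BoundedFormula.IsQF (Φ R))
    {A C D : Type*} [iA : M.Structure A] [L.Structure C] [L.Structure D] (w : C ↪[L] D)
    (e : DefEmb Φ A C) : pullback (actEmb hΦ w e) = pullback e := by
  funext p a
  exact propext (w.map_rel p.2 (e.fn ∘ a))

/-- The embeddings which pull back the same `L`-structure `σ` on `A` are, after fixing one of
them, `e₀`, exactly the maps `g ∘ e₀` for `g` an `L`-embedding of the finite set `range e₀`.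
So the big Ramsey degree of `range e₀` bounds the number of colors on this class. -/
lemma exists_bound_of_pullback [L.IsRelational]
    (hΦ : ∀ (m : ℕ) (R : M.Relations m), Language.BoundedFormula.IsQF (Φ R))
    {A C : Type*} [Finite A] [iA : M.Structure A] [L.Structure C]
    (hC : ∀ s : Set C, s.Finite →
        ∃ t : ℕ, @StructBigRamseyDegLE L s C (setStructure L s) _ t)
    (σ : (p : Σ m : ℕ, L.Relations m) → (Fin p.1 → A) → Prop) :
    ∃ t : ℕ, ∀ (k : ℕ) (χ : DefEmb Φ A C → Fin k), ∃ w : C ↪[L] C,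
      ((fun e => χ (actEmb hΦ w e)) '' {e | pullback e = σ}).ncard ≤ t := by
  by_cases hne : ∃ e₀ : DefEmb Φ A C, pullback e₀ = σ
  swap
  · push Not at hne
    refine ⟨0, fun k χ => ⟨Language.Embedding.refl L C, ?_⟩⟩
    simp [hne]
  obtain ⟨e₀, he₀⟩ := hne
  have hinj : Function.Injective e₀.fn := e₀.inj'
  letI iR : L.Structure (Set.range e₀.fn) := setStructure L (Set.range e₀.fn)
  letI iC : M.Structure C := definedStructure L M Φ C
  obtain ⟨t, ht⟩ := hC (Set.range e₀.fn) (Set.finite_range _)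
  refine ⟨t, fun k χ => ?_⟩
  let incl : Set.range e₀.fn ↪[L] C :=
    { toFun := Subtype.val
      inj' := Subtype.val_injective
      map_fun' := fun f => isEmptyElim f
      map_rel' := fun R a => Iff.rfl }
  let e₁ : DefEmb Φ A (Set.range e₀.fn) :=
    letI := definedStructure L M Φ (Set.range e₀.fn)
    { toFun := fun a => ⟨e₀.fn a, a, rfl⟩
      inj' := fun a b hab => hinj (congrArg Subtype.val hab)
      map_fun' := fun f => isEmptyElim f
      map_rel' := fun R a =>
        (realize_comp_embedding hΦ incl R _).symm.trans (e₀.map_rel' R a) }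
  obtain ⟨w, hw⟩ := ht k (fun g => χ (actEmb hΦ g e₁))
  refine ⟨w, le_trans (Set.ncard_le_ncard ?_ (Set.toFinite _)) hw⟩
  rintro _ ⟨e, he, rfl⟩
  have hpull : ∀ (m : ℕ) (R : L.Relations m) (a : Fin m → A),
      Language.Structure.RelMap R (e.fn ∘ a) ↔ Language.Structure.RelMap R (e₀.fn ∘ a) := by
    intro m R a
    have h : pullback e = pullback e₀ := Eq.trans he he₀.symm
    exact iff_of_eq (congrFun (congrFun h ⟨m, R⟩) a)
  let inv := (Equiv.ofInjective e₀.fn hinj).symm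
  have hinv : ∀ z : Set.range e₀.fn, e₀.fn (inv z) = z := fun z =>
    Equiv.apply_ofInjective_symm hinj z
  let g : Set.range e₀.fn ↪[L] C :=
    { toFun := fun z => e.fn (inv z)
      inj' := fun z z' h => inv.injective (e.inj' h)
      map_fun' := fun f => isEmptyElim f
      map_rel' := fun {m} R a => by
        refine (hpull m R (fun i => inv (a i))).trans ?_
        have : (e₀.fn ∘ fun i => inv (a i)) = fun i => (a i : C) := funext fun i => hinv (a i)
        rw [this]
        exact Iff.rfl }
  refine ⟨g, ?_⟩
  refine congrArg χ (DefEmb.fn_ext fun a => ?_)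
  change w (e.fn (inv (e₁.fn a))) = w (e.fn a)
  congr 2
  exact Equiv.ofInjective_symm_apply hinj a

end Defined

/-- Let `L` be a finite relational language, `M` a relational language and `Φ` a family of
quantifier-free `L`-formulas indexed by the relation symbols of `M`.  Let `K*` be a
hereditary class of at most countably infinite `L`-structures, let `K` be the class of all
`M`-structures defined by `Φ` in members of `K*`, let `S* ∈ K*` be universal for `K*` and
let `S` be the `M`-structure defined in `S*` by `Φ`.  Then (i) `S` is universal for `K`,
and (ii) if every finite substructure of `S*` has finite big Ramsey degree in `S*`, then
every finite substructure of `S` has finite big Ramsey degree in `S`. -/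
theorem universal_transfer_and_bigRamsey_transfer
    (L : FirstOrder.Language.{u, v}) (M : FirstOrder.Language.{x, y})
    [L.IsRelational] [Finite (Σ m : ℕ, L.Relations m)] [M.IsRelational]
    (Φ : ∀ {m : ℕ}, M.Relations m → L.Formula (Fin m))
    (hΦ : ∀ (m : ℕ) (R : M.Relations m), Language.BoundedFormula.IsQF (Φ R))
    (Kstar : ∀ A : Type w, L.Structure A → Prop)
    (hcnt : ∀ (A : Type w) (iA : L.Structure A), Kstar A iA → Countable A)
    (hhered : ∀ (A : Type w) (iA : L.Structure A) (B : Type w) (iB : L.Structure B),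
      Kstar A iA → Nonempty (@FirstOrder.Language.Embedding L B A iB iA) → Kstar B iB)
    (Sstar : Type w) [iS : L.Structure Sstar]
    (hmem : Kstar Sstar iS)
    (huniv : ∀ (A : Type w) (iA : L.Structure A), Kstar A iA →
      Nonempty (@FirstOrder.Language.Embedding L A Sstar iA iS)) :
    -- (i) `S` is universal for `K`
    (∀ (B : Type w) (iB : M.Structure B),
        (∃ iA : L.Structure B, Kstar B iA ∧ iB = @definedStructure L M _ Φ B iA) →
        Nonempty (@FirstOrder.Language.Embedding M B Sstar iB
          (definedStructure L M Φ Sstar))) ∧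
    -- (ii) transfer of finite big Ramsey degrees from `S*` to `S`
    ((∀ s : Set Sstar, s.Finite →
        ∃ t : ℕ, @StructBigRamseyDegLE L s Sstar (setStructure L s) _ t) →
      ∀ s : Set Sstar, s.Finite →
        ∃ t : ℕ, @StructBigRamseyDegLE M s Sstar
          (@setStructure M _ Sstar (definedStructure L M Φ Sstar) s)
          (definedStructure L M Φ Sstar) t) := by
  refine ⟨?_, ?_⟩
  · rintro B _ ⟨iA, hB, rfl⟩
    obtain ⟨f⟩ := huniv B iA hB
    exact ⟨definedEmbedding hΦ f⟩
  · intro hS s hs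
    haveI : Finite s := hs
    letI iM : M.Structure Sstar := definedStructure L M Φ Sstar
    letI iA : M.Structure s := setStructure M s
    obtain ⟨t, ht⟩ := exists_bound_of_classes
      (pullback : DefEmb Φ s Sstar → _) (actEmb hΦ : (Sstar ↪[L] Sstar) → _)
      ⟨Language.Embedding.refl L Sstar, fun e => DefEmb.fn_ext fun a => rfl⟩
      (fun w w' => ⟨w.comp w', fun e => DefEmb.fn_ext fun a => rfl⟩)
      (fun w e => pullback_actEmb hΦ w e)
      (exists_bound_of_pullback hΦ hS)
    refine ⟨t, fun k χ => ?_⟩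
    obtain ⟨w, hw⟩ := ht k χ
    exact ⟨definedEmbedding hΦ w, hw⟩
end
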